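/- arXiv:1809.03089 — 3 statements merged into one kernel-verified Lean document; each statement's English description precedes it below -/
import Mathlib

section
/- Fix an integer ℓ ≥ 2 and a parameter ρ > 0. There exist constants N = N(ℓ,ρ) and C = C(ℓ,ρ) such that the following holds. Let κ_1,…,κ_ℓ be positive integers with κ_i ≥ ρn for all i, summing to n ≥ N. If f : M_κ → ℝ is a degree-one function satisfying E[dist(f,{0,1})²] = ε, then there exists a Boolean function g : M_κ → {0,1} depending on at most one coordinate such that E[(f−g)²] ≤ ε + Cε². -/
open Finset

noncomputable section

/-- The multislice: vectors in `[ℓ]^n` whose colour counts are given by `κ`. -/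
def multislice (ℓ n : ℕ) (κ : Fin ℓ → ℕ) : Finset (Fin n → Fin ℓ) :=
  Finset.univ.filter fun u => ∀ i, (Finset.univ.filter fun j => u j = i).card = κ i

/-- Expectation with respect to the uniform measure on the multislice. -/
def msExp (ℓ n : ℕ) (κ : Fin ℓ → ℕ) (f : (Fin n → Fin ℓ) → ℝ) : ℝ :=
  (∑ u ∈ multislice ℓ n κ, f u) / ((multislice ℓ n κ).card : ℝ)

/-- The indicator variable `x_{ji}`. -/
def xvar (ℓ n : ℕ) (j : Fin n) (i : Fin ℓ) (u : Fin n → Fin ℓ) : ℝ :=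
  if u j = i then 1 else 0

/-- A function on the multislice has degree one if it is of the form
`c + ∑_j ∑_i c_{ji} x_{ji}`. -/
def degreeOne (ℓ n : ℕ) (κ : Fin ℓ → ℕ) (f : (Fin n → Fin ℓ) → ℝ) : Prop :=
  ∃ (c : ℝ) (coef : Fin n → Fin ℓ → ℝ), ∀ u ∈ multislice ℓ n κ,
    f u = c + ∑ j, ∑ i, coef j i * xvar ℓ n j i u

/-- Distance of a real number to the set `{0,1}`. -/
def dist01 (x : ℝ) : ℝ := min |x| |x - 1|

/-- A function is Boolean on the multislice if it takes values in `{0,1}` there. -/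
def booleanOn (ℓ n : ℕ) (κ : Fin ℓ → ℕ) (g : (Fin n → Fin ℓ) → ℝ) : Prop :=
  ∀ u ∈ multislice ℓ n κ, g u = 0 ∨ g u = 1

/-- A dictator: a function depending on at most one coordinate. -/
def dictator (ℓ n : ℕ) (κ : Fin ℓ → ℕ) (g : (Fin n → Fin ℓ) → ℝ) : Prop :=
  ∃ j : Fin n, ∀ u ∈ multislice ℓ n κ, ∀ v ∈ multislice ℓ n κ, u j = v j → g u = g v


namespace FKN

variable {ℓ n : ℕ}

/-- the (doubled) swap difference -/
def D (coef : Fin n → Fin ℓ → ℝ) (k m : Fin n) (a b : Fin ℓ) : ℝ :=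
  coef k a + coef m b - coef k b - coef m a

def F (c : ℝ) (coef : Fin n → Fin ℓ → ℝ) (u : Fin n → Fin ℓ) : ℝ := c + ∑ j, coef j (u j)

def sw (k m : Fin n) (u : Fin n → Fin ℓ) : Fin n → Fin ℓ := fun x => u (Equiv.swap k m x)

lemma sw_sw (k m : Fin n) (u : Fin n → Fin ℓ) : sw k m (sw k m u) = u := by
  funext x; simp [sw]

lemma sw_left (k m : Fin n) (u : Fin n → Fin ℓ) : sw k m u k = u m := by simp [sw]
lemma sw_right (k m : Fin n) (u : Fin n → Fin ℓ) : sw k m u m = u k := by simp [sw]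
lemma sw_other (k m x : Fin n) (u : Fin n → Fin ℓ) (h1 : x ≠ k) (h2 : x ≠ m) :
    sw k m u x = u x := by simp [sw, Equiv.swap_apply_of_ne_of_ne h1 h2]

lemma sw_mem (κ : Fin ℓ → ℕ) (k m : Fin n) (u : Fin n → Fin ℓ) (hu : u ∈ multislice ℓ n κ) :
    sw k m u ∈ multislice ℓ n κ := by
  simp only [multislice, mem_filter, mem_univ, true_and] at hu ⊢
  intro i
  rw [← hu i]
  apply Finset.card_bij (fun x _ => Equiv.swap k m x)
  · intro x hx
    have := (mem_filter.mp hx).2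
    exact mem_filter.mpr ⟨mem_univ _, this⟩
  · intro x _ y _ h; simpa using h
  · intro y hy
    refine ⟨Equiv.swap k m y, mem_filter.mpr ⟨mem_univ _, ?_⟩, by simp⟩
    have := (mem_filter.mp hy).2
    simpa [sw] using this

lemma sum_sw (κ : Fin ℓ → ℕ) (k m : Fin n) (G : (Fin n → Fin ℓ) → ℝ) :
    ∑ u ∈ multislice ℓ n κ, G (sw k m u) = ∑ u ∈ multislice ℓ n κ, G u :=
  Finset.sum_nbij' (sw k m) (sw k m) (fun u hu => sw_mem κ k m u hu)
    (fun u hu => sw_mem κ k m u hu) (fun u _ => sw_sw k m u) (fun u _ => sw_sw k m u)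
    (fun _ _ => rfl)

lemma F_sw (c : ℝ) (coef : Fin n → Fin ℓ → ℝ) (k m : Fin n) (u : Fin n → Fin ℓ) :
    F c coef (sw k m u) = F c coef u - D coef k m (u k) (u m) := by
  by_cases hkm : k = m
  · subst hkm; simp [sw, D, F]
  have h : ∑ j, (coef j (u j) - coef j (sw k m u j)) = D coef k m (u k) (u m) := by
    rw [← Finset.sum_subset (Finset.subset_univ {k, m})]
    · rw [Finset.sum_pair hkm, sw_left, sw_right]; simp [D]; ring
    · intro x _ hx
      simp only [mem_insert, mem_singleton, not_or] at hx
      rw [sw_other k m x u hx.1 hx.2]; ring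
  rw [Finset.sum_sub_distrib] at h
  simp only [F]; linarith

lemma D_antisymm (coef : Fin n → Fin ℓ → ℝ) (k m : Fin n) (a b : Fin ℓ) :
    D coef k m b a = - D coef k m a b := by simp [D]; ring

lemma D_sw (coef : Fin n → Fin ℓ → ℝ) (k m : Fin n) (u : Fin n → Fin ℓ) :
    D coef k m (sw k m u k) (sw k m u m) = - D coef k m (u k) (u m) := by
  rw [sw_left, sw_right, D_antisymm]

/-- conditional mean -/
def M (κ : Fin ℓ → ℕ) (c : ℝ) (coef : Fin n → Fin ℓ → ℝ) (j : Fin n) (a : Fin ℓ) : ℝ :=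
  c + coef j a + (∑ k ∈ univ.erase j, (∑ b, (κ b : ℝ) * coef k b - coef k a)) / ((n : ℝ) - 1)

lemma sum_color (κ : Fin ℓ → ℕ) (u : Fin n → Fin ℓ) (hu : u ∈ multislice ℓ n κ)
    (w : Fin ℓ → ℝ) : ∑ m, w (u m) = ∑ b, (κ b : ℝ) * w b := by
  simp only [multislice, mem_filter, mem_univ, true_and] at hu
  rw [← Finset.sum_fiberwise (s := univ) (g := u)]
  apply Finset.sum_congr rfl
  intro b _
  rw [← hu b, Finset.sum_congr rfl (g := fun _ => w b)]
  · simp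
  · intro x hx; simp at hx; rw [hx]

lemma eigen (hn : 2 ≤ n) (κ : Fin ℓ → ℕ) (c : ℝ) (coef : Fin n → Fin ℓ → ℝ) (j : Fin n)
    (u : Fin n → Fin ℓ) (hu : u ∈ multislice ℓ n κ) :
    ∑ k ∈ univ.erase j, ∑ m ∈ univ.erase j, D coef k m (u k) (u m)
      = 2 * ((n : ℝ) - 1) * (F c coef u - M κ c coef j (u j)) := by
  have hn1 : (n : ℝ) - 1 ≠ 0 := by
    have : (2 : ℝ) ≤ n := by exact_mod_cast hn
    linarith
  have hcard : ((univ.erase j : Finset (Fin n)).card : ℝ) = (n : ℝ) - 1 := by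
    rw [Finset.card_erase_of_mem (mem_univ j), Finset.card_univ, Fintype.card_fin, Nat.cast_sub (by omega)]
    simp
  have h1 : ∀ k, ∑ m ∈ univ.erase j, coef k (u m) = ∑ b, (κ b : ℝ) * coef k b - coef k (u j) := by
    intro k
    rw [← sum_color κ u hu (coef k), ← Finset.add_sum_erase univ _ (mem_univ j)]; ring
  have h2 : F c coef u = c + coef j (u j) + ∑ k ∈ univ.erase j, coef k (u k) := by
    rw [F, ← Finset.add_sum_erase univ _ (mem_univ j)]; ring
  have h3 : ∑ k ∈ univ.erase j, ∑ m ∈ univ.erase j, D coef k m (u k) (u m)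
      = 2 * ((n : ℝ) - 1) * ∑ k ∈ univ.erase j, coef k (u k)
        - 2 * ∑ k ∈ univ.erase j, ∑ m ∈ univ.erase j, coef k (u m) := by
    simp only [D, Finset.sum_sub_distrib, Finset.sum_add_distrib, Finset.sum_const, nsmul_eq_mul,
      hcard, ← Finset.mul_sum]
    rw [Finset.sum_comm (f := fun k m => coef m (u k))]
    ring
  rw [h3, h2, M, Finset.sum_congr rfl (fun k _ => h1 k)]
  field_simp
  ring

lemma ident (hn : 2 ≤ n) (κ : Fin ℓ → ℕ) (c : ℝ) (coef : Fin n → Fin ℓ → ℝ) (j : Fin n)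
    (ψ : (Fin n → Fin ℓ) → ℝ) :
    4 * ((n : ℝ) - 1) * ∑ u ∈ multislice ℓ n κ, (F c coef u - M κ c coef j (u j)) * ψ u
      = ∑ k ∈ univ.erase j, ∑ m ∈ univ.erase j, ∑ u ∈ multislice ℓ n κ,
          D coef k m (u k) (u m) * (ψ u - ψ (sw k m u)) := by
  have h1 : ∀ k m, ∑ u ∈ multislice ℓ n κ, D coef k m (u k) (u m) * (ψ u - ψ (sw k m u))
      = ∑ u ∈ multislice ℓ n κ, 2 * D coef k m (u k) (u m) * ψ u := by
    intro k m
    have := sum_sw κ k m (fun u => D coef k m (u k) (u m) * ψ (sw k m u))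
    simp only [sw_sw, D_sw] at this
    simp only [mul_sub, Finset.sum_sub_distrib]
    rw [← this]
    rw [← Finset.sum_sub_distrib]
    apply Finset.sum_congr rfl
    intro u _; ring
  simp only [h1]
  rw [Finset.sum_congr rfl (fun k _ => Finset.sum_comm), Finset.sum_comm, Finset.mul_sum]
  apply Finset.sum_congr rfl
  intro u hu
  have := eigen hn κ c coef j u hu
  simp only [← Finset.sum_mul, ← Finset.mul_sum]
  rw [this]; ring

/-- pattern probability -/
lemma pattern (κ : Fin ℓ → ℕ) (ρ : ℝ) (hρ : 0 < ρ) (hn : 6 ≤ ρ * n)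
    (hκ : ∀ i, ρ * n ≤ (κ i : ℝ)) (w : Fin n → Fin ℓ) (T : Finset (Fin n)) (hT : T.card ≤ 4) :
    (ρ / 2) ^ T.card * ((multislice ℓ n κ).card : ℝ)
      ≤ (((multislice ℓ n κ).filter (fun u => ∀ k ∈ T, u k = w k)).card : ℝ) := by
  induction T using Finset.induction_on with
  | empty => simp
  | insert k T hk ih =>
    rw [Finset.card_insert_of_notMem hk] at hT ⊢
    have ih := ih (by omega)
    set A := (multislice ℓ n κ).filter (fun u => ∀ k ∈ T, u k = w k) with hA
    set B := (multislice ℓ n κ).filter (fun u => ∀ x ∈ insert k T, u x = w x) with hB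
    have hnpos : (0 : ℝ) < n := by
      by_contra h
      have : (n : ℝ) ≤ 0 := by linarith
      nlinarith
    have key : ((A.card : ℝ)) * (ρ / 2 * n) ≤ B.card * n := by
      -- count pairs
      let P : Finset ((Fin n → Fin ℓ) × Fin n) :=
        (A ×ˢ univ).filter (fun p => p.2 ∉ T ∧ p.1 p.2 = w k)
      have hP1 : (P.card : ℝ) ≤ B.card * n := by
        have : P.card ≤ (B ×ˢ (univ : Finset (Fin n))).card := by
          apply Finset.card_le_card_of_injOn (fun p => (sw k p.2 p.1, p.2))
          · rintro ⟨u, m⟩ hp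
            simp only [P, A, coe_filter, mem_product, mem_filter, mem_univ, and_true,
              Set.mem_ofPred_eq] at hp
            obtain ⟨⟨hu, hu2⟩, hm, hum⟩ := hp
            simp only [B, coe_product, Set.mem_prod, mem_coe, mem_filter, mem_univ, and_true]
            refine ⟨sw_mem κ k m u hu, ?_⟩
            intro x hx
            rw [mem_insert] at hx
            rcases hx with rfl | hx
            · rw [sw_left, hum]
            · rw [sw_other, hu2 x hx]
              · rintro rfl; exact hk hx
              · rintro rfl; exact hm hx
          · rintro ⟨u, m⟩ _ ⟨u', m'⟩ _ h
            simp only [Prod.mk.injEq] at h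
            obtain ⟨h1, rfl⟩ := h
            have := congrArg (sw k m) h1
            rw [sw_sw, sw_sw] at this
            rw [this]
        rw [Finset.card_product, Finset.card_univ, Fintype.card_fin] at this
        exact_mod_cast this
      have hP2 : (A.card : ℝ) * (ρ / 2 * n) ≤ P.card := by
        have : P.card = ∑ u ∈ A, (univ.filter (fun m => m ∉ T ∧ u m = w k)).card := by
          simp only [P, Finset.card_filter, Finset.sum_product]
        rw [this, Nat.cast_sum, ← nsmul_eq_mul]
        apply Finset.card_nsmul_le_sum
        intro u hu
        have hu' : u ∈ multislice ℓ n κ := (mem_filter.mp hu).1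
        simp only [multislice, mem_filter, mem_univ, true_and] at hu'
        have h1 := hu' (w k)
        have h2 : (univ.filter (fun m => u m = w k)) ⊆
            (univ.filter (fun m => m ∉ T ∧ u m = w k)) ∪ T := by
          intro x hx
          simp only [mem_filter, mem_univ, true_and, mem_union] at hx ⊢
          tauto
        have h3 := (Finset.card_le_card h2).trans (Finset.card_union_le _ _)
        rw [h1] at h3
        have h4 : (κ (w k) : ℝ) ≤ ((univ.filter (fun m => m ∉ T ∧ u m = w k)).card : ℝ) + 3 := by
          have : κ (w k) ≤ (univ.filter (fun m => m ∉ T ∧ u m = w k)).card + 3 := by omega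
          exact_mod_cast this
        have := hκ (w k)
        nlinarith
      exact hP2.trans hP1
    have : (A.card : ℝ) * (ρ / 2) ≤ B.card := by
      rw [← mul_assoc] at key
      exact le_of_mul_le_mul_right key hnpos
    calc (ρ / 2) ^ (T.card + 1) * ((multislice ℓ n κ).card : ℝ)
        = ((ρ / 2) ^ T.card * ((multislice ℓ n κ).card : ℝ)) * (ρ / 2) := by ring
      _ ≤ A.card * (ρ / 2) := by gcongr
      _ ≤ B.card := this

/-- pattern-averaging: a nonnegative function that depends only on a pattern -/
lemma pattern_sum (κ : Fin ℓ → ℕ) (ρ : ℝ) (hρ : 0 < ρ) (hn : 6 ≤ ρ * n)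
    (hκ : ∀ i, ρ * n ≤ (κ i : ℝ)) (w : Fin n → Fin ℓ) (T : Finset (Fin n)) (hT : T.card ≤ 4)
    (G : (Fin n → Fin ℓ) → ℝ) (hG : ∀ u, 0 ≤ G u) (t : ℝ) (ht : 0 ≤ t)
    (h : ∀ u ∈ multislice ℓ n κ, (∀ k ∈ T, u k = w k) → t ≤ G u) :
    (ρ / 2) ^ T.card * ((multislice ℓ n κ).card : ℝ) * t ≤ ∑ u ∈ multislice ℓ n κ, G u := by
  have h1 := pattern κ ρ hρ hn hκ w T hT
  calc _ ≤ (((multislice ℓ n κ).filter (fun u => ∀ k ∈ T, u k = w k)).card : ℝ) * t := by gcongr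
    _ ≤ ∑ u ∈ (multislice ℓ n κ).filter (fun u => ∀ k ∈ T, u k = w k), G u := by
        rw [← nsmul_eq_mul]
        apply Finset.card_nsmul_le_sum
        intro u hu
        rw [mem_filter] at hu
        exact h u hu.1 hu.2
    _ ≤ _ := Finset.sum_le_sum_of_subset_of_nonneg (Finset.filter_subset _ _) (fun u _ _ => hG u)

lemma dist01_nonneg (x : ℝ) : 0 ≤ dist01 x := le_min (abs_nonneg _) (abs_nonneg _)

lemma dist01_lt {x δ : ℝ} (h : dist01 x < δ) : |x| < δ ∨ |x - 1| < δ := by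
  simpa [dist01] using h

lemma exists_good (κ : Fin ℓ → ℕ) (ρ : ℝ) (hρ : 0 < ρ) (hn : 6 ≤ ρ * n)
    (hκ : ∀ i, ρ * n ≤ (κ i : ℝ)) (hS : 0 < ((multislice ℓ n κ).card : ℝ))
    (c : ℝ) (coef : Fin n → Fin ℓ → ℝ) (ε : ℝ)
    (hε : ∑ u ∈ multislice ℓ n κ, dist01 (F c coef u) ^ 2 = ε * (multislice ℓ n κ).card)
    (hε0 : ε < (ρ / 2) ^ 4 / 4096)
    (k k' m m' : Fin n) (h1 : k ≠ k') (h2 : k ≠ m) (h3 : k ≠ m') (h4 : k' ≠ m) (h5 : k' ≠ m')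
    (h6 : m ≠ m') (a b a' b' : Fin ℓ) :
    ∃ x : ℝ, dist01 x < 1 / 32 ∧ dist01 (x - D coef k k' a b) < 1 / 32 ∧
      dist01 (x - D coef m m' a' b') < 1 / 32 ∧
      dist01 (x - D coef k k' a b - D coef m m' a' b') < 1 / 32 := by
  by_contra hcon
  push Not at hcon
  let w : Fin n → Fin ℓ := fun x => if x = k then a else if x = k' then b else if x = m then a' else b'
  let T : Finset (Fin n) := {k, k', m, m'}
  have hT : T.card = 4 := by
    simp [T, h1, h2, h3, h4, h5, h6]
  let G : (Fin n → Fin ℓ) → ℝ := fun u => dist01 (F c coef u) ^ 2 +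
    dist01 (F c coef (sw k k' u)) ^ 2 + dist01 (F c coef (sw m m' u)) ^ 2 +
    dist01 (F c coef (sw m m' (sw k k' u))) ^ 2
  have key := pattern_sum κ ρ hρ hn hκ w T hT.le G (fun u => by positivity) (1 / 1024) (by norm_num) (by
    intro u hu hw
    have e1 : u k = a := by rw [hw k (by simp [T])]; simp [w]
    have e2 : u k' = b := by rw [hw k' (by simp [T])]; simp [w, h1.symm]
    have e3 : u m = a' := by rw [hw m (by simp [T])]; simp [w, h2.symm, h4.symm]
    have e4 : u m' = b' := by rw [hw m' (by simp [T])]; simp [w, h3.symm, h5.symm, h6.symm]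
    have f1 : F c coef (sw k k' u) = F c coef u - D coef k k' a b := by rw [F_sw, e1, e2]
    have f2 : F c coef (sw m m' u) = F c coef u - D coef m m' a' b' := by rw [F_sw, e3, e4]
    have f3 : F c coef (sw m m' (sw k k' u)) = F c coef u - D coef k k' a b - D coef m m' a' b' := by
      rw [F_sw, f1, sw_other k k' m u h2.symm h4.symm, sw_other k k' m' u h3.symm h5.symm, e3, e4]
    simp only [G, f1, f2, f3]
    have sq : ∀ y : ℝ, 1 / 32 ≤ dist01 y → 1 / 1024 ≤ dist01 y ^ 2 := by
      intro y hy; nlinarith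
    by_cases g1 : dist01 (F c coef u) < 1 / 32
    · by_cases g2 : dist01 (F c coef u - D coef k k' a b) < 1 / 32
      · by_cases g3 : dist01 (F c coef u - D coef m m' a' b') < 1 / 32
        · have := sq _ (hcon _ g1 g2 g3)
          have : 0 ≤ dist01 (F c coef u) ^ 2 + dist01 (F c coef u - D coef k k' a b) ^ 2
            + dist01 (F c coef u - D coef m m' a' b') ^ 2 := by positivity
          linarith
        · have := sq _ (not_lt.mp g3)
          have : 0 ≤ dist01 (F c coef u) ^ 2 + dist01 (F c coef u - D coef k k' a b) ^ 2
            + dist01 (F c coef u - D coef k k' a b - D coef m m' a' b') ^ 2 := by positivity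
          linarith
      · have := sq _ (not_lt.mp g2)
        have : 0 ≤ dist01 (F c coef u) ^ 2 + dist01 (F c coef u - D coef m m' a' b') ^ 2
            + dist01 (F c coef u - D coef k k' a b - D coef m m' a' b') ^ 2 := by positivity
        linarith
    · have := sq _ (not_lt.mp g1)
      have : 0 ≤ dist01 (F c coef u - D coef k k' a b) ^ 2 + dist01 (F c coef u - D coef m m' a' b') ^ 2
            + dist01 (F c coef u - D coef k k' a b - D coef m m' a' b') ^ 2 := by positivity
      linarith)
  have s1 := sum_sw κ k k' (fun u => dist01 (F c coef u) ^ 2)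
  have s2 := sum_sw κ m m' (fun u => dist01 (F c coef u) ^ 2)
  have s3 := sum_sw κ k k' (fun u => dist01 (F c coef (sw m m' u)) ^ 2)
  simp only [G, Finset.sum_add_distrib] at key
  rw [s3, s2, s1, hε, hT] at key
  nlinarith

/-- Two disjoint swaps cannot both be big. -/
lemma real_disjoint (x d e : ℝ) (h0 : dist01 x < 1 / 32) (h1 : dist01 (x - d) < 1 / 32)
    (h2 : dist01 (x - e) < 1 / 32) (h3 : dist01 (x - d - e) < 1 / 32)
    (hd : 1 / 8 ≤ |d|) (he : 1 / 8 ≤ |e|) : False := by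
  rcases dist01_lt h0 with h0 | h0 <;> rcases dist01_lt h1 with h1 | h1 <;>
  rcases dist01_lt h2 with h2 | h2 <;> rcases dist01_lt h3 with h3 | h3 <;>
  rw [abs_lt] at h0 h1 h2 h3 <;> rw [le_abs] at hd he <;>
  rcases hd with hd | hd <;> rcases he with he | he <;> linarith

lemma real_big (x d : ℝ) (h0 : dist01 x < 1 / 32) (h1 : dist01 (x - d) < 1 / 32)
    (hd : 1 / 8 ≤ |d|) : 15 / 16 ≤ |d| := by
  rcases dist01_lt h0 with h0 | h0 <;> rcases dist01_lt h1 with h1 | h1 <;>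
  rw [abs_lt] at h0 h1 <;> rw [le_abs] at hd ⊢ <;>
  rcases hd with hd | hd <;> first | (left; linarith) | (right; linarith)

/-- Combinatorial star lemma. -/
lemma star (hn : 4 ≤ n) (Big : Fin n → Fin n → Prop) (symm : ∀ k m, Big k m → Big m k)
    (disj : ∀ k k' m m', k ≠ k' → k ≠ m → k ≠ m' → k' ≠ m → k' ≠ m' → m ≠ m' →
      Big k k' → Big m m' → False)
    (tri : ∀ k m r, k ≠ m → k ≠ r → m ≠ r → Big k m → Big k r ∨ Big m r) :
    ∃ j, ∀ k m, k ≠ j → m ≠ j → k ≠ m → ¬ Big k m := by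
  have fresh : ∀ s : Finset (Fin n), s.card ≤ 3 → ∃ r, r ∉ s := by
    intro s hs
    by_contra h
    push Not at h
    have : s = univ := by ext x; simp [h x]
    rw [this, Finset.card_univ, Fintype.card_fin] at hs
    omega
  have main : ∀ j p q, j ≠ p → j ≠ q → p ≠ q → Big j p → Big j q →
      ∃ j, ∀ k m, k ≠ j → m ≠ j → k ≠ m → ¬ Big k m := by
    intro j p q hjp hjq hpq b1 b2
    refine ⟨j, fun k m hk hm hkm b => ?_⟩
    -- the edge must be {p,q}
    have c1 : k = p ∨ m = p := by
      by_contra h; push Not at h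
      exact disj j p k m hjp hk.symm hm.symm h.1.symm h.2.symm hkm b1 b
    have c2 : k = q ∨ m = q := by
      by_contra h; push Not at h
      exact disj j q k m hjq hk.symm hm.symm h.1.symm h.2.symm hkm b2 b
    have bpq : Big p q := by
      rcases c1 with rfl | rfl <;> rcases c2 with rfl | rfl
      · exact absurd rfl hpq
      · exact b
      · exact symm _ _ b
      · exact absurd rfl hpq
    obtain ⟨r, hr⟩ := fresh {j, p, q} Finset.card_le_three
    simp only [mem_insert, mem_singleton, not_or] at hr
    obtain ⟨r1, r2, r3⟩ := hr
    rcases tri j p r hjp (Ne.symm r1) (Ne.symm r2) b1 with h | h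
    · exact disj j r p q (Ne.symm r1) hjp hjq r2 r3 hpq h bpq
    · exact disj p r j q (Ne.symm r2) hjp.symm hpq r1 r3 hjq h b2
  by_cases hB : ∃ k m, k ≠ m ∧ Big k m
  · obtain ⟨k, m, hkm, b⟩ := hB
    obtain ⟨r, hr⟩ := fresh {k, m} (by have := Finset.card_le_two (a := k) (b := m); omega)
    simp only [mem_insert, mem_singleton, not_or] at hr
    obtain ⟨r1, r2⟩ := hr
    rcases tri k m r hkm (Ne.symm r1) (Ne.symm r2) b with h | h
    · exact main k m r hkm (Ne.symm r1) (Ne.symm r2) b h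
    · exact main m k r hkm.symm (Ne.symm r2) (Ne.symm r1) (symm _ _ b) h
  · push Not at hB
    exact ⟨⟨0, by omega⟩, fun k m _ _ hkm => hB k m hkm⟩

lemma exists_center (κ : Fin ℓ → ℕ) (ρ : ℝ) (hρ : 0 < ρ) (hn : 6 ≤ ρ * n) (hn4 : 4 ≤ n)
    (hκ : ∀ i, ρ * n ≤ (κ i : ℝ)) (hS : 0 < ((multislice ℓ n κ).card : ℝ))
    (c : ℝ) (coef : Fin n → Fin ℓ → ℝ) (ε : ℝ)
    (hε : ∑ u ∈ multislice ℓ n κ, dist01 (F c coef u) ^ 2 = ε * (multislice ℓ n κ).card)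
    (hε0 : ε < (ρ / 2) ^ 4 / 4096) :
    ∃ j, ∀ k m, k ≠ j → m ≠ j → ∀ a b, |D coef k m a b| < 1 / 8 := by
  have good := exists_good κ ρ hρ hn hκ hS c coef ε hε hε0
  have bigger : ∀ k m, k ≠ m → ∀ a b, 1 / 8 ≤ |D coef k m a b| → 15 / 16 ≤ |D coef k m a b| := by
    intro k m hkm a b h
    have : ∃ s t : Fin n, s ≠ t ∧ s ∉ ({k, m} : Finset (Fin n)) ∧ t ∉ ({k, m} : Finset (Fin n)) := by
      have hc : 1 < (({k, m} : Finset (Fin n))ᶜ).card := by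
        rw [Finset.card_compl, Fintype.card_fin]
        have := Finset.card_le_two (a := k) (b := m)
        omega
      obtain ⟨s, hs, t, ht, hst⟩ := Finset.one_lt_card.mp hc
      exact ⟨s, t, hst, Finset.mem_compl.mp hs, Finset.mem_compl.mp ht⟩
    obtain ⟨s, t, hst, hs, ht⟩ := this
    simp only [mem_insert, mem_singleton, not_or] at hs ht
    obtain ⟨x, h0, h1, -, -⟩ := good k m s t hkm (Ne.symm hs.1) (Ne.symm ht.1) (Ne.symm hs.2)
      (Ne.symm ht.2) hst a b a b
    exact real_big x _ h0 h1 h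
  obtain ⟨j, hj⟩ := star hn4 (fun k m => ∃ a b, 1 / 8 ≤ |D coef k m a b|)
    (by
      rintro k m ⟨a, b, h⟩
      refine ⟨b, a, ?_⟩
      have : D coef m k b a = D coef k m a b := by simp [D]; ring
      rwa [this])
    (by
      rintro k k' m m' h1 h2 h3 h4 h5 h6 ⟨a, b, h⟩ ⟨a', b', h'⟩
      obtain ⟨x, g0, g1, g2, g3⟩ := good k k' m m' h1 h2 h3 h4 h5 h6 a b a' b'
      exact real_disjoint x _ _ g0 g1 g2 g3 h h')
    (by
      rintro k m r hkm hkr hmr ⟨a, b, h⟩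
      have h' := bigger k m hkm a b h
      by_contra hcon
      push Not at hcon
      have c1 := hcon.1 a b
      have c2 := hcon.2 a b
      have : D coef k m a b = D coef k r a b - D coef m r a b := by simp [D]; ring
      rw [this] at h'
      have := abs_sub (D coef k r a b) (D coef m r a b)
      linarith)
  refine ⟨j, fun k m hk hm a b => ?_⟩
  by_cases hkm : k = m
  · subst hkm; simp [D]
  have := hj k m hk hm hkm
  push Not at this
  exact this a b

def phi (x : ℝ) : ℝ := max 0 (min 1 (2 * x - 1 / 2))

lemma phi_close (x : ℝ) : |x - phi x| ≤ dist01 x := by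
  unfold phi dist01
  rw [le_min_iff]
  constructor <;>
  rcases max_cases 0 (min 1 (2 * x - 1 / 2)) with ⟨h, h'⟩ | ⟨h, h'⟩ <;>
  rcases min_cases 1 (2 * x - 1 / 2) with ⟨g, g'⟩ | ⟨g, g'⟩ <;>
  rw [h] <;> (try rw [g]) <;> rw [abs_le] <;> (try rw [g] at h') <;>
  constructor <;> first | linarith | (first | (linarith [le_abs_self x, neg_abs_le x]) | (linarith [le_abs_self (x-1), neg_abs_le (x-1)]))

lemma phi_diff (x d : ℝ) (hd : |d| < 1 / 8) :
    d * (phi x - phi (x - d)) ≤ 128 * (d ^ 2 * dist01 x ^ 2) := by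
  rw [abs_lt] at hd
  by_cases h : dist01 x < 1 / 8
  · have h0 : phi x = phi (x - d) := by
      unfold phi
      rcases dist01_lt h with h | h <;> rw [abs_lt] at h
      · rw [max_eq_left, max_eq_left]
        · exact (min_le_right _ _).trans (by linarith)
        · exact (min_le_right _ _).trans (by linarith)
      · rw [min_eq_left (by linarith), min_eq_left (by linarith)]
    rw [h0]; simp; positivity
  · have h : 1 / 8 ≤ dist01 x := not_lt.mp h
    have h64 : 1 ≤ 64 * dist01 x ^ 2 := by nlinarith
    have hl : d * (phi x - phi (x - d)) ≤ 2 * d ^ 2 := by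
      have : |phi x - phi (x - d)| ≤ 2 * |d| := by
        have e1 := abs_max_sub_max_le_max 0 (min 1 (2 * x - 1 / 2)) 0 (min 1 (2 * (x - d) - 1 / 2))
        have e2 := abs_min_sub_min_le_max 1 (2 * x - 1 / 2) 1 (2 * (x - d) - 1 / 2)
        have e3 : |(2 * x - 1 / 2) - (2 * (x - d) - 1 / 2)| = 2 * |d| := by
          rw [show (2 * x - 1 / 2) - (2 * (x - d) - 1 / 2) = 2 * d by ring, abs_mul]; norm_num
        rw [e3, sub_self, abs_zero, max_eq_right (by positivity)] at e2
        rw [sub_self, abs_zero] at e1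
        exact e1.trans (max_le (by positivity) e2)
      calc _ ≤ |d * (phi x - phi (x - d))| := le_abs_self _
        _ = |d| * |phi x - phi (x - d)| := abs_mul _ _
        _ ≤ |d| * (2 * |d|) := by gcongr
        _ = 2 * d ^ 2 := by rw [← sq_abs d]; ring
    nlinarith [sq_nonneg d]

section final

variable (κ : Fin ℓ → ℕ) (c : ℝ) (coef : Fin n → Fin ℓ → ℝ) (j : Fin n)

def H (u : Fin n → Fin ℓ) : ℝ := F c coef u - M κ c coef j (u j)

lemma H_sw (k m : Fin n) (hk : k ∈ univ.erase j) (hm : m ∈ univ.erase j) (u : Fin n → Fin ℓ) :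
    H κ c coef j (sw k m u) = H κ c coef j u - D coef k m (u k) (u m) := by
  have hk := (Finset.mem_erase.mp hk).1
  have hm := (Finset.mem_erase.mp hm).1
  rw [H, H, F_sw, sw_other k m j u hk.symm hm.symm]; ring

lemma energy (hn : 2 ≤ n) :
    4 * ((n : ℝ) - 1) * ∑ u ∈ multislice ℓ n κ, H κ c coef j u ^ 2
      = ∑ k ∈ univ.erase j, ∑ m ∈ univ.erase j, ∑ u ∈ multislice ℓ n κ,
          D coef k m (u k) (u m) ^ 2 := by
  have := ident hn κ c coef j (H κ c coef j)
  calc _ = _ := by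
        congr 1
        apply Finset.sum_congr rfl
        intro u _
        rw [sq]
        rfl
    _ = _ := this
    _ = _ := by
        apply Finset.sum_congr rfl; intro k hk
        apply Finset.sum_congr rfl; intro m hm
        apply Finset.sum_congr rfl; intro u _
        rw [H_sw κ c coef j k m hk hm]; ring

lemma energy_bound (hn : 2 ≤ n) (ρ : ℝ) (hρ : 0 < ρ) (hn6 : 6 ≤ ρ * n)
    (hκ : ∀ i, ρ * n ≤ (κ i : ℝ)) (G : (Fin n → Fin ℓ) → ℝ) (hG : ∀ u, 0 ≤ G u) :
    (ρ / 2) ^ 2 * ((multislice ℓ n κ).card : ℝ) *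
      (∑ k ∈ univ.erase j, ∑ m ∈ univ.erase j, ∑ u ∈ multislice ℓ n κ,
          D coef k m (u k) (u m) ^ 2 * G u)
      ≤ 4 * ((n : ℝ) - 1) * (∑ u ∈ multislice ℓ n κ, H κ c coef j u ^ 2) *
        ∑ u ∈ multislice ℓ n κ, G u := by
  rw [energy κ c coef j hn]
  rw [Finset.mul_sum, Finset.sum_mul]
  apply Finset.sum_le_sum; intro k hk
  rw [Finset.mul_sum, Finset.sum_mul]
  apply Finset.sum_le_sum; intro m hm
  rw [Finset.mul_sum, Finset.mul_sum]
  apply Finset.sum_le_sum; intro u hu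
  rw [← mul_assoc]
  apply mul_le_mul_of_nonneg_right _ (hG u)
  by_cases hkm : k = m
  · subst hkm; simp [D]
  have hc : ({k, m} : Finset (Fin n)).card = 2 := Finset.card_pair hkm
  have := pattern_sum κ ρ hρ hn6 hκ u {k, m} (by omega)
    (fun v => D coef k m (v k) (v m) ^ 2) (fun v => by positivity)
    (D coef k m (u k) (u m) ^ 2) (by positivity) (by
      intro v _ hv
      rw [hv k (by simp), hv m (by simp)])
  rwa [hc] at this

lemma sum_H_M (hn : 2 ≤ n) :
    ∑ u ∈ multislice ℓ n κ, H κ c coef j u * M κ c coef j (u j) = 0 := by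
  have := ident hn κ c coef j (fun u => M κ c coef j (u j))
  have hz : ∑ k ∈ univ.erase j, ∑ m ∈ univ.erase j, ∑ u ∈ multislice ℓ n κ,
          D coef k m (u k) (u m) * (M κ c coef j (u j) - M κ c coef j (sw k m u j)) = 0 := by
    apply Finset.sum_eq_zero; intro k hk
    apply Finset.sum_eq_zero; intro m hm
    apply Finset.sum_eq_zero; intro u _
    rw [sw_other k m j u (Finset.mem_erase.mp hk).1.symm (Finset.mem_erase.mp hm).1.symm]
    ring
  rw [hz] at this
  have hn1 : (2 : ℝ) ≤ n := by exact_mod_cast hn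
  rcases mul_eq_zero.mp this with h | h
  · exfalso; linarith
  · exact h

lemma var_bound (hn : 2 ≤ n) (ρ : ℝ) (hρ : 0 < ρ) (hn6 : 6 ≤ ρ * n)
    (hκ : ∀ i, ρ * n ≤ (κ i : ℝ)) (hS : 0 < ((multislice ℓ n κ).card : ℝ)) (ε : ℝ)
    (hε : ∑ u ∈ multislice ℓ n κ, dist01 (F c coef u) ^ 2 = ε * (multislice ℓ n κ).card)
    (hε0 : ε ≤ (ρ / 2) ^ 2 / 512)
    (hj : ∀ k m, k ≠ j → m ≠ j → ∀ a b, |D coef k m a b| < 1 / 8) :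
    ∑ u ∈ multislice ℓ n κ, H κ c coef j u ^ 2 ≤ 2 * ε * (multislice ℓ n κ).card := by
  have hn1 : (2 : ℝ) ≤ n := by exact_mod_cast hn
  set s : ℝ := ((multislice ℓ n κ).card : ℝ) with hs
  set V := ∑ u ∈ multislice ℓ n κ, H κ c coef j u ^ 2 with hV
  set W := ∑ u ∈ multislice ℓ n κ, H κ c coef j u * phi (F c coef u) with hW
  have hV0 : 0 ≤ V := Finset.sum_nonneg (fun u _ => by positivity)
  have e1 : 4 * ((n : ℝ) - 1) * W ≤ 128 * ∑ k ∈ univ.erase j, ∑ m ∈ univ.erase j,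
      ∑ u ∈ multislice ℓ n κ, D coef k m (u k) (u m) ^ 2 * dist01 (F c coef u) ^ 2 := by
    have := ident hn κ c coef j (fun u => phi (F c coef u))
    refine this.le.trans ?_
    simp only [Finset.mul_sum]
    apply Finset.sum_le_sum; intro k hk
    apply Finset.sum_le_sum; intro m hm
    apply Finset.sum_le_sum; intro u _
    rw [F_sw]
    exact phi_diff _ _ (hj k m (Finset.mem_erase.mp hk).1 (Finset.mem_erase.mp hm).1 _ _)
  have e2 := energy_bound κ c coef j hn ρ hρ hn6 hκ (fun u => dist01 (F c coef u) ^ 2)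
    (fun u => by positivity)
  rw [hε, ← hV, ← hs] at e2
  have e3 : (ρ / 2) ^ 2 * W ≤ 128 * V * ε := by
    have h1 : (ρ / 2) ^ 2 * s * (4 * ((n : ℝ) - 1) * W)
        ≤ 128 * (4 * ((n : ℝ) - 1) * V * (ε * s)) := by
      have := mul_le_mul_of_nonneg_left e1 (show 0 ≤ (ρ / 2) ^ 2 * s by positivity)
      linarith
    have h2 : 0 < s * (4 * ((n : ℝ) - 1)) := by
      apply mul_pos hS; linarith
    have h3 : ((ρ / 2) ^ 2 * W) * (s * (4 * ((n : ℝ) - 1)))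
        ≤ (128 * V * ε) * (s * (4 * ((n : ℝ) - 1))) := by linarith
    exact le_of_mul_le_mul_right h3 h2
  have e4 : V / 2 - ε * s / 2 ≤ W := by
    have h0 := sum_H_M κ c coef j hn
    have h1 : ∑ u ∈ multislice ℓ n κ, (H κ c coef j u ^ 2 / 2 - dist01 (F c coef u) ^ 2 / 2
        + H κ c coef j u * M κ c coef j (u j)) ≤ W := by
      apply Finset.sum_le_sum
      intro u _
      have hc := phi_close (F c coef u)
      have hsq : (F c coef u - phi (F c coef u)) ^ 2 ≤ dist01 (F c coef u) ^ 2 := by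
        rw [← sq_abs]; gcongr
      have hF : F c coef u = H κ c coef j u + M κ c coef j (u j) := by rw [H]; ring
      have : H κ c coef j u * phi (F c coef u) = H κ c coef j u ^ 2
        + H κ c coef j u * M κ c coef j (u j)
        - H κ c coef j u * (F c coef u - phi (F c coef u)) := by
          rw [show M κ c coef j (u j) = F c coef u - H κ c coef j u by rw [hF]; ring]
          ring
      rw [this]
      nlinarith [sq_nonneg (H κ c coef j u - (F c coef u - phi (F c coef u)))]
    rw [Finset.sum_add_distrib, Finset.sum_sub_distrib, ← Finset.sum_div, ← Finset.sum_div,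
      h0, hε] at h1
    linarith
  have hq : 0 < (ρ / 2) ^ 2 := by positivity
  have e5 : (ρ / 2) ^ 2 * (V / 2 - ε * s / 2) ≤ (ρ / 2) ^ 2 * (V / 4) := by
    have h1 := mul_le_mul_of_nonneg_left e4 hq.le
    have h2 := mul_le_mul_of_nonneg_left hε0 hV0
    linarith
  have := le_of_mul_le_mul_left e5 hq
  linarith

lemma fourth_bound (hn : 2 ≤ n) (ρ : ℝ) (hρ : 0 < ρ) (hn6 : 6 ≤ ρ * n)
    (hκ : ∀ i, ρ * n ≤ (κ i : ℝ)) :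
    (ρ / 2) ^ 2 * ((multislice ℓ n κ).card : ℝ) * ∑ u ∈ multislice ℓ n κ, H κ c coef j u ^ 4
      ≤ 3 * (∑ u ∈ multislice ℓ n κ, H κ c coef j u ^ 2) ^ 2 := by
  have hn1 : (2 : ℝ) ≤ n := by exact_mod_cast hn
  have e2 := energy_bound κ c coef j hn ρ hρ hn6 hκ (fun u => H κ c coef j u ^ 2)
    (fun u => by positivity)
  have e1 : 4 * ((n : ℝ) - 1) * ∑ u ∈ multislice ℓ n κ, H κ c coef j u ^ 4
      ≤ 3 * ∑ k ∈ univ.erase j, ∑ m ∈ univ.erase j,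
      ∑ u ∈ multislice ℓ n κ, D coef k m (u k) (u m) ^ 2 * H κ c coef j u ^ 2 := by
    have h0 := ident hn κ c coef j (fun u => H κ c coef j u ^ 3)
    have h00 : ∑ u ∈ multislice ℓ n κ, H κ c coef j u ^ 4 = ∑ u ∈ multislice ℓ n κ,
        (F c coef u - M κ c coef j (u j)) * H κ c coef j u ^ 3 := by
      apply Finset.sum_congr rfl; intro u _
      rw [pow_succ' (H κ c coef j u) 3]; rfl
    rw [h00, h0, Finset.mul_sum]
    apply Finset.sum_le_sum; intro k hk
    rw [Finset.mul_sum]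
    apply Finset.sum_le_sum; intro m hm
    have h1 := sum_sw κ k m (fun u => D coef k m (u k) (u m) ^ 2 * H κ c coef j u ^ 2)
    have h2 : ∑ u ∈ multislice ℓ n κ, D coef k m (u k) (u m) *
        (H κ c coef j u ^ 3 - H κ c coef j (sw k m u) ^ 3)
        ≤ ∑ u ∈ multislice ℓ n κ, (3 / 2 * (D coef k m (u k) (u m) ^ 2 * H κ c coef j u ^ 2)
          + 3 / 2 * (D coef k m (sw k m u k) (sw k m u m) ^ 2 * H κ c coef j (sw k m u) ^ 2)) := by
      apply Finset.sum_le_sum; intro u _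
      rw [D_sw, H_sw κ c coef j k m hk hm]
      generalize D coef k m (u k) (u m) = d
      generalize H κ c coef j u = h
      nlinarith [sq_nonneg (d * (h - (h - d)))]
    rw [Finset.sum_add_distrib, ← Finset.mul_sum, ← Finset.mul_sum, h1] at h2
    linarith
  set s : ℝ := ((multislice ℓ n κ).card : ℝ) with hs
  set V := ∑ u ∈ multislice ℓ n κ, H κ c coef j u ^ 2 with hV
  set Q := ∑ u ∈ multislice ℓ n κ, H κ c coef j u ^ 4 with hQ
  have h1 : (ρ / 2) ^ 2 * s * (4 * ((n : ℝ) - 1) * Q) ≤ 3 * (4 * ((n : ℝ) - 1) * V * V) := by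
    have := mul_le_mul_of_nonneg_left e1 (show 0 ≤ (ρ / 2) ^ 2 * s by positivity)
    linarith
  have h2 : (0 : ℝ) < 4 * ((n : ℝ) - 1) := by linarith
  have h3 : ((ρ / 2) ^ 2 * s * Q) * (4 * ((n : ℝ) - 1)) ≤ (3 * V ^ 2) * (4 * ((n : ℝ) - 1)) := by
    linarith
  exact le_of_mul_le_mul_right h3 h2

lemma dist01_le_add (x y : ℝ) : dist01 x ≤ dist01 y + |y - x| := by
  have h1 : |x| ≤ |y| + |y - x| := by
    have := abs_sub y (y - x)
    simpa using this
  have h2 : |x - 1| ≤ |y - 1| + |y - x| := by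
    have := abs_sub (y - 1) (y - x)
    rw [show y - 1 - (y - x) = x - 1 by ring] at this
    exact this
  unfold dist01
  rcases min_cases |y| |y - 1| with ⟨h, _⟩ | ⟨h, _⟩ <;> rw [h]
  · exact (min_le_left _ _).trans h1
  · exact (min_le_right _ _).trans h2

lemma mean_bound (ρ : ℝ) (hρ : 0 < ρ) (hn6 : 6 ≤ ρ * n)
    (hκ : ∀ i, ρ * n ≤ (κ i : ℝ)) (hS : 0 < ((multislice ℓ n κ).card : ℝ)) (ε : ℝ)
    (hε : ∑ u ∈ multislice ℓ n κ, dist01 (F c coef u) ^ 2 = ε * (multislice ℓ n κ).card)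
    (hV : ∑ u ∈ multislice ℓ n κ, H κ c coef j u ^ 2 ≤ 2 * ε * (multislice ℓ n κ).card)
    (a : Fin ℓ) : (ρ / 2) * dist01 (M κ c coef j a) ^ 2 ≤ 6 * ε := by
  have := pattern_sum κ ρ hρ hn6 hκ (fun _ => a) {j} (by simp)
    (fun u => 2 * dist01 (F c coef u) ^ 2 + 2 * H κ c coef j u ^ 2) (fun v => by positivity)
    (dist01 (M κ c coef j a) ^ 2) (by positivity) (by
      intro u _ hu
      have hua : u j = a := hu j (by simp)
      have h1 := dist01_le_add (M κ c coef j a) (F c coef u)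
      have h2 : |F c coef u - M κ c coef j a| ^ 2 = H κ c coef j u ^ 2 := by
        rw [sq_abs, H, hua]
      rw [← h2]
      have := dist01_nonneg (M κ c coef j a)
      nlinarith [sq_nonneg (dist01 (F c coef u) - |F c coef u - M κ c coef j a|)])
  rw [Finset.sum_add_distrib, ← Finset.mul_sum, ← Finset.mul_sum, hε, Finset.card_singleton,
    pow_one] at this
  set s : ℝ := ((multislice ℓ n κ).card : ℝ) with hs
  have h3 : ((ρ / 2) * dist01 (M κ c coef j a) ^ 2) * s ≤ (6 * ε) * s := by linarith
  exact le_of_mul_le_mul_right h3 hS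

def rnd (x : ℝ) : ℝ := if |x| ≤ |x - 1| then 0 else 1

lemma rnd_bool (x : ℝ) : rnd x = 0 ∨ rnd x = 1 := by
  unfold rnd; split_ifs <;> simp

lemma rnd_dist (x : ℝ) : |x - rnd x| = dist01 x := by
  unfold rnd dist01
  split_ifs with h
  · rw [sub_zero, min_eq_left h]
  · rw [min_eq_right (not_le.mp h).le]

lemma sq_le_dist (x g : ℝ) (hg : g = 0 ∨ g = 1) :
    (x - g) ^ 2 ≤ dist01 x ^ 2 + 4 * (x - g) ^ 4 := by
  by_cases h : |x - g| ≤ 1 / 2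
  · have : dist01 x = |x - g| := by
      unfold dist01
      rw [abs_le] at h
      rcases hg with rfl | rfl
      · rw [sub_zero, min_eq_left]
        apply sq_le_sq.mp
        nlinarith
      · apply min_eq_right
        apply sq_le_sq.mp
        nlinarith
    rw [this, sq_abs]
    have : 0 ≤ (x - g) ^ 4 := by positivity
    linarith
  · have h : 1 / 2 ≤ |x - g| := (not_le.mp h).le
    have h1 : 1 / 4 ≤ (x - g) ^ 2 := by rw [← sq_abs]; nlinarith
    have : 0 ≤ dist01 x ^ 2 := by positivity
    nlinarith

lemma small_case (hn : 4 ≤ n) (ρ : ℝ) (hρ : 0 < ρ) (hn6 : 6 ≤ ρ * n)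
    (hκ : ∀ i, ρ * n ≤ (κ i : ℝ)) (hS : 0 < ((multislice ℓ n κ).card : ℝ)) (ε : ℝ)
    (hε : ∑ u ∈ multislice ℓ n κ, dist01 (F c coef u) ^ 2 = ε * (multislice ℓ n κ).card)
    (hε0 : ε ≤ (ρ / 2) ^ 2 / 512) (hε1 : ε < (ρ / 2) ^ 4 / 4096) :
    ∃ j : Fin n, ∃ r : Fin ℓ → ℝ, (∀ a, r a = 0 ∨ r a = 1) ∧
      ∑ u ∈ multislice ℓ n κ, (F c coef u - r (u j)) ^ 2
        ≤ (ε + 1536 / (ρ / 2) ^ 2 * ε ^ 2) * (multislice ℓ n κ).card := by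
  obtain ⟨j, hj⟩ := exists_center κ ρ hρ hn6 hn hκ hS c coef ε hε hε1
  have hV := var_bound κ c coef j (by omega) ρ hρ hn6 hκ hS ε hε hε0 hj
  have hQ := fourth_bound κ c coef j (by omega) ρ hρ hn6 hκ
  have hM := mean_bound κ c coef j ρ hρ hn6 hκ hS ε hε hV
  refine ⟨j, fun a => rnd (M κ c coef j a), fun a => rnd_bool _, ?_⟩
  set s : ℝ := ((multislice ℓ n κ).card : ℝ) with hs
  have hV0 : 0 ≤ ∑ u ∈ multislice ℓ n κ, H κ c coef j u ^ 2 :=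
    Finset.sum_nonneg (fun u _ => by positivity)
  have hq : 0 < ρ / 2 := by positivity
  have hq2 : 0 < (ρ / 2) ^ 2 := by positivity
  have h4 : ∑ u ∈ multislice ℓ n κ, H κ c coef j u ^ 4 ≤ 12 * ε ^ 2 / (ρ / 2) ^ 2 * s := by
    have h1 : (∑ u ∈ multislice ℓ n κ, H κ c coef j u ^ 2) ^ 2 ≤ (2 * ε * s) ^ 2 := by gcongr
    rw [div_mul_eq_mul_div, le_div_iff₀ hq2]
    have : ((∑ u ∈ multislice ℓ n κ, H κ c coef j u ^ 4) * (ρ / 2) ^ 2) * s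
      ≤ (12 * ε ^ 2 * s) * s := by linarith
    exact le_of_mul_le_mul_right this hS
  have hM4 : ∀ a, dist01 (M κ c coef j a) ^ 4 ≤ 36 * ε ^ 2 / (ρ / 2) ^ 2 := by
    intro a
    rw [le_div_iff₀ hq2]
    have h0 : 0 ≤ ρ / 2 * dist01 (M κ c coef j a) ^ 2 := by positivity
    have := pow_le_pow_left₀ h0 (hM a) 2
    calc _ = (ρ / 2 * dist01 (M κ c coef j a) ^ 2) ^ 2 := by ring
      _ ≤ _ := this
      _ = _ := by ring
  have key : ∀ u ∈ multislice ℓ n κ, (F c coef u - rnd (M κ c coef j (u j))) ^ 2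
      ≤ dist01 (F c coef u) ^ 2 + 32 * H κ c coef j u ^ 4 + 32 * (36 * ε ^ 2 / (ρ / 2) ^ 2) := by
    intro u _
    have h1 := sq_le_dist (F c coef u) (rnd (M κ c coef j (u j))) (rnd_bool _)
    have h2 := hM4 (u j)
    rw [← rnd_dist, show ∀ y : ℝ, |y| ^ 4 = y ^ 4 from fun y => by
      rw [show 4 = 2 * 2 by rfl, pow_mul, sq_abs, ← pow_mul]] at h2
    have h3 : F c coef u - rnd (M κ c coef j (u j)) = H κ c coef j u +
      (M κ c coef j (u j) - rnd (M κ c coef j (u j))) := by rw [H]; ring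
    have h5 : ∀ x y : ℝ, (x + y) ^ 4 ≤ 8 * x ^ 4 + 8 * y ^ 4 := by
      intro x y
      have a1 : (x + y) ^ 2 ≤ 2 * x ^ 2 + 2 * y ^ 2 := by nlinarith [sq_nonneg (x - y)]
      have a2 := pow_le_pow_left₀ (sq_nonneg (x + y)) a1 2
      nlinarith [sq_nonneg (x ^ 2 - y ^ 2)]
    have h6 := h5 (H κ c coef j u) (M κ c coef j (u j) - rnd (M κ c coef j (u j)))
    rw [← h3] at h6
    linarith
  refine (Finset.sum_le_sum key).trans ?_
  rw [Finset.sum_add_distrib, Finset.sum_add_distrib, Finset.sum_const, nsmul_eq_mul, hε,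
    ← Finset.mul_sum, ← hs]
  calc _ ≤ ε * s + 32 * (12 * ε ^ 2 / (ρ / 2) ^ 2 * s) + s * (32 * (36 * ε ^ 2 / (ρ / 2) ^ 2)) := by
        gcongr
    _ = _ := by ring

end final
end FKN

/-- **FKN theorem for the multislice, sharp form.**  If `f` is a degree-one function on a
`ρ`-balanced multislice with `E[dist(f,{0,1})²] = ε`, then `f` is `(ε + Cε²)`-close to a
Boolean dictator. -/
theorem fkn_multislice_sharp (ℓ : ℕ) (hℓ : 2 ≤ ℓ) (ρ : ℝ) (hρ : 0 < ρ) :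
    ∃ (N : ℕ) (C : ℝ), ∀ n : ℕ, N ≤ n → ∀ κ : Fin ℓ → ℕ,
      (∀ i, 0 < κ i) → (∀ i, ρ * n ≤ (κ i : ℝ)) → (∑ i, κ i = n) →
      ∀ f : (Fin n → Fin ℓ) → ℝ, degreeOne ℓ n κ f →
      ∀ ε : ℝ, msExp ℓ n κ (fun u => dist01 (f u) ^ 2) = ε →
      ∃ g : (Fin n → Fin ℓ) → ℝ, booleanOn ℓ n κ g ∧ dictator ℓ n κ g ∧
        msExp ℓ n κ (fun u => (f u - g u) ^ 2) ≤ ε + C * ε ^ 2 := by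
  set q : ℝ := ρ / 2 with hq
  have hq0 : 0 < q := by positivity
  set ε0 : ℝ := min (q ^ 2 / 512) (q ^ 4 / 4096) with hε0
  have hε0pos : 0 < ε0 := lt_min (by positivity) (by positivity)
  refine ⟨max 4 ⌈6 / ρ⌉₊, 1536 / q ^ 2 + (2 / ε0 ^ 2 + 1 / ε0), ?_⟩
  intro n hn κ _ hκ _ f hf ε hε
  have hn4 : 4 ≤ n := (le_max_left _ _).trans hn
  have hn6 : 6 ≤ ρ * n := by
    have h1 : ⌈6 / ρ⌉₊ ≤ n := (le_max_right _ _).trans hn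
    have h2 : 6 / ρ ≤ n := (Nat.le_ceil _).trans (by exact_mod_cast h1)
    rw [div_le_iff₀ hρ] at h2
    linarith
  have hA : 0 ≤ 1536 / q ^ 2 := by positivity
  have hB : 0 ≤ 2 / ε0 ^ 2 + 1 / ε0 := by positivity
  have hεnn : 0 ≤ ε := by
    rw [← hε]; unfold msExp; positivity
  have j0 : Fin n := ⟨0, by omega⟩
  by_cases hS : (multislice ℓ n κ).card = 0
  · refine ⟨fun _ => 0, fun _ _ => Or.inl rfl, ⟨j0, fun _ _ _ _ _ => rfl⟩, ?_⟩
    have : msExp ℓ n κ (fun u => (f u - 0) ^ 2) = 0 := by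
      unfold msExp; rw [hS]; simp
    rw [this]
    positivity
  have hS' : 0 < ((multislice ℓ n κ).card : ℝ) := by
    exact_mod_cast Nat.pos_of_ne_zero hS
  have hsum : ∑ u ∈ multislice ℓ n κ, dist01 (f u) ^ 2 = ε * (multislice ℓ n κ).card := by
    rw [← hε]; unfold msExp; field_simp
  by_cases hlarge : ε0 ≤ ε
  · refine ⟨fun _ => 0, fun _ _ => Or.inl rfl, ⟨j0, fun _ _ _ _ _ => rfl⟩, ?_⟩
    have h1 : msExp ℓ n κ (fun u => (f u - 0) ^ 2) ≤ 2 * ε + 2 := by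
      unfold msExp
      rw [div_le_iff₀ hS']
      have : ∀ u ∈ multislice ℓ n κ, (f u - 0) ^ 2 ≤ 2 * dist01 (f u) ^ 2 + 2 := by
        intro u _
        have h2 : |f u| ≤ dist01 (f u) + 1 := by
          unfold dist01
          rcases min_cases |f u| |f u - 1| with ⟨h, _⟩ | ⟨h, _⟩ <;> rw [h]
          · linarith
          · have := abs_add_le (f u - 1) 1
            simpa using this
        rw [sub_zero, ← sq_abs]
        nlinarith [abs_nonneg (f u), sq_nonneg (dist01 (f u) - 1)]
      refine (Finset.sum_le_sum this).trans ?_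
      rw [Finset.sum_add_distrib, ← Finset.mul_sum, hsum, Finset.sum_const, nsmul_eq_mul]
      linarith
    have h2 : 2 ≤ 2 / ε0 ^ 2 * ε ^ 2 := by
      rw [div_mul_eq_mul_div, le_div_iff₀ (by positivity)]
      have := pow_le_pow_left₀ hε0pos.le hlarge 2
      linarith
    have h3 : ε ≤ 1 / ε0 * ε ^ 2 := by
      rw [div_mul_eq_mul_div, le_div_iff₀ hε0pos]
      nlinarith
    have h4 : 0 ≤ 1536 / q ^ 2 * ε ^ 2 := by positivity
    linarith
  · have hlt := not_le.mp hlarge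
    obtain ⟨c, coef, hc⟩ := hf
    have hF : ∀ u ∈ multislice ℓ n κ, f u = FKN.F c coef u := by
      intro u hu
      rw [hc u hu, FKN.F]
      simp [xvar]
    obtain ⟨j, r, hr, hb⟩ := FKN.small_case κ c coef hn4 ρ hρ hn6 hκ hS' ε
      (by rw [← hsum]; exact Finset.sum_congr rfl (fun u hu => by rw [hF u hu]))
      (hlt.le.trans (min_le_left _ _)) (hlt.trans_le (min_le_right _ _))
    refine ⟨fun u => r (u j), fun u _ => hr _, ⟨j, fun u _ v _ h => by simp only [h]⟩, ?_⟩
    have h1 : msExp ℓ n κ (fun u => (f u - r (u j)) ^ 2) ≤ ε + 1536 / q ^ 2 * ε ^ 2 := by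
      unfold msExp
      rw [div_le_iff₀ hS']
      refine le_trans (le_of_eq ?_) hb
      exact Finset.sum_congr rfl (fun u hu => by simp only [hF u hu])
    have : 0 ≤ (2 / ε0 ^ 2 + 1 / ε0) * ε ^ 2 := by positivity
    linarith
end
end

section
/- Fix an integer ℓ ≥ 2 and a parameter ρ > 0. There exist constants N = N(ℓ,ρ) and C = C(ℓ,ρ) such that the following holds. Let κ_1,…,κ_ℓ be positive integers with κ_i ≥ ρn for all i, summing to n ≥ N. If F : M_κ → {0,1} satisfies ‖F^{>1}‖² = ε, then there exists a Boolean function g : M_κ → {0,1} depending on at most one coordinate such that Pr[F ≠ g] ≤ 4ε + Cε². -/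
open Finset

noncomputable section

section helpers

variable {ℓ n : ℕ} {κ : Fin ℓ → ℕ}

lemma ms_congr {f g : (Fin n → Fin ℓ) → ℝ} (h : ∀ u ∈ multislice ℓ n κ, f u = g u) :
    msExp ℓ n κ f = msExp ℓ n κ g := by
  unfold msExp; rw [Finset.sum_congr rfl h]

lemma ms_mono {f g : (Fin n → Fin ℓ) → ℝ} (h : ∀ u ∈ multislice ℓ n κ, f u ≤ g u) :
    msExp ℓ n κ f ≤ msExp ℓ n κ g := by
  unfold msExp
  exact div_le_div_of_nonneg_right (Finset.sum_le_sum h) (Nat.cast_nonneg _)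

lemma ms_add (f g : (Fin n → Fin ℓ) → ℝ) :
    msExp ℓ n κ (fun u => f u + g u) = msExp ℓ n κ f + msExp ℓ n κ g := by
  unfold msExp; rw [Finset.sum_add_distrib, add_div]

lemma ms_smul (a : ℝ) (f : (Fin n → Fin ℓ) → ℝ) :
    msExp ℓ n κ (fun u => a * f u) = a * msExp ℓ n κ f := by
  unfold msExp; rw [← Finset.mul_sum, mul_div_assoc]

lemma ms_sum {ι : Type*} (s : Finset ι) (f : ι → (Fin n → Fin ℓ) → ℝ) :
    msExp ℓ n κ (fun u => ∑ i ∈ s, f i u) = ∑ i ∈ s, msExp ℓ n κ (f i) := by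
  unfold msExp; rw [Finset.sum_comm, Finset.sum_div]

lemma ms_one (hne : (multislice ℓ n κ).Nonempty) : msExp ℓ n κ (fun _ => 1) = 1 := by
  unfold msExp
  have : ((multislice ℓ n κ).card : ℝ) ≠ 0 := by
    exact_mod_cast Finset.card_ne_zero.mpr hne
  simp [this]

lemma ms_nonneg {f : (Fin n → Fin ℓ) → ℝ} (h : ∀ u ∈ multislice ℓ n κ, 0 ≤ f u) :
    0 ≤ msExp ℓ n κ f := by
  unfold msExp
  exact div_nonneg (Finset.sum_nonneg h) (Nat.cast_nonneg _)

lemma mem_ms_comp (π : Equiv.Perm (Fin n)) (u : Fin n → Fin ℓ) (hu : u ∈ multislice ℓ n κ) :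
    u ∘ π ∈ multislice ℓ n κ := by
  simp only [multislice, Finset.mem_filter, Finset.mem_univ, true_and] at hu ⊢
  intro i
  rw [← hu i]
  apply Finset.card_bij (fun j _ => π j)
  · intro j hj; simpa using hj
  · intro a _ b _ h; exact π.injective h
  · intro b hb; exact ⟨π.symm b, by simpa using hb, by simp⟩

lemma ms_perm (π : Equiv.Perm (Fin n)) (f : (Fin n → Fin ℓ) → ℝ) :
    msExp ℓ n κ (fun u => f (u ∘ π)) = msExp ℓ n κ f := by
  unfold msExp
  congr 1
  apply Finset.sum_bij (fun u _ => u ∘ π)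
  · intro u hu; exact mem_ms_comp π u hu
  · intro a _ b _ h
    funext j
    have := congrFun h (π.symm j)
    simpa using this
  · intro b hb
    refine ⟨b ∘ π.symm, mem_ms_comp _ b hb, ?_⟩
    funext j; simp
  · intro u _; rfl

/-- The color counts, as real sums. -/
lemma sum_color (u : Fin n → Fin ℓ) (hu : u ∈ multislice ℓ n κ) (g : Fin ℓ → ℝ) :
    ∑ k, g (u k) = ∑ a, (κ a : ℝ) * g a := by
  simp only [multislice, Finset.mem_filter, Finset.mem_univ, true_and] at hu
  rw [← Finset.sum_fiberwise (s := univ) (g := u)]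
  apply Finset.sum_congr rfl
  intro a _
  rw [← hu a, Finset.sum_congr rfl (g := fun _ => g a)]
  · simp
  · intro k hk; simp at hk; rw [hk]

/-- conditioning step -/
lemma cond_step {θ : ℝ} (hn : 0 < n) (hκ : ∀ a, θ * n + 3 ≤ (κ a : ℝ)) (j : Fin n) (a : Fin ℓ)
    (J : Finset (Fin n)) (hJ : J.card ≤ 3) (hj : j ∉ J)
    (G : (Fin n → Fin ℓ) → ℝ) (hG0 : ∀ u, 0 ≤ G u)
    (hG : ∀ u v : Fin n → Fin ℓ, (∀ i ∈ J, u i = v i) → G u = G v) :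
    θ * msExp ℓ n κ G ≤ msExp ℓ n κ (fun u => G u * (if u j = a then 1 else 0)) := by
  set A := msExp ℓ n κ (fun u => G u * (if u j = a then (1:ℝ) else 0)) with hA
  have hA0 : 0 ≤ A := ms_nonneg (fun u _ => mul_nonneg (hG0 u) (by split_ifs <;> norm_num))
  have h1 : ∀ k ∈ Jᶜ, msExp ℓ n κ (fun u => G u * (if u k = a then (1:ℝ) else 0)) = A := by
    intro k hk
    rw [hA, ← ms_perm (Equiv.swap j k)]
    apply ms_congr
    intro u _
    have : G (u ∘ Equiv.swap j k) = G u := by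
      apply hG
      intro i hi
      have h1 : i ≠ j := fun h => hj (h ▸ hi)
      have h2 : i ≠ k := fun h => (Finset.mem_compl.mp hk) (h ▸ hi)
      simp [Equiv.swap_apply_of_ne_of_ne h1 h2]
    rw [this]; simp
  have h2 : ∑ k ∈ Jᶜ, msExp ℓ n κ (fun u => G u * (if u k = a then (1:ℝ) else 0))
      = (Jᶜ.card : ℝ) * A := by
    rw [Finset.sum_congr rfl h1]; simp
  rw [← ms_sum] at h2
  have h3 : (Jᶜ.card : ℝ) ≤ n := by
    have := Finset.card_le_univ Jᶜ
    simp only [Fintype.card_fin] at this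
    exact_mod_cast this
  have h4 : (θ * n) * msExp ℓ n κ G ≤ (Jᶜ.card : ℝ) * A := by
    rw [← h2, ← ms_smul]
    apply ms_mono
    intro u hu
    rw [← Finset.mul_sum, mul_comm]
    apply mul_le_mul_of_nonneg_left _ (hG0 u)
    have h5 := sum_color u hu (fun b => if b = a then (1:ℝ) else 0)
    simp at h5
    have h5' : ∑ k, (if u k = a then (1:ℝ) else 0) = κ a := by
      rw [← h5]; simp
    have h6 := Finset.sum_add_sum_compl J (fun k => if u k = a then (1:ℝ) else 0)
    have h7 : ∑ k ∈ J, (if u k = a then (1:ℝ) else 0) ≤ 3 := by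
      calc _ ≤ ∑ k ∈ J, (1:ℝ) := Finset.sum_le_sum (fun k _ => by split_ifs <;> norm_num)
        _ ≤ 3 := by simp; exact_mod_cast hJ
    have := hκ a
    linarith
  have hn' : (0:ℝ) < n := by exact_mod_cast hn
  have h5 : (Jᶜ.card : ℝ) * A ≤ n * A := mul_le_mul_of_nonneg_right h3 hA0
  have : n * (θ * msExp ℓ n κ G) ≤ n * A := by nlinarith
  exact le_of_mul_le_mul_left this hn'

/-- quadratic form -/
def qf (v : Fin ℓ → ℝ) : ℝ := ∑ a, ∑ b, (v a - v b) ^ 2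

lemma qf_nonneg (v : Fin ℓ → ℝ) : 0 ≤ qf v :=
  Finset.sum_nonneg fun _ _ => Finset.sum_nonneg fun _ _ => sq_nonneg _

lemma le_qf (v : Fin ℓ → ℝ) (a b : Fin ℓ) : (v a - v b) ^ 2 ≤ qf v := by
  unfold qf
  calc (v a - v b) ^ 2 ≤ ∑ b, (v a - v b) ^ 2 :=
        Finset.single_le_sum (f := fun b => (v a - v b) ^ 2) (fun _ _ => sq_nonneg _) (mem_univ b)
    _ ≤ _ := Finset.single_le_sum (f := fun a => ∑ b, (v a - v b) ^ 2)
        (fun _ _ => Finset.sum_nonneg fun _ _ => sq_nonneg _) (mem_univ a)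

lemma qf_sub (v w : Fin ℓ → ℝ) : qf (fun a => v a - w a) ≤ 2 * qf v + 2 * qf w := by
  unfold qf
  simp only [Finset.mul_sum, ← Finset.sum_add_distrib]
  refine Finset.sum_le_sum fun a _ => Finset.sum_le_sum fun b _ => ?_
  nlinarith [sq_nonneg ((v a - v b) + (w a - w b))]

/-- weight of a pair -/
def om (c : Fin n → Fin ℓ → ℝ) (j k : Fin n) : ℝ := qf (fun a => c j a - c k a)

lemma om_nonneg (c : Fin n → Fin ℓ → ℝ) (j k : Fin n) : 0 ≤ om c j k := qf_nonneg _

lemma om_self (c : Fin n → Fin ℓ → ℝ) (j : Fin n) : om c j j = 0 := by simp [om, qf]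

lemma om_comm (c : Fin n → Fin ℓ → ℝ) (j k : Fin n) : om c j k = om c k j := by
  unfold om qf
  refine Finset.sum_congr rfl fun a _ => Finset.sum_congr rfl fun b _ => ?_
  ring

lemma om_tri (c : Fin n → Fin ℓ → ℝ) (i j k : Fin n) :
    om c i k ≤ 2 * om c i j + 2 * om c j k := by
  rw [om_comm c j k]
  unfold om
  have := qf_sub (fun a => c i a - c j a) (fun a => c k a - c j a)
  convert this using 3
  ring

/-- swap difference -/
def dd (c : Fin n → Fin ℓ → ℝ) (j k : Fin n) (u : Fin n → Fin ℓ) : ℝ :=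
  c j (u k) + c k (u j) - c j (u j) - c k (u k)

lemma dd_sq_le (c : Fin n → Fin ℓ → ℝ) (j k : Fin n) (u : Fin n → Fin ℓ) :
    dd c j k u ^ 2 ≤ om c j k := by
  have := le_qf (fun a => c j a - c k a) (u k) (u j)
  unfold om dd
  refine le_trans (le_of_eq ?_) this
  ring

lemma dd_swap (c : Fin n → Fin ℓ → ℝ) (j k : Fin n) (u : Fin n → Fin ℓ) :
    dd c j k (u ∘ Equiv.swap j k) = - dd c j k u := by
  unfold dd; simp; ring

lemma dd_expand (c : Fin n → Fin ℓ → ℝ) (j k : Fin n) (u : Fin n → Fin ℓ) :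
    dd c j k u ^ 2 = ∑ a, ∑ b, ((c j a - c k a) - (c j b - c k b)) ^ 2 *
      ((if u j = a then 1 else 0) * (if u k = b then 1 else 0)) := by
  simp [dd]; ring

lemma pair_low {θ : ℝ} (hθ : 0 ≤ θ) (hn : 0 < n) (hκ : ∀ a, θ * n + 3 ≤ (κ a : ℝ))
    (c : Fin n → Fin ℓ → ℝ) (j k : Fin n) (hjk : j ≠ k)
    (J : Finset (Fin n)) (hJ : J.card ≤ 2) (hj : j ∉ J) (hk : k ∉ J)
    (G : (Fin n → Fin ℓ) → ℝ) (hG0 : ∀ u, 0 ≤ G u)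
    (hG : ∀ u v : Fin n → Fin ℓ, (∀ i ∈ J, u i = v i) → G u = G v) :
    θ ^ 2 * om c j k * msExp ℓ n κ G ≤ msExp ℓ n κ (fun u => G u * dd c j k u ^ 2) := by
  have key : ∀ a b, θ ^ 2 * msExp ℓ n κ G ≤ msExp ℓ n κ (fun u => G u *
      ((if u j = a then 1 else 0) * (if u k = b then 1 else 0))) := by
    intro a b
    have h1 := cond_step hn hκ j a J (by omega) hj G hG0 hG
    have h2 := cond_step hn hκ k b (insert j J)
      ((Finset.card_insert_le _ _).trans (by omega))
      (by simp [hk, hjk.symm]) (fun u => G u * (if u j = a then 1 else 0))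
      (fun u => mul_nonneg (hG0 u) (by split_ifs <;> norm_num))
      (by
        intro u v h
        rw [hG u v (fun i hi => h i (Finset.mem_insert_of_mem hi)),
          h j (Finset.mem_insert_self _ _)])
    simp only [mul_assoc] at h2
    nlinarith
  calc θ ^ 2 * om c j k * msExp ℓ n κ G
      = ∑ a, ∑ b, ((c j a - c k a) - (c j b - c k b)) ^ 2 * (θ ^ 2 * msExp ℓ n κ G) := by
        unfold om qf; simp_rw [← Finset.sum_mul]; ring
    _ ≤ ∑ a, ∑ b, ((c j a - c k a) - (c j b - c k b)) ^ 2 * msExp ℓ n κ (fun u => G u *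
      ((if u j = a then 1 else 0) * (if u k = b then 1 else 0))) :=
        Finset.sum_le_sum fun a _ => Finset.sum_le_sum fun b _ =>
          mul_le_mul_of_nonneg_left (key a b) (sq_nonneg _)
    _ = _ := by
        have : ∀ u : Fin n → Fin ℓ, G u * dd c j k u ^ 2 = ∑ a, ∑ b,
            ((c j a - c k a) - (c j b - c k b)) ^ 2 *
              (G u * ((if u j = a then 1 else 0) * (if u k = b then 1 else 0))) := by
          intro u
          rw [dd_expand]
          simp only [Finset.mul_sum]
          refine Finset.sum_congr rfl fun a _ => Finset.sum_congr rfl fun b _ => ?_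
          ring
        rw [ms_congr (fun u _ => this u), ms_sum]
        refine Finset.sum_congr rfl fun a _ => ?_
        rw [ms_sum]
        refine Finset.sum_congr rfl fun b _ => ?_
        rw [ms_smul]

/-- linear form -/
def lin (c : Fin n → Fin ℓ → ℝ) (u : Fin n → Fin ℓ) : ℝ := ∑ j, c j (u j)

/-- partial application of an involution -/
def pinv (π : Fin n → Fin n) (S : Finset (Fin n)) (j : Fin n) : Fin n :=
  if j ∈ S ∨ π j ∈ S then π j else j

lemma pinv_inv (π : Fin n → Fin n) (hπ : Function.Involutive π) (S : Finset (Fin n)) :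
    Function.Involutive (pinv π S) := by
  intro j
  unfold pinv
  by_cases h : j ∈ S ∨ π j ∈ S
  · rw [if_pos h, hπ j, if_pos h.symm]
  · rw [if_neg h, if_neg h]

lemma lin_pinv (c : Fin n → Fin ℓ → ℝ) (π : Fin n → Fin n) (hπ : Function.Involutive π)
    (S : Finset (Fin n)) (hS : ∀ t ∈ S, π t ∉ S) (u : Fin n → Fin ℓ) :
    lin c (u ∘ pinv π S) = lin c u + ∑ t ∈ S, dd c t (π t) u := by
  have h1 : ∀ j, c j (u (pinv π S j)) = c j (u j) +
      ((if j ∈ S then c j (u (π j)) - c j (u j) else 0) +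
       (if π j ∈ S then c (π (π j)) (u (π j)) - c (π (π j)) (u (π (π j))) else 0)) := by
    intro j
    unfold pinv
    rw [hπ j]
    by_cases h : j ∈ S
    · simp [h, hS j h]
    · by_cases h' : π j ∈ S <;> simp [h, h']
  unfold lin
  simp only [Function.comp, h1, Finset.sum_add_distrib]
  congr 1
  have h2 := Equiv.sum_comp (hπ.toPerm π)
    (fun j => if j ∈ S then c (π j) (u j) - c (π j) (u (π j)) else 0)
  simp only [Function.Involutive.coe_toPerm] at h2
  refine (congrArg₂ (· + ·) rfl h2).trans ?_
  rw [← Finset.sum_filter, ← Finset.sum_filter, ← Finset.sum_add_distrib]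
  simp only [Finset.filter_mem_eq_inter, Finset.univ_inter]
  refine Finset.sum_congr rfl fun t _ => ?_
  unfold dd; ring

lemma lin_swap (c : Fin n → Fin ℓ → ℝ) (j k : Fin n) (u : Fin n → Fin ℓ) :
    lin c (u ∘ Equiv.swap j k) = lin c u + dd c j k u := by
  by_cases hjk : j = k
  · subst hjk; simp [dd]
  have h := lin_pinv c (Equiv.swap j k) (fun i => by simp) {j}
    (by intro t ht; simp at ht; subst ht; simpa using fun h => hjk h.symm) u
  have h2 : pinv (Equiv.swap j k) {j} = Equiv.swap j k := by
    funext i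
    unfold pinv
    by_cases h1 : i = j
    · simp [h1]
    · by_cases h3 : i = k
      · simp [h3]
      · rw [Equiv.swap_apply_of_ne_of_ne h1 h3]; simp
  rw [h2] at h
  simpa using h

/-- the mean of the linear form -/
def mu (κ : Fin ℓ → ℕ) (c : Fin n → Fin ℓ → ℝ) : ℝ := (∑ j, ∑ a, (κ a : ℝ) * c j a) / n

lemma sum_dd (hn : 0 < n) (c : Fin n → Fin ℓ → ℝ) (u : Fin n → Fin ℓ)
    (hu : u ∈ multislice ℓ n κ) :
    ∑ j, ∑ k, dd c j k u = - (2 * n * (lin c u - mu κ c)) := by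
  have hn' : (n : ℝ) ≠ 0 := by positivity
  have h1 : ∑ j, ∑ k, c j (u k) = n * mu κ c := by
    unfold mu
    rw [mul_div_cancel₀ _ hn']
    exact Finset.sum_congr rfl fun j _ => sum_color u hu (c j)
  have h2 : ∑ j, ∑ k, c k (u j) = n * mu κ c := by rw [Finset.sum_comm]; exact h1
  unfold dd
  simp only [Finset.sum_sub_distrib, Finset.sum_add_distrib, h1, h2]
  simp only [Finset.sum_const, Finset.card_univ, Fintype.card_fin, nsmul_eq_mul, ← Finset.mul_sum]
  unfold lin
  ring

/-- Integration by parts. -/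
lemma ibp (hn : 0 < n) (c : Fin n → Fin ℓ → ℝ) (φ : ℝ → ℝ) :
    4 * n * msExp ℓ n κ (fun u => (lin c u - mu κ c) * φ (lin c u - mu κ c)) =
    ∑ j, ∑ k, msExp ℓ n κ (fun u => (φ (lin c u - mu κ c + dd c j k u) - φ (lin c u - mu κ c))
      * dd c j k u) := by
  have h1 : ∀ j k, msExp ℓ n κ (fun u =>
      (φ (lin c u - mu κ c + dd c j k u) - φ (lin c u - mu κ c)) * dd c j k u) =
      (-2) * msExp ℓ n κ (fun u => φ (lin c u - mu κ c) * dd c j k u) := by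
    intro j k
    have h2 := ms_perm (κ := κ) (Equiv.swap j k)
      (fun u => φ (lin c u - mu κ c) * dd c j k u)
    simp only [lin_swap, dd_swap] at h2
    have h3 : msExp ℓ n κ (fun u =>
      (φ (lin c u - mu κ c + dd c j k u) - φ (lin c u - mu κ c)) * dd c j k u) =
      msExp ℓ n κ (fun u => (-1) * (φ (lin c u + dd c j k u - mu κ c) * -dd c j k u) +
        (-1) * (φ (lin c u - mu κ c) * dd c j k u)) := by
      apply ms_congr
      intro u _
      rw [show lin c u - mu κ c + dd c j k u = lin c u + dd c j k u - mu κ c by ring]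
      ring
    rw [h3, ms_add, ms_smul, ms_smul, h2]
    ring
  simp_rw [h1, ← Finset.mul_sum]
  have h4 : ∑ j, ∑ k, msExp ℓ n κ (fun u => φ (lin c u - mu κ c) * dd c j k u) =
      msExp ℓ n κ (fun u => (-(2 * n)) *
        ((lin c u - mu κ c) * φ (lin c u - mu κ c))) := by
    rw [Finset.sum_congr rfl fun j _ => (ms_sum univ
      (fun k u => φ (lin c u - mu κ c) * dd c j k u)).symm, ← ms_sum]
    apply ms_congr
    intro u hu
    simp only [← Finset.mul_sum]
    rw [sum_dd hn c u hu]; ring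
  rw [h4, ms_smul]; ring

/-- total weight -/
def tot (c : Fin n → Fin ℓ → ℝ) : ℝ := ∑ j, ∑ k, om c j k

lemma second_moment (hn : 0 < n) (c : Fin n → Fin ℓ → ℝ) :
    4 * n * msExp ℓ n κ (fun u => (lin c u - mu κ c) ^ 2) =
    ∑ j, ∑ k, msExp ℓ n κ (fun u => dd c j k u ^ 2) := by
  have := ibp (κ := κ) hn c id
  simp only [id] at this
  simp_rw [sq]
  rw [this]
  refine Finset.sum_congr rfl fun j _ => Finset.sum_congr rfl fun k _ => ms_congr fun u _ => ?_
  ring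

lemma ms_const_le (hne : (multislice ℓ n κ).Nonempty) {f : (Fin n → Fin ℓ) → ℝ} {a : ℝ}
    (h : ∀ u, f u ≤ a) : msExp ℓ n κ f ≤ a := by
  calc msExp ℓ n κ f ≤ msExp ℓ n κ (fun _ => a * 1) := ms_mono fun u _ => by simpa using h u
    _ = a := by rw [ms_smul, ms_one hne, mul_one]

lemma second_moment_le (hne : (multislice ℓ n κ).Nonempty) (hn : 0 < n)
    (c : Fin n → Fin ℓ → ℝ) :
    4 * n * msExp ℓ n κ (fun u => (lin c u - mu κ c) ^ 2) ≤ tot c := by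
  rw [second_moment hn]
  exact Finset.sum_le_sum fun j _ => Finset.sum_le_sum fun k _ =>
    ms_const_le hne fun u => dd_sq_le c j k u

lemma dd_sq_low {θ : ℝ} (hne : (multislice ℓ n κ).Nonempty) (hθ : 0 ≤ θ) (hn : 0 < n)
    (hκ : ∀ a, θ * n + 3 ≤ (κ a : ℝ)) (c : Fin n → Fin ℓ → ℝ) (j k : Fin n) :
    θ ^ 2 * om c j k ≤ msExp ℓ n κ (fun u => dd c j k u ^ 2) := by
  by_cases hjk : j = k
  · subst hjk
    rw [om_self, mul_zero]
    exact ms_nonneg fun u _ => sq_nonneg _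
  have := pair_low hθ hn hκ c j k hjk ∅ (by simp) (by simp) (by simp) (fun _ => 1)
    (fun _ => zero_le_one) (fun _ _ _ => rfl)
  rw [ms_one hne] at this
  simpa using this

lemma second_moment_ge {θ : ℝ} (hne : (multislice ℓ n κ).Nonempty) (hθ : 0 ≤ θ) (hn : 0 < n)
    (hκ : ∀ a, θ * n + 3 ≤ (κ a : ℝ)) (c : Fin n → Fin ℓ → ℝ) :
    θ ^ 2 * tot c ≤ 4 * n * msExp ℓ n κ (fun u => (lin c u - mu κ c) ^ 2) := by
  rw [second_moment hn]
  unfold tot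
  simp only [Finset.mul_sum]
  exact Finset.sum_le_sum fun j _ => Finset.sum_le_sum fun k _ => dd_sq_low hne hθ hn hκ c j k

lemma fourth_aux (hn : 0 < n) (c : Fin n → Fin ℓ → ℝ) :
    4 * n * msExp ℓ n κ (fun u => (lin c u - mu κ c) ^ 4) ≤
    3 * tot c * msExp ℓ n κ (fun u => (lin c u - mu κ c) ^ 2) := by
  have h := ibp (κ := κ) hn c (fun x => x ^ 3)
  have e1 : msExp ℓ n κ (fun u => (lin c u - mu κ c) ^ 4) =
    msExp ℓ n κ (fun u => (lin c u - mu κ c) * (lin c u - mu κ c) ^ 3) :=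
    ms_congr fun u _ => by ring
  rw [e1, h]
  unfold tot
  simp only [Finset.mul_sum, Finset.sum_mul]
  refine Finset.sum_le_sum fun j _ => Finset.sum_le_sum fun k _ => ?_
  have h2 := ms_perm (κ := κ) (Equiv.swap j k)
      (fun u => (lin c u - mu κ c) ^ 2 * dd c j k u ^ 2)
  simp only [lin_swap, dd_swap] at h2
  calc msExp ℓ n κ (fun u => ((lin c u - mu κ c + dd c j k u) ^ 3 - (lin c u - mu κ c) ^ 3)
        * dd c j k u)
      ≤ msExp ℓ n κ (fun u => (3/2) * ((lin c u + dd c j k u - mu κ c) ^ 2 * (- dd c j k u) ^ 2) +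
        (3/2) * ((lin c u - mu κ c) ^ 2 * dd c j k u ^ 2)) := by
        apply ms_mono
        intro u _
        generalize lin c u = x
        generalize mu κ c = m
        generalize dd c j k u = d
        have : 0 ≤ d ^ 2 * d ^ 2 := by positivity
        nlinarith
    _ = 3 * msExp ℓ n κ (fun u => (lin c u - mu κ c) ^ 2 * dd c j k u ^ 2) := by
        rw [ms_add, ms_smul, ms_smul, h2]; ring
    _ ≤ 3 * msExp ℓ n κ (fun u => om c j k * (lin c u - mu κ c) ^ 2) := by
        apply mul_le_mul_of_nonneg_left _ (by norm_num)
        apply ms_mono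
        intro u _
        rw [mul_comm]
        exact mul_le_mul_of_nonneg_right (dd_sq_le c j k u) (sq_nonneg _)
    _ = _ := by rw [ms_smul]; ring

lemma fourth_moment {θ : ℝ} (hne : (multislice ℓ n κ).Nonempty) (hθ : 0 < θ) (hn : 0 < n)
    (hκ : ∀ a, θ * n + 3 ≤ (κ a : ℝ)) (c : Fin n → Fin ℓ → ℝ) :
    θ ^ 2 * msExp ℓ n κ (fun u => (lin c u - mu κ c) ^ 4) ≤
    3 * (msExp ℓ n κ (fun u => (lin c u - mu κ c) ^ 2)) ^ 2 := by
  have h1 := second_moment_ge hne hθ.le hn hκ c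
  have h2 := fourth_aux (κ := κ) hn c
  have h0 : 0 ≤ msExp ℓ n κ (fun u => (lin c u - mu κ c) ^ 2) := ms_nonneg fun u _ => sq_nonneg _
  set B := msExp ℓ n κ (fun u => (lin c u - mu κ c) ^ 2)
  set A := msExp ℓ n κ (fun u => (lin c u - mu κ c) ^ 4)
  have hn' : (0:ℝ) < 4 * n := by positivity
  have h3 : (4 * n) * (θ ^ 2 * A) ≤ (4 * n) * (3 * B ^ 2) := by
    calc (4 * n) * (θ ^ 2 * A) = θ ^ 2 * (4 * n * A) := by ring
      _ ≤ θ ^ 2 * (3 * tot c * B) := mul_le_mul_of_nonneg_left h2 (by positivity)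
      _ = 3 * B * (θ ^ 2 * tot c) := by ring
      _ ≤ 3 * B * (4 * n * B) := mul_le_mul_of_nonneg_left h1 (by positivity)
      _ = _ := by ring
  exact le_of_mul_le_mul_left h3 hn'

lemma mean_zero (hn : 0 < n) (c : Fin n → Fin ℓ → ℝ) :
    msExp ℓ n κ (fun u => lin c u - mu κ c) = 0 := by
  have := ibp (κ := κ) hn c (fun _ => 1)
  simp only [sub_self, zero_mul, mul_one] at this
  have h0 : msExp ℓ n κ (fun _ => (0:ℝ)) = 0 := by simp [msExp]
  simp only [h0, Finset.sum_const_zero] at this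
  have hn' : (4 * n : ℝ) ≠ 0 := by positivity
  exact (mul_eq_zero.mp this).resolve_left hn'

lemma fourth_full {θ : ℝ} (hne : (multislice ℓ n κ).Nonempty) (hθ : 0 < θ) (hθ1 : θ ≤ 1)
    (hn : 0 < n) (hκ : ∀ a, θ * n + 3 ≤ (κ a : ℝ)) (c0 : ℝ) (c : Fin n → Fin ℓ → ℝ) :
    θ ^ 2 * msExp ℓ n κ (fun u => (c0 + lin c u) ^ 4) ≤
    24 * (msExp ℓ n κ (fun u => (c0 + lin c u) ^ 2)) ^ 2 := by
  have h1 := fourth_moment hne hθ hn hκ c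
  set B := msExp ℓ n κ (fun u => (lin c u - mu κ c) ^ 2) with hB
  set A := msExp ℓ n κ (fun u => (lin c u - mu κ c) ^ 4) with hA
  have h0 : 0 ≤ B := ms_nonneg fun u _ => sq_nonneg _
  set d := c0 + mu κ c with hd
  have h2 : msExp ℓ n κ (fun u => (c0 + lin c u) ^ 2) = d ^ 2 + B := by
    have : msExp ℓ n κ (fun u => (c0 + lin c u) ^ 2) = msExp ℓ n κ (fun u =>
        (d ^ 2 * 1 + (2 * d) * (lin c u - mu κ c)) + (lin c u - mu κ c) ^ 2) :=
      ms_congr fun u _ => by rw [hd]; ring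
    rw [this, ms_add, ms_add, ms_smul, ms_smul, ms_one hne, mean_zero hn]; ring
  have h3 : msExp ℓ n κ (fun u => (c0 + lin c u) ^ 4) ≤ 8 * d ^ 4 + 8 * A := by
    calc _ ≤ msExp ℓ n κ (fun u => (8 * d ^ 4) * 1 + 8 * (lin c u - mu κ c) ^ 4) := by
          apply ms_mono
          intro u _
          rw [show c0 + lin c u = d + (lin c u - mu κ c) by rw [hd]; ring]
          generalize lin c u - mu κ c = x
          nlinarith [sq_nonneg (d ^ 2 - x ^ 2), sq_nonneg (d - x), sq_nonneg (d + x),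
            mul_nonneg (sq_nonneg (d - x)) (sq_nonneg (d + x)), sq_nonneg ((d - x) ^ 2),
            mul_nonneg (sq_nonneg (d - x)) (sq_nonneg d), mul_nonneg (sq_nonneg (d - x)) (sq_nonneg x)]
      _ = _ := by rw [ms_add, ms_smul, ms_smul, ms_one hne]; ring
  rw [h2]
  have h4 : θ ^ 2 ≤ 1 := by nlinarith
  have h5 : θ ^ 2 * (8 * d ^ 4) ≤ 8 * d ^ 4 := by
    have : 0 ≤ 8 * d ^ 4 := by positivity
    nlinarith
  have h6 : θ ^ 2 * msExp ℓ n κ (fun u => (c0 + lin c u) ^ 4) ≤ θ ^ 2 * (8 * d ^ 4 + 8 * A) :=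
    mul_le_mul_of_nonneg_left h3 (by positivity)
  nlinarith [mul_nonneg (sq_nonneg d) h0, sq_nonneg (d ^ 2)]

/-- a set of representatives of pairs of an involution -/
def reps (π : Fin n → Fin n) : Finset (Fin n) := univ.filter fun t => t < π t

/-- sum of swap differences -/
def xs (c : Fin n → Fin ℓ → ℝ) (π : Fin n → Fin n) (S : Finset (Fin n)) (u : Fin n → Fin ℓ) : ℝ :=
  ∑ t ∈ S, dd c t (π t) u

/-- total weight of a set of pairs -/
def ws (c : Fin n → Fin ℓ → ℝ) (π : Fin n → Fin n) (S : Finset (Fin n)) : ℝ :=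
  ∑ t ∈ S, om c t (π t)

lemma ws_nonneg (c : Fin n → Fin ℓ → ℝ) (π : Fin n → Fin n) (S : Finset (Fin n)) :
    0 ≤ ws c π S := Finset.sum_nonneg fun _ _ => om_nonneg _ _ _

lemma reps_ne (π : Fin n → Fin n) (hπ : Function.Involutive π) {s t : Fin n}
    (hs : s ∈ reps π) (ht : t ∈ reps π) (hst : s ≠ t) :
    s ≠ t ∧ s ≠ π t ∧ π s ≠ t ∧ π s ≠ π t := by
  simp only [reps, Finset.mem_filter, Finset.mem_univ, true_and] at hs ht
  refine ⟨hst, ?_, ?_, fun h => hst (hπ.injective h)⟩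
  · rintro rfl
    rw [hπ t] at hs
    exact absurd hs (not_lt.mpr ht.le)
  · rintro rfl
    rw [hπ s] at ht
    exact absurd ht (not_lt.mpr hs.le)

lemma reps_self_ne (π : Fin n → Fin n) {t : Fin n} (ht : t ∈ reps π) : t ≠ π t := by
  simp only [reps, Finset.mem_filter, Finset.mem_univ, true_and] at ht
  exact ht.ne

lemma dd_swap_other (c : Fin n → Fin ℓ → ℝ) (π : Fin n → Fin n) (hπ : Function.Involutive π)
    {s t : Fin n} (hs : s ∈ reps π) (ht : t ∈ reps π) (hst : s ≠ t) (u : Fin n → Fin ℓ) :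
    dd c s (π s) (u ∘ Equiv.swap t (π t)) = dd c s (π s) u := by
  obtain ⟨h1, h2, h3, h4⟩ := reps_ne π hπ hs ht hst
  unfold dd
  simp [Equiv.swap_apply_of_ne_of_ne h1 h2, Equiv.swap_apply_of_ne_of_ne h3 h4]

lemma xs_swap_mem (c : Fin n → Fin ℓ → ℝ) (π : Fin n → Fin n) (hπ : Function.Involutive π)
    {S : Finset (Fin n)} (hS : S ⊆ reps π) {t : Fin n} (ht : t ∈ S) (u : Fin n → Fin ℓ) :
    xs c π S (u ∘ Equiv.swap t (π t)) = xs c π S u - 2 * dd c t (π t) u := by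
  unfold xs
  rw [← Finset.add_sum_erase S _ ht, ← Finset.add_sum_erase S _ ht, dd_swap]
  have : ∑ x ∈ S.erase t, dd c x (π x) (u ∘ Equiv.swap t (π t)) =
      ∑ x ∈ S.erase t, dd c x (π x) u := by
    refine Finset.sum_congr rfl fun s hs => ?_
    exact dd_swap_other c π hπ (hS (Finset.mem_of_mem_erase hs)) (hS ht)
      (Finset.ne_of_mem_erase hs) u
  rw [this]; ring

lemma xs_swap_not_mem (c : Fin n → Fin ℓ → ℝ) (π : Fin n → Fin n) (hπ : Function.Involutive π)
    {S : Finset (Fin n)} (hS : S ⊆ reps π) {t : Fin n} (ht : t ∉ S) (htr : t ∈ reps π)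
    (u : Fin n → Fin ℓ) :
    xs c π S (u ∘ Equiv.swap t (π t)) = xs c π S u := by
  unfold xs
  refine Finset.sum_congr rfl fun s hs => ?_
  exact dd_swap_other c π hπ (hS hs) htr (fun h => ht (h ▸ hs)) u

lemma xs_sq (c : Fin n → Fin ℓ → ℝ) (π : Fin n → Fin n) (hπ : Function.Involutive π)
    {S : Finset (Fin n)} (hS : S ⊆ reps π) (G : (Fin n → Fin ℓ) → ℝ)
    (hG : ∀ t ∈ S, ∀ u, G (u ∘ Equiv.swap t (π t)) = G u) :
    msExp ℓ n κ (fun u => xs c π S u ^ 2 * G u) =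
      ∑ t ∈ S, msExp ℓ n κ (fun u => dd c t (π t) u ^ 2 * G u) := by
  have h1 : msExp ℓ n κ (fun u => xs c π S u ^ 2 * G u) =
      ∑ t ∈ S, msExp ℓ n κ (fun u => dd c t (π t) u * xs c π S u * G u) := by
    rw [← ms_sum]
    apply ms_congr
    intro u _
    simp only [← Finset.sum_mul]
    rw [sq]; rfl
  rw [h1]
  refine Finset.sum_congr rfl fun t ht => ?_
  have h2 := ms_perm (κ := κ) (Equiv.swap t (π t))
    (fun u => dd c t (π t) u * xs c π S u * G u)
  simp only [dd_swap, xs_swap_mem c π hπ hS ht, hG t ht] at h2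
  have h3 : msExp ℓ n κ (fun u => -dd c t (π t) u * (xs c π S u - 2 * dd c t (π t) u) * G u) =
      msExp ℓ n κ (fun u => (-1) * (dd c t (π t) u * xs c π S u * G u) +
        2 * (dd c t (π t) u ^ 2 * G u)) := ms_congr fun u _ => by ring
  rw [h3, ms_add, ms_smul, ms_smul] at h2
  linarith

lemma xs_sq_le (c : Fin n → Fin ℓ → ℝ) (π : Fin n → Fin n) (hπ : Function.Involutive π)
    {S : Finset (Fin n)} (hS : S ⊆ reps π) (G : (Fin n → Fin ℓ) → ℝ) (hG0 : ∀ u, 0 ≤ G u)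
    (hG : ∀ t ∈ S, ∀ u, G (u ∘ Equiv.swap t (π t)) = G u) :
    msExp ℓ n κ (fun u => xs c π S u ^ 2 * G u) ≤ ws c π S * msExp ℓ n κ G := by
  rw [xs_sq c π hπ hS G hG, ws, Finset.sum_mul]
  refine Finset.sum_le_sum fun t _ => ?_
  rw [← ms_smul]
  exact ms_mono fun u _ => mul_le_mul_of_nonneg_right (dd_sq_le _ _ _ _) (hG0 u)

lemma xs_four_le (c : Fin n → Fin ℓ → ℝ) (π : Fin n → Fin n) (hπ : Function.Involutive π)
    {S : Finset (Fin n)} (hS : S ⊆ reps π) (G : (Fin n → Fin ℓ) → ℝ) (hG0 : ∀ u, 0 ≤ G u)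
    (hG : ∀ t ∈ S, ∀ u, G (u ∘ Equiv.swap t (π t)) = G u) :
    msExp ℓ n κ (fun u => xs c π S u ^ 4 * G u) ≤ 3 * ws c π S ^ 2 * msExp ℓ n κ G := by
  have h1 : msExp ℓ n κ (fun u => xs c π S u ^ 4 * G u) =
      ∑ t ∈ S, msExp ℓ n κ (fun u => dd c t (π t) u * xs c π S u ^ 3 * G u) := by
    rw [← ms_sum]
    apply ms_congr
    intro u _
    simp only [← Finset.sum_mul]
    rw [show xs c π S u ^ 4 = xs c π S u * xs c π S u ^ 3 by ring]; rfl
  have h2 : ∀ t ∈ S, msExp ℓ n κ (fun u => dd c t (π t) u * xs c π S u ^ 3 * G u) ≤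
      3 * om c t (π t) * msExp ℓ n κ (fun u => xs c π S u ^ 2 * G u) := by
    intro t ht
    have h2 := ms_perm (κ := κ) (Equiv.swap t (π t))
      (fun u => dd c t (π t) u * xs c π S u ^ 3 * G u)
    simp only [dd_swap, xs_swap_mem c π hπ hS ht, hG t ht] at h2
    have h3 := ms_perm (κ := κ) (Equiv.swap t (π t))
      (fun u => dd c t (π t) u ^ 2 * xs c π S u ^ 2 * G u)
    simp only [dd_swap, xs_swap_mem c π hπ hS ht, hG t ht] at h3
    have h4 : msExp ℓ n κ (fun u =>
          dd c t (π t) u * xs c π S u ^ 3 * G u +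
          -dd c t (π t) u * (xs c π S u - 2 * dd c t (π t) u) ^ 3 * G u) ≤
        msExp ℓ n κ (fun u => 3 * (dd c t (π t) u ^ 2 * xs c π S u ^ 2 * G u) +
          3 * ((-dd c t (π t) u) ^ 2 * (xs c π S u - 2 * dd c t (π t) u) ^ 2 * G u)) := by
      apply ms_mono
      intro u _
      have hg := hG0 u
      generalize dd c t (π t) u = d
      generalize xs c π S u = x
      have : d * x ^ 3 + -d * (x - 2 * d) ^ 3 ≤ 3 * (d ^ 2 * x ^ 2) +
          3 * ((-d) ^ 2 * (x - 2 * d) ^ 2) := by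
        have : 0 ≤ d ^ 2 * d ^ 2 := by positivity
        nlinarith
      have := mul_le_mul_of_nonneg_right this hg
      linarith
    rw [ms_add, ms_add, ms_smul, ms_smul, h2, h3] at h4
    have h5 : msExp ℓ n κ (fun u => dd c t (π t) u ^ 2 * xs c π S u ^ 2 * G u) ≤
        om c t (π t) * msExp ℓ n κ (fun u => xs c π S u ^ 2 * G u) := by
      rw [← ms_smul]
      refine ms_mono fun u _ => ?_
      rw [mul_assoc]
      exact mul_le_mul_of_nonneg_right (dd_sq_le _ _ _ _) (mul_nonneg (sq_nonneg _) (hG0 u))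
    linarith
  have h6 := xs_sq_le (κ := κ) c π hπ hS G hG0 hG
  rw [h1]
  calc _ ≤ ∑ t ∈ S, 3 * om c t (π t) * msExp ℓ n κ (fun u => xs c π S u ^ 2 * G u) :=
        Finset.sum_le_sum h2
    _ = 3 * ws c π S * msExp ℓ n κ (fun u => xs c π S u ^ 2 * G u) := by
        rw [← Finset.sum_mul, ← Finset.mul_sum]; rfl
    _ ≤ 3 * ws c π S * (ws c π S * msExp ℓ n κ G) :=
        mul_le_mul_of_nonneg_left h6 (mul_nonneg (by norm_num) (ws_nonneg _ _ _))
    _ = _ := by ring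

lemma xs_prod_low {θ : ℝ} (hne : (multislice ℓ n κ).Nonempty) (hθ : 0 ≤ θ) (hn : 0 < n)
    (hκ : ∀ a, θ * n + 3 ≤ (κ a : ℝ)) (c : Fin n → Fin ℓ → ℝ)
    (π : Fin n → Fin n) (hπ : Function.Involutive π)
    {S T : Finset (Fin n)} (hS : S ⊆ reps π) (hT : T ⊆ reps π) (hd : Disjoint S T) :
    θ ^ 4 * (ws c π S * ws c π T) ≤
      msExp ℓ n κ (fun u => xs c π S u ^ 2 * xs c π T u ^ 2) := by
  rw [xs_sq c π hπ hS (fun u => xs c π T u ^ 2) (by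
    intro t ht u
    rw [xs_swap_not_mem c π hπ hT (Finset.disjoint_left.mp hd ht) (hS ht)])]
  unfold ws
  rw [Finset.sum_mul, Finset.mul_sum]
  refine Finset.sum_le_sum fun s hs => ?_
  have e1 : msExp ℓ n κ (fun u => dd c s (π s) u ^ 2 * xs c π T u ^ 2) =
      msExp ℓ n κ (fun u => xs c π T u ^ 2 * dd c s (π s) u ^ 2) :=
    ms_congr fun u _ => by ring
  have hst : ∀ t ∈ T, s ≠ t := fun t ht h => Finset.disjoint_left.mp hd hs (h ▸ ht)
  rw [e1, xs_sq c π hπ hT (fun u => dd c s (π s) u ^ 2) (by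
    intro t ht u
    rw [dd_swap_other c π hπ (hS hs) (hT ht) (hst t ht)])]
  rw [Finset.mul_sum, Finset.mul_sum]
  refine Finset.sum_le_sum fun t ht => ?_
  obtain ⟨h1, h2, h3, h4⟩ := reps_ne π hπ (hS hs) (hT ht) (hst t ht)
  have h5 := pair_low hθ hn hκ c t (π t) (reps_self_ne π (hT ht)) {s, π s}
    (Finset.card_le_two) (by simp [h1.symm, h3.symm]) (by simp [h2.symm, h4.symm])
    (fun u => dd c s (π s) u ^ 2) (fun u => sq_nonneg _) (by
      intro u v h
      have a1 := h s (by simp)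
      have a2 := h (π s) (by simp)
      simp only [dd, a1, a2])
  have h6 := dd_sq_low hne hθ hn hκ c s (π s)
  have e2 : msExp ℓ n κ (fun u => dd c t (π t) u ^ 2 * dd c s (π s) u ^ 2) =
      msExp ℓ n κ (fun u => dd c s (π s) u ^ 2 * dd c t (π t) u ^ 2) :=
    ms_congr fun u _ => by ring
  rw [e2]
  refine le_trans ?_ h5
  have := mul_le_mul_of_nonneg_left h6 (mul_nonneg (sq_nonneg θ) (om_nonneg c t (π t)))
  linarith

lemma four_points (F0 F1 F2 F3 e0 e1 e2 e3 v X Y : ℝ)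
    (h0 : F0 = 0 ∨ F0 = 1) (h1 : F1 = 0 ∨ F1 = 1) (h2 : F2 = 0 ∨ F2 = 1) (h3 : F3 = 0 ∨ F3 = 1)
    (g0 : F0 - v = e0) (g1 : F1 - (v + X) = e1) (g2 : F2 - (v + Y) = e2)
    (g3 : F3 - (v + (X + Y)) = e3) :
    min (X ^ 2) (Y ^ 2) ≤ 4 * (e0 ^ 2 + e1 ^ 2 + e2 ^ 2 + e3 ^ 2) := by
  have keyX : F0 = F1 ∨ F2 = F3 → X ^ 2 ≤ 4 * (e0 ^ 2 + e1 ^ 2 + e2 ^ 2 + e3 ^ 2) := by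
    rintro (h | h)
    · have : X = e0 - e1 := by linarith
      rw [this]; nlinarith [sq_nonneg (e0 + e1), sq_nonneg e2, sq_nonneg e3, sq_nonneg e0, sq_nonneg e1]
    · have : X = e2 - e3 := by linarith
      rw [this]; nlinarith [sq_nonneg (e2 + e3), sq_nonneg e2, sq_nonneg e3, sq_nonneg e0, sq_nonneg e1]
  have keyY : F0 = F2 ∨ F1 = F3 → Y ^ 2 ≤ 4 * (e0 ^ 2 + e1 ^ 2 + e2 ^ 2 + e3 ^ 2) := by
    rintro (h | h)
    · have : Y = e0 - e2 := by linarith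
      rw [this]; nlinarith [sq_nonneg (e0 + e2), sq_nonneg e2, sq_nonneg e3, sq_nonneg e0, sq_nonneg e1]
    · have : Y = e1 - e3 := by linarith
      rw [this]; nlinarith [sq_nonneg (e1 + e3), sq_nonneg e2, sq_nonneg e3, sq_nonneg e0, sq_nonneg e1]
  -- remaining case: F = (b, 1-b, 1-b, b)
  by_cases c1 : F0 = F1 ∨ F2 = F3
  · exact (min_le_left _ _).trans (keyX c1)
  · have hb : (F1 - F0) * (F3 - F2) = -1 ∨ F0 = F2 := by
      rcases h0 with rfl | rfl <;> rcases h1 with rfl | rfl <;> rcases h2 with rfl | rfl <;>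
        rcases h3 with rfl | rfl <;> first | (norm_num; done) | exact absurd (by norm_num) c1
    rcases hb with hb | hb
    · refine (min_le_left _ _).trans ?_
      have hX1 : X = (F1 - F0) + (e0 - e1) := by linarith
      have hX2 : X = (F3 - F2) + (e2 - e3) := by linarith
      have : (X - (e0 - e1)) * (X - (e2 - e3)) = -1 := by
        rw [← hb]; congr 1 <;> linarith
      nlinarith [sq_nonneg (e0 + e1), sq_nonneg (e2 + e3), sq_nonneg (e0 - e1 + e2 - e3),
        sq_nonneg (X - (e0 - e1) - (e2 - e3)), sq_nonneg (e0 - e1 - e2 + e3),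
        sq_nonneg (X - (e0 - e1 + e2 - e3))]
    · exact (min_le_right _ _).trans (keyY (Or.inl hb))

lemma reps_partner (π : Fin n → Fin n) (hπ : Function.Involutive π) {S : Finset (Fin n)}
    (hS : S ⊆ reps π) : ∀ t ∈ S, π t ∉ S := by
  intro t ht h
  exact (reps_ne π hπ (hS h) (hS ht) (reps_self_ne π (hS ht)).symm).2.1 rfl

lemma min_bound (c0 : ℝ) (c : Fin n → Fin ℓ → ℝ) (F : (Fin n → Fin ℓ) → ℝ)
    (hF : booleanOn ℓ n κ F) (π : Fin n → Fin n) (hπ : Function.Involutive π)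
    {S T : Finset (Fin n)} (hS : S ⊆ reps π) (hT : T ⊆ reps π) (hd : Disjoint S T) :
    msExp ℓ n κ (fun u => min (xs c π S u ^ 2) (xs c π T u ^ 2)) ≤
      16 * msExp ℓ n κ (fun u => (F u - (c0 + lin c u)) ^ 2) := by
  set e : (Fin n → Fin ℓ) → ℝ := fun u => (F u - (c0 + lin c u)) ^ 2 with he
  have hST : S ∪ T ⊆ reps π := Finset.union_subset hS hT
  let q : Finset (Fin n) → Equiv.Perm (Fin n) := fun S => (pinv_inv π hπ S).toPerm
  calc msExp ℓ n κ (fun u => min (xs c π S u ^ 2) (xs c π T u ^ 2))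
      ≤ msExp ℓ n κ (fun u => 4 * (((e u + e (u ∘ q S)) + e (u ∘ q T)) + e (u ∘ q (S ∪ T)))) := by
        apply ms_mono
        intro u hu
        have l1 := lin_pinv c π hπ S (reps_partner π hπ hS) u
        have l2 := lin_pinv c π hπ T (reps_partner π hπ hT) u
        have l3 := lin_pinv c π hπ (S ∪ T) (reps_partner π hπ hST) u
        rw [Finset.sum_union hd] at l3
        refine four_points (F u) (F (u ∘ q S)) (F (u ∘ q T)) (F (u ∘ q (S ∪ T)))
          _ _ _ _ (c0 + lin c u) (xs c π S u) (xs c π T u) (hF _ hu)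
          (hF _ (mem_ms_comp _ _ hu)) (hF _ (mem_ms_comp _ _ hu)) (hF _ (mem_ms_comp _ _ hu))
          rfl ?_ ?_ ?_
        · change _ = F (u ∘ q S) - (c0 + lin c (u ∘ pinv π S))
          rw [l1]; unfold xs; ring
        · change _ = F (u ∘ q T) - (c0 + lin c (u ∘ pinv π T))
          rw [l2]; unfold xs; ring
        · change _ = F (u ∘ q (S ∪ T)) - (c0 + lin c (u ∘ pinv π (S ∪ T)))
          rw [l3]; unfold xs; ring
    _ = 16 * msExp ℓ n κ e := by
        rw [ms_smul, ms_add, ms_add, ms_add, ms_perm, ms_perm, ms_perm]; ring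

lemma bipart {θ : ℝ} (hne : (multislice ℓ n κ).Nonempty) (hθ : 0 < θ) (hn : 0 < n)
    (hκ : ∀ a, θ * n + 3 ≤ (κ a : ℝ)) (c0 : ℝ) (c : Fin n → Fin ℓ → ℝ) (F : (Fin n → Fin ℓ) → ℝ)
    (hF : booleanOn ℓ n κ F) (π : Fin n → Fin n) (hπ : Function.Involutive π)
    {S T : Finset (Fin n)} (hS : S ⊆ reps π) (hT : T ⊆ reps π) (hd : Disjoint S T)
    (ε : ℝ) (hε : msExp ℓ n κ (fun u => (F u - (c0 + lin c u)) ^ 2) = ε) :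
    min (ws c π S) (ws c π T) ≤ 384 * ε / θ ^ 8 := by
  have h1 := min_bound c0 c F hF π hπ hS hT hd
  rw [hε] at h1
  have hε0 : 0 ≤ ε := by rw [← hε]; exact ms_nonneg fun u _ => sq_nonneg _
  have h2 := xs_prod_low hne hθ.le hn hκ c π hπ hS hT hd
  have i1 : ∀ t ∈ S, ∀ u, xs c π T (u ∘ Equiv.swap t (π t)) ^ 2 = xs c π T u ^ 2 := by
    intro t ht u
    rw [xs_swap_not_mem c π hπ hT (Finset.disjoint_left.mp hd ht) (hS ht)]
  have i2 : ∀ t ∈ T, ∀ u, xs c π S (u ∘ Equiv.swap t (π t)) ^ 2 = xs c π S u ^ 2 := by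
    intro t ht u
    rw [xs_swap_not_mem c π hπ hS (Finset.disjoint_right.mp hd ht) (hT ht)]
  have h3 := xs_four_le (κ := κ) c π hπ hS (fun u => xs c π T u ^ 2) (fun u => sq_nonneg _) i1
  have h4 := xs_four_le (κ := κ) c π hπ hT (fun u => xs c π S u ^ 2) (fun u => sq_nonneg _) i2
  have h5 : msExp ℓ n κ (fun u => xs c π S u ^ 2) ≤ ws c π S := by
    have := xs_sq_le (κ := κ) c π hπ hS (fun _ => 1) (fun _ => zero_le_one) (fun _ _ _ => rfl)
    rw [ms_one hne] at this
    simpa using this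
  have h6 : msExp ℓ n κ (fun u => xs c π T u ^ 2) ≤ ws c π T := by
    have := xs_sq_le (κ := κ) c π hπ hT (fun _ => 1) (fun _ => zero_le_one) (fun _ _ _ => rfl)
    rw [ms_one hne] at this
    simpa using this
  have a0 := ws_nonneg c π S
  have b0 := ws_nonneg c π T
  set A := ws c π S
  set B := ws c π T
  rcases a0.eq_or_lt with ha | ha
  · exact (min_le_left _ _).trans (by rw [← ha]; positivity)
  rcases b0.eq_or_lt with hb | hb
  · exact (min_le_right _ _).trans (by rw [← hb]; positivity)
  -- interpolation
  have h7 : ∀ M : ℝ, 0 < M → M * (θ ^ 4 * (A * B)) ≤ M ^ 2 * (16 * ε) +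
      3 * (A * B) * (A + B) := by
    intro M hM
    have k1 : M * msExp ℓ n κ (fun u => xs c π S u ^ 2 * xs c π T u ^ 2) ≤
        M ^ 2 * msExp ℓ n κ (fun u => min (xs c π S u ^ 2) (xs c π T u ^ 2)) +
        (msExp ℓ n κ (fun u => xs c π S u ^ 4 * xs c π T u ^ 2) +
        msExp ℓ n κ (fun u => xs c π T u ^ 4 * xs c π S u ^ 2)) := by
      rw [← ms_smul, ← ms_smul, ← ms_add, ← ms_add]
      apply ms_mono
      intro u _
      rw [show xs c π S u ^ 4 = (xs c π S u ^ 2) ^ 2 by ring,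
        show xs c π T u ^ 4 = (xs c π T u ^ 2) ^ 2 by ring]
      have hx : 0 ≤ xs c π S u ^ 2 := sq_nonneg _
      have hy : 0 ≤ xs c π T u ^ 2 := sq_nonneg _
      generalize xs c π S u ^ 2 = x at *
      generalize xs c π T u ^ 2 = y at *
      have gen : ∀ x y : ℝ, 0 ≤ x → x ≤ y →
          M * (x * y) ≤ M ^ 2 * x + (x ^ 2 * y + y ^ 2 * x) := by
        intro x y hx hxy
        have e1 : 0 ≤ x * (M - y) ^ 2 := by positivity
        have e2 : 0 ≤ x ^ 2 * y := mul_nonneg (sq_nonneg _) (hx.trans hxy)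
        have e3 : 0 ≤ x * (M * y) := mul_nonneg hx (mul_nonneg hM.le (hx.trans hxy))
        nlinarith
      rcases le_total x y with h | h
      · rw [min_eq_left h]; exact gen x y hx h
      · rw [min_eq_right h]; have := gen y x hy h; linarith
    have k2 := mul_le_mul_of_nonneg_left h2 hM.le
    have k3 := mul_le_mul_of_nonneg_left h1 (sq_nonneg M)
    have k4 := mul_le_mul_of_nonneg_left h6 (by positivity : 0 ≤ 3 * A ^ 2)
    have k5 := mul_le_mul_of_nonneg_left h5 (by positivity : 0 ≤ 3 * B ^ 2)
    linarith
  have h8 := h7 (6 * (A + B) / θ ^ 4) (by positivity)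
  have e1 : 6 * (A + B) / θ ^ 4 * (θ ^ 4 * (A * B)) = 6 * (A + B) * (A * B) := by
    field_simp
  have e2 : (6 * (A + B) / θ ^ 4) ^ 2 * (16 * ε) = (A + B) * ((A + B) * (576 * ε / θ ^ 8)) := by
    field_simp; ring
  rw [e1, e2] at h8
  have h9 : (A + B) * (3 * (A * B)) ≤ (A + B) * ((A + B) * (576 * ε / θ ^ 8)) := by linarith
  have h10 := le_of_mul_le_mul_left h9 (by positivity)
  have h11 : 384 * ε / θ ^ 8 = (2 / 3) * (576 * ε / θ ^ 8) := by ring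
  rw [h11]
  set K := 576 * ε / θ ^ 8
  rcases le_total A B with h | h
  · rw [min_eq_left h]
    have : B * (3 * A) ≤ B * (2 * K) := by
      have : 0 ≤ K := by positivity
      nlinarith
    have := le_of_mul_le_mul_left this hb
    linarith
  · rw [min_eq_right h]
    have : A * (3 * B) ≤ A * (2 * K) := by
      have : 0 ≤ K := by positivity
      nlinarith
    have := le_of_mul_le_mul_left this ha
    linarith

/-- greedy lemma -/
lemma greedy {ι : Type*} [DecidableEq ι] (P : Finset ι) (w : ι → ℝ) (η : ℝ)
    (hη : 0 ≤ η)
    (h : ∀ S ⊆ P, min (∑ i ∈ S, w i) (∑ i ∈ P \ S, w i) ≤ η) :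
    (∑ i ∈ P, w i ≤ 2 * η) ∨ ∃ t ∈ P, ∑ i ∈ P.erase t, w i ≤ 2 * η := by
  by_cases hP : ∑ i ∈ P, w i ≤ η
  · left; linarith
  right
  push Not at hP
  obtain ⟨S, hS, hmin⟩ := Finset.exists_min_image (P.powerset.filter fun S => η < ∑ i ∈ S, w i)
    Finset.card ⟨P, by simp [hP]⟩
  simp only [Finset.mem_filter, Finset.mem_powerset] at hS hmin
  obtain ⟨hSP, hSη⟩ := hS
  have hSn : S.Nonempty := by
    by_contra h0
    rw [Finset.not_nonempty_iff_eq_empty] at h0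
    subst h0
    simp at hSη; linarith
  obtain ⟨t, ht⟩ := hSn
  refine ⟨t, hSP ht, ?_⟩
  have h1 : ∑ i ∈ S.erase t, w i ≤ η := by
    by_contra hc
    push Not at hc
    have := hmin (S.erase t) ⟨(Finset.erase_subset _ _).trans hSP, hc⟩
    have := Finset.card_erase_lt_of_mem ht
    omega
  have h2 : ∑ i ∈ P \ S, w i ≤ η := by
    rcases min_le_iff.mp (h S hSP) with h | h
    · linarith
    · exact h
  have e1 := Finset.sum_sdiff (f := w) hSP
  have e2 := Finset.add_sum_erase S w ht
  have e3 := Finset.add_sum_erase P w (hSP ht)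
  linarith

lemma sum_invol (w : Fin n → ℝ) (π : Fin n → Fin n) (hπ : Function.Involutive π)
    (hw : ∀ j, w (π j) = w j) (hfix : ∀ j, π j = j → w j = 0) :
    ∑ j, w j = 2 * ∑ j ∈ reps π, w j := by
  have h1 : ∀ j, w j = (if j < π j then w j else 0) + (if π j < π (π j) then w (π j) else 0) := by
    intro j
    rw [hπ j, hw j]
    rcases lt_trichotomy j (π j) with h | h | h
    · simp [h, h.le]
    · simp [hfix j h.symm]
    · simp [h, h.le]
  have h2 := Equiv.sum_comp (hπ.toPerm π) (fun j => if j < π j then w j else 0)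
  have h2' : ∑ j, (if π j < π (π j) then w (π j) else 0) = ∑ j, (if j < π j then w j else 0) := h2
  rw [Finset.sum_congr rfl fun j _ => h1 j, Finset.sum_add_distrib, h2', reps, Finset.sum_filter]
  ring

lemma matching {θ : ℝ} (hne : (multislice ℓ n κ).Nonempty) (hθ : 0 < θ) (hn : 0 < n)
    (hκ : ∀ a, θ * n + 3 ≤ (κ a : ℝ)) (c0 : ℝ) (c : Fin n → Fin ℓ → ℝ) (F : (Fin n → Fin ℓ) → ℝ)
    (hF : booleanOn ℓ n κ F) (π : Fin n → Fin n) (hπ : Function.Involutive π)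
    (ε : ℝ) (hε : msExp ℓ n κ (fun u => (F u - (c0 + lin c u)) ^ 2) = ε) :
    ∃ t, ∑ j, om c j (π j) ≤ 2 * om c t (π t) + 4 * (384 * ε / θ ^ 8) := by
  have hε0 : 0 ≤ ε := by rw [← hε]; exact ms_nonneg fun u _ => sq_nonneg _
  have h1 := greedy (reps π) (fun t => om c t (π t)) (384 * ε / θ ^ 8)
    (by positivity) (by
      intro S hS
      exact bipart hne hθ hn hκ c0 c F hF π hπ hS Finset.sdiff_subset Finset.disjoint_sdiff ε hε)
  have h2 := sum_invol (fun j => om c j (π j)) π hπ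
    (fun j => by simp only [hπ j]; exact om_comm _ _ _)
    (fun j hj => by simp only [hj]; exact om_self _ _)
  rw [h2]
  rcases h1 with h1 | ⟨t, ht, h1⟩
  · have := om_nonneg c ⟨0, hn⟩ (π ⟨0, hn⟩)
    exact ⟨⟨0, hn⟩, by linarith⟩
  · refine ⟨t, ?_⟩
    have := Finset.add_sum_erase (reps π) (fun t => om c t (π t)) ht
    linarith

lemma geom_rest (c : Fin n → Fin ℓ → ℝ) (η : ℝ)
    (hm : ∀ π : Fin n → Fin n, Function.Involutive π →
      ∃ t, ∑ j, om c j (π j) ≤ 2 * om c t (π t) + 4 * η)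
    (a b : Fin n) (hab : a ≠ b) (hmax : ∀ j k, om c j k ≤ om c a b)
    (hR : 0 < ((({a, b} : Finset (Fin n))ᶜ)).card) :
    ∃ k ∈ ({a, b} : Finset (Fin n))ᶜ, ∑ j ∈ ({a, b} : Finset (Fin n))ᶜ, om c j k ≤ 4 * η := by
  set R := (({a, b} : Finset (Fin n))ᶜ) with hRdef
  obtain ⟨N, hN⟩ : ∃ N, R.card = N := ⟨_, rfl⟩
  rw [hN] at hR
  have : NeZero N := ⟨hR.ne'⟩
  have haR : a ∉ R := by simp [hRdef]
  have hbR : b ∉ R := by simp [hRdef]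
  have hnR : ∀ j, j ∉ R → j = a ∨ j = b := by
    intro j hj; rw [hRdef, Finset.mem_compl, not_not] at hj; simpa using hj
  let e : {x // x ∈ R} ≃ Fin N := R.equivFinOfCardEq hN
  let π : Fin N → Fin n → Fin n := fun s j =>
    if h : j ∈ R then (e.symm (s - e ⟨j, h⟩)).1 else if j = a then b else a
  have hπR : ∀ s (x : {x // x ∈ R}), π s x.1 = (e.symm (s - e x)).1 := by
    intro s x; simp only [π]; rw [dif_pos x.2]
  have hπa : ∀ s, π s a = b := by intro s; simp only [π]; rw [dif_neg haR]; simp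
  have hπb : ∀ s, π s b = a := by
    intro s; simp only [π]; rw [dif_neg hbR, if_neg hab.symm]
  have hinv : ∀ s, Function.Involutive (π s) := by
    intro s j
    by_cases h : j ∈ R
    · have h1 := hπR s ⟨j, h⟩
      simp only at h1
      rw [h1, hπR]
      simp
    · rcases hnR j h with rfl | rfl
      · rw [hπa, hπb]
      · rw [hπb, hπa]
  have hs : ∀ s, ∑ x : {x // x ∈ R}, om c x.1 (e.symm (s - e x)).1 ≤ 4 * η := by
    intro s
    obtain ⟨t, ht⟩ := hm (π s) (hinv s)
    have h1 := hmax t (π s t)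
    have h2 : ∑ j, om c j (π s j) = om c a b + om c b a + ∑ j ∈ R, om c j (π s j) := by
      rw [← Finset.sum_add_sum_compl {a, b}, Finset.sum_pair hab, hπa, hπb]
    have h3 : ∑ j ∈ R, om c j (π s j) = ∑ x : {x // x ∈ R}, om c x.1 (e.symm (s - e x)).1 := by
      rw [← Finset.sum_coe_sort]
      exact Finset.sum_congr rfl fun x _ => by rw [hπR]
    rw [om_comm c b a] at h2
    linarith
  have htot : ∑ s : Fin N, ∑ x : {x // x ∈ R}, om c x.1 (e.symm (s - e x)).1 ≤
      ∑ s : Fin N, 4 * η := Finset.sum_le_sum fun s _ => hs s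
  have hre : ∑ s : Fin N, ∑ x : {x // x ∈ R}, om c x.1 (e.symm (s - e x)).1 =
      ∑ s : Fin N, ∑ x : {x // x ∈ R}, om c x.1 (e.symm s).1 := by
    rw [Finset.sum_comm, Finset.sum_comm (s := (univ : Finset (Fin N)))]
    refine Finset.sum_congr rfl fun x _ => ?_
    exact Equiv.sum_comp (Equiv.subRight (e x)) (fun s => om c x.1 (e.symm s).1)
  rw [hre] at htot
  obtain ⟨s, _, h⟩ := Finset.exists_le_of_sum_le ⟨0, mem_univ _⟩ htot
  refine ⟨(e.symm s).1, (e.symm s).2, ?_⟩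
  rw [← Finset.sum_coe_sort]
  exact h

lemma geom (hn : 4 ≤ n) (c : Fin n → Fin ℓ → ℝ) (η : ℝ) (hη : 0 ≤ η)
    (hm : ∀ π : Fin n → Fin n, Function.Involutive π →
      ∃ t, ∑ j, om c j (π j) ≤ 2 * om c t (π t) + 4 * η) :
    ∃ i k, ∑ j ∈ univ.erase i, om c j k ≤ 16 * η := by
  obtain ⟨⟨a, b⟩, hab, hmax'⟩ := Finset.exists_max_image
    ((univ : Finset (Fin n × Fin n)).filter fun p => p.1 ≠ p.2) (fun p => om c p.1 p.2)
    ⟨(⟨0, by omega⟩, ⟨1, by omega⟩), by simp⟩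
  simp only [Finset.mem_filter, Finset.mem_univ, true_and] at hab hmax'
  have hmax : ∀ j k, om c j k ≤ om c a b := by
    intro j k
    by_cases h : j = k
    · subst h; rw [om_self]; exact om_nonneg _ _ _
    · exact hmax' (j, k) h
  have hcard : (({a, b} : Finset (Fin n))ᶜ).card = n - 2 := by
    rw [Finset.card_compl, Finset.card_pair hab, Fintype.card_fin]
  obtain ⟨k, hk, hsum⟩ := geom_rest c η hm a b hab hmax (by omega)
  obtain ⟨r, hr, hrk⟩ := Finset.exists_mem_ne (by omega : 1 < (({a, b} : Finset (Fin n))ᶜ).card) k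
  have hrsum : om c r k ≤ 4 * η :=
    (Finset.single_le_sum (f := fun j => om c j k) (fun j _ => om_nonneg c j k) hr).trans hsum
  simp only [Finset.mem_compl, Finset.mem_insert, Finset.mem_singleton, not_or] at hk hr
  obtain ⟨hka, hkb⟩ := hk
  obtain ⟨hra, hrb⟩ := hr
  let π : Fin n → Fin n := fun j =>
    if j = a then k else if j = k then a else if j = b then r else if j = r then b else j
  have hπ : Function.Involutive π := by
    intro j; simp only [π]; grind
  have pa : π a = k := by simp [π]
  have pk : π k = a := by simp [π, hka]
  have pb : π b = r := by simp only [π]; grind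
  have pr : π r = b := by simp only [π]; grind
  have hor : om c a k ≤ 2 * η ∨ om c b r ≤ 2 * η := by
    obtain ⟨t, ht⟩ := hm π hπ
    have h1 : 2 * om c a k + 2 * om c b r ≤ ∑ j, om c j (π j) := by
      have : ∑ j ∈ ({a, k, b, r} : Finset (Fin n)), om c j (π j) ≤ ∑ j, om c j (π j) :=
        Finset.sum_le_sum_of_subset_of_nonneg (Finset.subset_univ _)
          (fun j _ _ => om_nonneg _ _ _)
      rw [Finset.sum_insert (by simp only [Finset.mem_insert, Finset.mem_singleton]; grind),
        Finset.sum_insert (by simp only [Finset.mem_insert, Finset.mem_singleton]; grind),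
        Finset.sum_insert (by simp only [Finset.mem_singleton]; grind),
        Finset.sum_singleton, pa, pk, pb, pr, om_comm c k a, om_comm c r b] at this
      linarith
    have n1 := om_nonneg c a k
    have n2 := om_nonneg c b r
    by_cases t1 : t = a
    · subst t1; rw [pa] at ht; right; linarith
    by_cases t2 : t = k
    · subst t2; rw [pk, om_comm c t a] at ht; right; linarith
    by_cases t3 : t = b
    · subst t3; rw [pb] at ht; left; linarith
    by_cases t4 : t = r
    · subst t4; rw [pr, om_comm c t b] at ht; left; linarith
    have : π t = t := by simp [π, t1, t2, t3, t4]
    rw [this, om_self] at ht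
    left; linarith
  have split : om c a k + om c b k + ∑ j ∈ ({a, b} : Finset (Fin n))ᶜ, om c j k
      = ∑ j, om c j k := by
    rw [← Finset.sum_add_sum_compl {a, b}, Finset.sum_pair hab]
  rcases hor with h | h
  · refine ⟨b, k, ?_⟩
    have := Finset.add_sum_erase univ (fun j => om c j k) (mem_univ b)
    linarith
  · refine ⟨a, k, ?_⟩
    have h1 := Finset.add_sum_erase univ (fun j => om c j k) (mem_univ a)
    have h2 := om_tri c b r k
    linarith

lemma structure_bound {θ : ℝ} (hne : (multislice ℓ n κ).Nonempty) (hθ : 0 < θ) (hn : 4 ≤ n)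
    (hκ : ∀ a, θ * n + 3 ≤ (κ a : ℝ)) (c0 : ℝ) (c : Fin n → Fin ℓ → ℝ) (F : (Fin n → Fin ℓ) → ℝ)
    (hF : booleanOn ℓ n κ F)
    (ε : ℝ) (hε : msExp ℓ n κ (fun u => (F u - (c0 + lin c u)) ^ 2) = ε) :
    ∃ (i : Fin n) (q : Fin ℓ → ℝ),
      msExp ℓ n κ (fun u => (c0 + lin c u - q (u i)) ^ 2) ≤ 6144 * ε / θ ^ 8 := by
  have hn0 : 0 < n := by omega
  have hε0 : 0 ≤ ε := by rw [← hε]; exact ms_nonneg fun u _ => sq_nonneg _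
  obtain ⟨i, k, hik⟩ := geom hn c (384 * ε / θ ^ 8) (by positivity)
    (fun π hπ => matching hne hθ hn0 hκ c0 c F hF π hπ ε hε)
  let d : Fin n → Fin ℓ → ℝ := fun j a => if j = i then 0 else c j a - c k a
  have hd : ∑ j, qf (d j) ≤ 6144 * ε / θ ^ 8 := by
    rw [← Finset.add_sum_erase univ _ (mem_univ i)]
    have h1 : qf (d i) = 0 := by simp [d, qf]
    have h2 : ∑ j ∈ univ.erase i, qf (d j) = ∑ j ∈ univ.erase i, om c j k := by
      refine Finset.sum_congr rfl fun j hj => ?_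
      simp only [d, if_neg (Finset.ne_of_mem_erase hj), om]
    rw [h1, h2, zero_add]
    refine hik.trans (le_of_eq ?_)
    ring
  have htot : tot d ≤ 4 * n * ∑ j, qf (d j) := by
    unfold tot
    calc ∑ j, ∑ k, om d j k ≤ ∑ j, ∑ k, (2 * qf (d j) + 2 * qf (d k)) :=
          Finset.sum_le_sum fun j _ => Finset.sum_le_sum fun k _ => qf_sub (d j) (d k)
      _ = _ := by
          simp only [Finset.sum_add_distrib, Finset.sum_const, Finset.card_univ, Fintype.card_fin,
            nsmul_eq_mul, ← Finset.mul_sum]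
          ring
  have hsm := second_moment_le hne hn0 d
  have hn' : (0:ℝ) < 4 * n := by positivity
  have hfin : msExp ℓ n κ (fun u => (lin d u - mu κ d) ^ 2) ≤ ∑ j, qf (d j) :=
    le_of_mul_le_mul_left (hsm.trans htot) hn'
  refine ⟨i, fun a => c0 + (c i a - c k a) + ∑ b, (κ b : ℝ) * c k b + mu κ d, ?_⟩
  refine le_trans (le_of_eq ?_) (hfin.trans hd)
  apply ms_congr
  intro u hu
  rw [← sum_color u hu (c k)]
  have : lin c u = lin d u + (c i (u i) - c k (u i)) + ∑ j, c k (u j) := by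
    unfold lin
    have : ∀ j, c j (u j) = d j (u j) + (if j = i then c i (u i) - c k (u i) else 0) + c k (u j) := by
      intro j
      simp only [d]
      by_cases h : j = i
      · subst h; simp
      · simp [h]
    rw [Finset.sum_congr rfl fun j _ => this j]
    simp [Finset.sum_add_distrib]
  rw [this]
  ring

lemma main_bound {θ : ℝ} (hne : (multislice ℓ n κ).Nonempty) (hθ : 0 < θ) (hθ1 : θ ≤ 1)
    (hn : 4 ≤ n)
    (hκ : ∀ a, θ * n + 3 ≤ (κ a : ℝ)) (c0 : ℝ) (c : Fin n → Fin ℓ → ℝ) (F : (Fin n → Fin ℓ) → ℝ)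
    (hF : booleanOn ℓ n κ F)
    (ε : ℝ) (hε : msExp ℓ n κ (fun u => (F u - (c0 + lin c u)) ^ 2) = ε) :
    ∃ g : (Fin n → Fin ℓ) → ℝ, booleanOn ℓ n κ g ∧ dictator ℓ n κ g ∧
        msExp ℓ n κ (fun u => if F u = g u then (0 : ℝ) else 1) ≤
          4 * ε + (384 / θ ^ 2 * (18 + 16 * (6144 / θ ^ 8)) ^ 2) * ε ^ 2 := by
  have hn0 : 0 < n := by omega
  have hε0 : 0 ≤ ε := by rw [← hε]; exact ms_nonneg fun u _ => sq_nonneg _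
  obtain ⟨i, q, hq⟩ := structure_bound hne hθ hn hκ c0 c F hF ε hε
  let r : Fin ℓ → ℝ := fun a => if 1 / 2 ≤ q a then 1 else 0
  have hr : ∀ a, r a = 0 ∨ r a = 1 := by
    intro a; simp only [r]; split_ifs <;> simp
  refine ⟨fun u => r (u i), fun u _ => hr _, ⟨i, fun u _ v _ h => by simp only [h]⟩, ?_⟩
  -- crude bound
  have h1 : msExp ℓ n κ (fun u => (F u - r (u i)) ^ 2) ≤ (8 + 8 * (6144 / θ ^ 8)) * ε := by
    calc msExp ℓ n κ (fun u => (F u - r (u i)) ^ 2)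
        ≤ msExp ℓ n κ (fun u => 8 * (F u - (c0 + lin c u)) ^ 2 +
          8 * (c0 + lin c u - q (u i)) ^ 2) := by
          apply ms_mono
          intro u hu
          have key : (F u - r (u i)) ^ 2 ≤ 4 * (F u - q (u i)) ^ 2 := by
            simp only [r]
            rcases hF u hu with h | h <;> rw [h] <;> split_ifs with h2 <;> nlinarith
          refine key.trans ?_
          nlinarith [sq_nonneg ((F u - (c0 + lin c u)) - (c0 + lin c u - q (u i)))]
      _ = 8 * ε + 8 * msExp ℓ n κ (fun u => (c0 + lin c u - q (u i)) ^ 2) := by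
          rw [ms_add, ms_smul, ms_smul, hε]
      _ ≤ 8 * ε + 8 * (6144 * ε / θ ^ 8) := by linarith
      _ = _ := by ring
  -- p - g is of degree one
  let c' : Fin n → Fin ℓ → ℝ := fun j a => c j a - (if j = i then r a else 0)
  have hc' : ∀ u, c0 + lin c' u = c0 + lin c u - r (u i) := by
    intro u
    simp only [lin, c', Finset.sum_sub_distrib]
    simp; ring
  have h2 : msExp ℓ n κ (fun u => (c0 + lin c' u) ^ 2) ≤ (18 + 16 * (6144 / θ ^ 8)) * ε := by
    calc msExp ℓ n κ (fun u => (c0 + lin c' u) ^ 2)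
        ≤ msExp ℓ n κ (fun u => 2 * (F u - (c0 + lin c u)) ^ 2 + 2 * (F u - r (u i)) ^ 2) := by
          apply ms_mono
          intro u _
          rw [hc']
          nlinarith [sq_nonneg ((F u - (c0 + lin c u)) + (F u - r (u i)))]
      _ = 2 * ε + 2 * msExp ℓ n κ (fun u => (F u - r (u i)) ^ 2) := by
          rw [ms_add, ms_smul, ms_smul, hε]
      _ ≤ _ := by linarith
  have h20 : 0 ≤ msExp ℓ n κ (fun u => (c0 + lin c' u) ^ 2) := ms_nonneg fun u _ => sq_nonneg _
  have h3 := fourth_full hne hθ hθ1 hn0 hκ c0 c'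
  have h4 : msExp ℓ n κ (fun u => (c0 + lin c' u) ^ 4) ≤
      24 / θ ^ 2 * ((18 + 16 * (6144 / θ ^ 8)) * ε) ^ 2 := by
    have h5 : 24 * (msExp ℓ n κ (fun u => (c0 + lin c' u) ^ 2)) ^ 2 ≤
      24 * ((18 + 16 * (6144 / θ ^ 8)) * ε) ^ 2 := by
      have := pow_le_pow_left₀ h20 h2 2
      linarith
    rw [div_mul_eq_mul_div, le_div_iff₀ (by positivity)]
    linarith
  calc msExp ℓ n κ (fun u => if F u = r (u i) then (0 : ℝ) else 1)
      ≤ msExp ℓ n κ (fun u => 4 * (F u - (c0 + lin c u)) ^ 2 + 16 * (c0 + lin c' u) ^ 4) := by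
        apply ms_mono
        intro u hu
        rw [hc']
        generalize c0 + lin c u = p
        split_ifs with h
        · positivity
        · have hs : (F u - r (u i)) ^ 2 = 1 := by
            rcases hF u hu with h1 | h1 <;> rcases hr (u i) with h2 | h2 <;> rw [h1, h2] at h ⊢ <;>
              first | (norm_num; done) | exact absurd rfl h
          have h5 : 1 ≤ 2 * (F u - p) ^ 2 + 2 * (p - r (u i)) ^ 2 := by
            nlinarith [sq_nonneg ((F u - p) - (p - r (u i)))]
          have : (p - r (u i)) ^ 4 = ((p - r (u i)) ^ 2) ^ 2 := by ring
          rw [this]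
          nlinarith [sq_nonneg (4 * (p - r (u i)) ^ 2 - 1)]
    _ = 4 * ε + 16 * msExp ℓ n κ (fun u => (c0 + lin c' u) ^ 4) := by
        rw [ms_add, ms_smul, ms_smul, hε]
    _ ≤ 4 * ε + 16 * (24 / θ ^ 2 * ((18 + 16 * (6144 / θ ^ 8)) * ε) ^ 2) := by linarith
    _ = _ := by ring

end helpers

/-- **FKN theorem for the multislice, Boolean form.**  If `F` is Boolean on a `ρ`-balanced
multislice and `‖F^{>1}‖² = ε` (expressed via the orthogonal projection `p = F^{≤1}` onto the
degree-one subspace), then `F` agrees with some Boolean dictator except with probability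
`4ε + Cε²`. -/
theorem fkn_multislice_boolean (ℓ : ℕ) (hℓ : 2 ≤ ℓ) (ρ : ℝ) (hρ : 0 < ρ) :
    ∃ (N : ℕ) (C : ℝ), ∀ n : ℕ, N ≤ n → ∀ κ : Fin ℓ → ℕ,
      (∀ i, 0 < κ i) → (∀ i, ρ * n ≤ (κ i : ℝ)) → (∑ i, κ i = n) →
      ∀ F : (Fin n → Fin ℓ) → ℝ, booleanOn ℓ n κ F →
      ∀ p : (Fin n → Fin ℓ) → ℝ, degreeOne ℓ n κ p →
      (∀ h : (Fin n → Fin ℓ) → ℝ, degreeOne ℓ n κ h →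
        msExp ℓ n κ (fun u => (F u - p u) * h u) = 0) →
      ∀ ε : ℝ, msExp ℓ n κ (fun u => (F u - p u) ^ 2) = ε →
      ∃ g : (Fin n → Fin ℓ) → ℝ, booleanOn ℓ n κ g ∧ dictator ℓ n κ g ∧
        msExp ℓ n κ (fun u => if F u = g u then (0 : ℝ) else 1) ≤ 4 * ε + C * ε ^ 2 := by
  refine ⟨max 4 ⌈6 / ρ⌉₊, 384 / (ρ / 2) ^ 2 * (18 + 16 * (6144 / (ρ / 2) ^ 8)) ^ 2, ?_⟩
  intro n hN κ hκ0 hκ hsum F hF p hp _ ε hε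
  have hn4 : 4 ≤ n := (le_max_left _ _).trans hN
  have hn6 : 6 / ρ ≤ n := (Nat.le_ceil _).trans (by exact_mod_cast (le_max_right _ _).trans hN)
  rw [div_le_iff₀ hρ] at hn6
  have hε0 : 0 ≤ ε := by rw [← hε]; exact ms_nonneg fun u _ => sq_nonneg _
  rcases (multislice ℓ n κ).eq_empty_or_nonempty with hem | hne
  · refine ⟨fun _ => 0, fun u _ => Or.inl rfl, ⟨⟨0, by omega⟩, fun _ _ _ _ _ => rfl⟩, ?_⟩
    have : msExp ℓ n κ (fun u => if F u = 0 then (0 : ℝ) else 1) = 0 := by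
      simp [msExp, hem]
    rw [this]; positivity
  have hκ' : ∀ a, ρ / 2 * n + 3 ≤ (κ a : ℝ) := by
    intro a
    have := hκ a
    linarith
  have hρ1 : ρ / 2 ≤ 1 := by
    have a0 : Fin ℓ := ⟨0, by omega⟩
    have h1 : κ a0 ≤ n := by
      rw [← hsum]
      exact Finset.single_le_sum (f := κ) (fun _ _ => Nat.zero_le _) (mem_univ a0)
    have h2 : (κ a0 : ℝ) ≤ n := by exact_mod_cast h1
    have h3 := hκ a0
    have hn' : (0:ℝ) < n := by
      have : 0 < n := by omega
      exact_mod_cast this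
    have : ρ * n ≤ 1 * n := by linarith
    have := le_of_mul_le_mul_right this hn'
    linarith
  obtain ⟨c0, c, hpc⟩ := hp
  refine main_bound hne (by positivity) hρ1 hn4 hκ' c0 c F hF ε ?_
  rw [← hε]
  apply ms_congr
  intro u hu
  rw [hpc u hu]
  have : lin c u = ∑ j, ∑ i, c j i * xvar ℓ n j i u := by
    unfold lin
    refine Finset.sum_congr rfl fun j _ => ?_
    simp [xvar]
  rw [this]
end
end

section
/- Fix an integer ℓ ≥ 2 and a parameter ρ > 0. There exist constants N = N(ℓ,ρ) and C = C(ℓ,ρ) such that for every ρ-balanced multislice M_κ on n ≥ N points and ℓ colours the following holds: if f : M_κ → ℝ is a degree-one function which satisfies E[dist(f,{0,1})²] = ε, then there exists a Boolean function g : M_κ → {0,1} depending on at most one coordinate such that E[(f−g)²] ≤ Cε. -/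
open Finset

noncomputable section

lemma ms_comp {ℓ n : ℕ} {κ : Fin ℓ → ℕ} (σ : Equiv.Perm (Fin n)) {u : Fin n → Fin ℓ}
    (hu : u ∈ multislice ℓ n κ) : u ∘ σ ∈ multislice ℓ n κ := by
  simp only [multislice, mem_filter, mem_univ, true_and] at hu ⊢
  intro i
  rw [← hu i]
  exact Finset.card_equiv σ (by intro j; simp)

lemma ms_sum_comp {ℓ n : ℕ} {κ : Fin ℓ → ℕ} (σ : Equiv.Perm (Fin n))
    (G : (Fin n → Fin ℓ) → ℝ) :
    ∑ u ∈ multislice ℓ n κ, G (u ∘ σ) = ∑ u ∈ multislice ℓ n κ, G u := by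
  refine Finset.sum_bij' (fun u _ => u ∘ σ) (fun u _ => u ∘ σ.symm) ?_ ?_ ?_ ?_ ?_
  · intro u hu; exact ms_comp σ hu
  · intro u hu; exact ms_comp σ.symm hu
  · intro u _; ext x; simp
  · intro u _; ext x; simp
  · intro u _; rfl

lemma ms_cond {ℓ n : ℕ} {κ : Fin ℓ → ℕ} (A : Finset (Fin n → Fin ℓ))
    (hA : A ⊆ multislice ℓ n κ) (T : Finset (Fin n))
    (hT : ∀ j k, j ∉ T → k ∉ T → ∀ u ∈ A, u ∘ Equiv.swap j k ∈ A) (j : Fin n) (hj : j ∉ T)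
    (a : Fin ℓ) :
    (A.card : ℝ) * ((κ a : ℝ) - T.card) ≤ n * ((A.filter (fun u => u j = a)).card : ℝ) := by
  have h1 : ∀ k ∈ Tᶜ, (A.filter (fun u => u k = a)).card = (A.filter (fun u => u j = a)).card := by
    intro k hk
    have hk : k ∉ T := by simpa using hk
    refine Finset.card_bij' (fun u _ => u ∘ Equiv.swap j k) (fun u _ => u ∘ Equiv.swap j k) ?_ ?_ ?_ ?_
    · intro u hu
      simp only [mem_filter] at hu ⊢
      exact ⟨hT j k hj hk u hu.1, by simp [hu.2]⟩
    · intro u hu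
      simp only [mem_filter] at hu ⊢
      exact ⟨hT j k hj hk u hu.1, by simp [hu.2]⟩
    · intro u _; ext x; simp
    · intro u _; ext x; simp
  have h2 : ∑ k ∈ Tᶜ, (A.filter (fun u => u k = a)).card
      = ∑ u ∈ A, (Tᶜ.filter (fun k => u k = a)).card := by
    simp only [Finset.card_filter]
    exact Finset.sum_comm
  have h3 : ∀ u ∈ A, (κ a : ℝ) - T.card ≤ ((Tᶜ.filter (fun k => u k = a)).card : ℝ) := by
    intro u hu
    have := hA hu
    simp only [multislice, mem_filter, mem_univ, true_and] at this
    have h4 := this a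
    have h5 : (univ.filter fun j => u j = a) ⊆ Tᶜ.filter (fun k => u k = a) ∪ T := by
      intro x hx
      simp at hx ⊢
      tauto
    have h6 := (Finset.card_le_card h5).trans (Finset.card_union_le _ _)
    rw [h4] at h6
    have : (κ a : ℝ) ≤ ((Tᶜ.filter (fun k => u k = a)).card : ℝ) + T.card := by exact_mod_cast h6
    linarith
  have h4 : (A.card : ℝ) * ((κ a : ℝ) - T.card) ≤
      ∑ u ∈ A, ((Tᶜ.filter (fun k => u k = a)).card : ℝ) := by
    rw [← nsmul_eq_mul]
    exact Finset.card_nsmul_le_sum _ _ _ h3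
  have h5 : ∑ u ∈ A, ((Tᶜ.filter (fun k => u k = a)).card : ℝ)
      = (Tᶜ.card : ℝ) * ((A.filter (fun u => u j = a)).card : ℝ) := by
    rw [Finset.sum_congr rfl h1, Finset.sum_const, smul_eq_mul] at h2
    exact_mod_cast h2.symm
  have h6 : (Tᶜ.card : ℝ) ≤ n := by
    have := Finset.card_le_univ Tᶜ
    rw [Fintype.card_fin] at this
    exact_mod_cast this
  rw [h5] at h4
  exact h4.trans (mul_le_mul_of_nonneg_right h6 (by positivity))

lemma ms_step {ℓ n : ℕ} {κ : Fin ℓ → ℕ} {ρ : ℝ} (hn : 6 ≤ ρ * n) (hn0 : 0 < n)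
    (hκ : ∀ i, ρ * n ≤ (κ i : ℝ)) (A : Finset (Fin n → Fin ℓ))
    (hA : A ⊆ multislice ℓ n κ) (T : Finset (Fin n)) (hT3 : T.card ≤ 3)
    (hT : ∀ j k, j ∉ T → k ∉ T → ∀ u ∈ A, u ∘ Equiv.swap j k ∈ A) (j : Fin n) (hj : j ∉ T)
    (a : Fin ℓ) :
    (A.card : ℝ) * (ρ / 2) ≤ ((A.filter (fun u => u j = a)).card : ℝ) ∧
    (A.filter (fun u => u j = a)) ⊆ multislice ℓ n κ ∧
    (∀ i k, i ∉ insert j T → k ∉ insert j T → ∀ u ∈ A.filter (fun u => u j = a),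
      u ∘ Equiv.swap i k ∈ A.filter (fun u => u j = a)) := by
  refine ⟨?_, (Finset.filter_subset _ _).trans hA, ?_⟩
  · have h := ms_cond A hA T hT j hj a
    have h3 : (T.card : ℝ) ≤ 3 := by exact_mod_cast hT3
    have h4 : ρ * n / 2 ≤ (κ a : ℝ) - T.card := by have := hκ a; linarith
    have h5 : (A.card : ℝ) * (ρ * n / 2) ≤ n * ((A.filter (fun u => u j = a)).card : ℝ) :=
      (mul_le_mul_of_nonneg_left h4 (by positivity)).trans h
    have hn' : (0 : ℝ) < n := by exact_mod_cast hn0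
    refine le_of_mul_le_mul_left ?_ hn'
    linarith
  · intro i k hi hk u hu
    simp only [mem_insert, not_or, mem_filter] at hi hk hu ⊢
    refine ⟨hT i k hi.2 hk.2 u hu.1, ?_⟩
    simp only [Function.comp]
    rw [Equiv.swap_apply_of_ne_of_ne (Ne.symm hi.1) (Ne.symm hk.1)]
    exact hu.2

lemma ms_prob4 {ℓ n : ℕ} {κ : Fin ℓ → ℕ} {ρ : ℝ} (hρ : 0 < ρ) (hn : 6 ≤ ρ * n) (hn0 : 0 < n)
    (hκ : ∀ i, ρ * n ≤ (κ i : ℝ)) (j₁ j₂ j₃ j₄ : Fin n) (h12 : j₁ ≠ j₂) (h13 : j₁ ≠ j₃)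
    (h14 : j₁ ≠ j₄) (h23 : j₂ ≠ j₃) (h24 : j₂ ≠ j₄) (h34 : j₃ ≠ j₄) (a b c d : Fin ℓ) :
    ((multislice ℓ n κ).card : ℝ) * (ρ / 2) ^ 4 ≤
      ∑ u ∈ multislice ℓ n κ, (if u j₁ = a ∧ u j₂ = b then (1 : ℝ) else 0) *
        (if u j₃ = c ∧ u j₄ = d then (1 : ℝ) else 0) := by
  obtain ⟨a1, a2, a3⟩ := ms_step hn hn0 hκ (multislice ℓ n κ) (Finset.Subset.refl _) ∅ (by simp)
    (fun j k _ _ u hu => ms_comp _ hu) j₁ (by simp) a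
  obtain ⟨b1, b2, b3⟩ := ms_step hn hn0 hκ _ a2 {j₁} (by simp) (by simpa using a3) j₂
    (by simpa using h12.symm) b
  obtain ⟨c1, c2, c3⟩ := ms_step hn hn0 hκ _ b2 {j₂, j₁} (by
      exact (Finset.card_insert_le _ _).trans (by simp)) (by simpa using b3) j₃
    (by simp [h13.symm, h23.symm]) c
  obtain ⟨d1, d2, d3⟩ := ms_step hn hn0 hκ _ c2 {j₃, j₂, j₁} (by
      exact Finset.card_le_three) (by simpa using c3) j₄
    (by simp [h14.symm, h24.symm, h34.symm]) d
  have key : ((multislice ℓ n κ).card : ℝ) * (ρ / 2) ^ 4 ≤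
      (((((multislice ℓ n κ).filter (fun u => u j₁ = a)).filter (fun u => u j₂ = b)).filter
        (fun u => u j₃ = c)).filter (fun u => u j₄ = d)).card := by
    have hr : 0 ≤ ρ / 2 := by positivity
    calc ((multislice ℓ n κ).card : ℝ) * (ρ / 2) ^ 4
        = ((((multislice ℓ n κ).card : ℝ) * (ρ / 2)) * (ρ / 2)) * (ρ/2) * (ρ/2) := by ring
      _ ≤ _ := by
        refine le_trans ?_ d1
        refine mul_le_mul_of_nonneg_right ?_ hr
        refine le_trans ?_ c1
        refine mul_le_mul_of_nonneg_right ?_ hr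
        refine le_trans ?_ b1
        refine mul_le_mul_of_nonneg_right ?_ hr
        exact a1
  refine key.trans (le_of_eq ?_)
  rw [Finset.filter_filter, Finset.filter_filter, Finset.filter_filter, Finset.card_filter]
  push_cast
  refine Finset.sum_congr rfl fun u _ => ?_
  by_cases ha : u j₁ = a <;> by_cases hb : u j₂ = b <;> by_cases hc : u j₃ = c <;>
    by_cases hd : u j₄ = d <;> simp [ha, hb, hc, hd]

lemma four_point (p X Y : ℝ) : min (X ^ 2) (Y ^ 2) ≤
    4 * (dist01 (p + X + Y) ^ 2 + dist01 (p + X - Y) ^ 2 + dist01 (p - X + Y) ^ 2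
      + dist01 (p - X - Y) ^ 2) := by
  have hd : ∀ x, 0 ≤ dist01 x := fun x => by unfold dist01; positivity
  obtain ⟨δ, hδ, h1, h2, h3, h4⟩ : ∃ δ : ℝ, (δ ^ 2 ≤ dist01 (p + X + Y) ^ 2 + dist01 (p + X - Y) ^ 2
      + dist01 (p - X + Y) ^ 2 + dist01 (p - X - Y) ^ 2) ∧ dist01 (p + X + Y) ≤ δ ∧
      dist01 (p + X - Y) ≤ δ ∧ dist01 (p - X + Y) ≤ δ ∧ dist01 (p - X - Y) ≤ δ := by
    refine ⟨Real.sqrt (dist01 (p + X + Y) ^ 2 + dist01 (p + X - Y) ^ 2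
      + dist01 (p - X + Y) ^ 2 + dist01 (p - X - Y) ^ 2), ?_, ?_, ?_, ?_, ?_⟩
    · rw [Real.sq_sqrt (by positivity)]
    all_goals
      apply Real.le_sqrt_of_sq_le
      nlinarith [sq_nonneg (dist01 (p + X + Y)), sq_nonneg (dist01 (p + X - Y)),
        sq_nonneg (dist01 (p - X + Y)), sq_nonneg (dist01 (p - X - Y))]
  have hδ0 : 0 ≤ δ := (hd _).trans h1
  have key : min |X| |Y| ≤ 2 * δ := by
    have hh : ∀ x, dist01 x ≤ δ → (-δ ≤ x ∧ x ≤ δ) ∨ (1 - δ ≤ x ∧ x ≤ 1 + δ) := by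
      intro x hx
      unfold dist01 at hx
      rcases min_le_iff.mp hx with h | h
      · left; exact abs_le.mp h
      · right; have := abs_le.mp h; constructor <;> linarith
    rw [min_le_iff, abs_le, abs_le]
    by_contra hcon
    rw [not_or, not_and_or, not_and_or] at hcon
    simp only [not_le] at hcon
    obtain ⟨hx, hy⟩ := hcon
    rcases hh _ h1 with ⟨_, _⟩ | ⟨_, _⟩ <;> rcases hh _ h2 with ⟨_, _⟩ | ⟨_, _⟩ <;>
    rcases hh _ h3 with ⟨_, _⟩ | ⟨_, _⟩ <;> rcases hh _ h4 with ⟨_, _⟩ | ⟨_, _⟩ <;>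
    rcases hx with hx | hx <;> rcases hy with hy | hy <;> linarith
  have : min (X ^ 2) (Y ^ 2) ≤ (2 * δ) ^ 2 := by
    rcases min_le_iff.mp key with h | h
    · refine (min_le_left _ _).trans ?_
      rw [← sq_abs]; exact pow_le_pow_left₀ (abs_nonneg _) h 2
    · refine (min_le_right _ _).trans ?_
      rw [← sq_abs Y]; exact pow_le_pow_left₀ (abs_nonneg _) h 2
  nlinarith

/-- Rademacher sum moments. -/
lemma rad_moments {ι : Type} [DecidableEq ι] (P : Finset ι) (d : ι → ℝ) :
    (∑ T ∈ P.powerset, (2 * ∑ k ∈ T, d k - ∑ k ∈ P, d k) ^ 2 = 2 ^ P.card * ∑ k ∈ P, d k ^ 2) ∧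
    (∑ T ∈ P.powerset, (2 * ∑ k ∈ T, d k - ∑ k ∈ P, d k) ^ 4
      ≤ 3 * 2 ^ P.card * (∑ k ∈ P, d k ^ 2) ^ 2) := by
  induction P using Finset.induction_on with
  | empty => simp
  | insert x P hx ih =>
    obtain ⟨ih1, ih2⟩ := ih
    have e : ∀ T ∈ P.powerset, ∑ k ∈ insert x T, d k = d x + ∑ k ∈ T, d k := by
      intro T hT
      rw [Finset.sum_insert]
      intro h; exact hx (Finset.mem_powerset.mp hT h)
    rw [Finset.sum_powerset_insert hx, Finset.sum_powerset_insert hx, Finset.sum_insert hx,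
      Finset.sum_insert hx, Finset.card_insert_of_notMem hx]
    rw [← Finset.sum_add_distrib, ← Finset.sum_add_distrib]
    constructor
    · have : ∀ T ∈ P.powerset, (2 * ∑ k ∈ T, d k - (d x + ∑ k ∈ P, d k)) ^ 2 +
          (2 * ∑ k ∈ insert x T, d k - (d x + ∑ k ∈ P, d k)) ^ 2 =
          2 * (2 * ∑ k ∈ T, d k - ∑ k ∈ P, d k) ^ 2 + 2 * d x ^ 2 := by
        intro T hT
        rw [e T hT]; ring
      rw [Finset.sum_congr rfl this, Finset.sum_add_distrib, ← Finset.mul_sum, ih1,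
        Finset.sum_const, Finset.card_powerset, nsmul_eq_mul]
      push_cast; ring
    · have : ∀ T ∈ P.powerset, (2 * ∑ k ∈ T, d k - (d x + ∑ k ∈ P, d k)) ^ 4 +
          (2 * ∑ k ∈ insert x T, d k - (d x + ∑ k ∈ P, d k)) ^ 4 =
          2 * (2 * ∑ k ∈ T, d k - ∑ k ∈ P, d k) ^ 4 +
          12 * d x ^ 2 * (2 * ∑ k ∈ T, d k - ∑ k ∈ P, d k) ^ 2 + 2 * d x ^ 4 := by
        intro T hT
        rw [e T hT]; ring
      rw [Finset.sum_congr rfl this, Finset.sum_add_distrib, Finset.sum_add_distrib,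
        ← Finset.mul_sum, ← Finset.mul_sum, ih1,
        Finset.sum_const, Finset.card_powerset, nsmul_eq_mul]
      push_cast
      have h4 : (0 : ℝ) ≤ 2 ^ P.card * d x ^ 4 := by positivity
      have h5 : (2 : ℝ) ^ (P.card + 1) = 2 * 2 ^ P.card := by ring
      rw [h5]
      nlinarith

lemma trunc_sum {Ω : Type} (s : Finset Ω) (X : Ω → ℝ) (A : ℝ) (hA : 0 < A)
    (h2 : ∑ ω ∈ s, X ω ^ 2 = s.card * A) (h4 : ∑ ω ∈ s, X ω ^ 4 ≤ 3 * s.card * A ^ 2) :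
    (s.card : ℝ) / 2 ≤ ∑ ω ∈ s, min (X ω ^ 2 / A) (3 / 2) := by
  have : ∀ ω ∈ s, X ω ^ 2 / A - X ω ^ 4 / A ^ 2 / 6 ≤ min (X ω ^ 2 / A) (3 / 2) := by
    intro ω _
    have e : X ω ^ 4 / A ^ 2 = (X ω ^ 2 / A) ^ 2 := by
      rw [div_pow]; ring
    rw [e]
    set t := X ω ^ 2 / A
    rw [le_min_iff]
    constructor <;> nlinarith [sq_nonneg t, sq_nonneg (t - 3)]
  refine le_trans ?_ (Finset.sum_le_sum this)
  rw [Finset.sum_sub_distrib, ← Finset.sum_div, ← Finset.sum_div, ← Finset.sum_div, h2]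
  have h6 : (∑ ω ∈ s, X ω ^ 4) / A ^ 2 ≤ 3 * s.card := by
    rw [div_le_iff₀ (by positivity)]; exact h4
  have h7 : (s.card : ℝ) * A / A = s.card := by field_simp
  rw [h7]; linarith

lemma min_sum {Ω₁ Ω₂ : Type} (s : Finset Ω₁) (t : Finset Ω₂) (X : Ω₁ → ℝ) (Y : Ω₂ → ℝ) (A B : ℝ)
    (hA : 0 ≤ A) (hB : 0 ≤ B)
    (h2 : ∑ ω ∈ s, X ω ^ 2 = s.card * A) (h4 : ∑ ω ∈ s, X ω ^ 4 ≤ 3 * s.card * A ^ 2)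
    (h2' : ∑ ω ∈ t, Y ω ^ 2 = t.card * B) (h4' : ∑ ω ∈ t, Y ω ^ 4 ≤ 3 * t.card * B ^ 2) :
    (s.card * t.card : ℝ) * min A B / 6 ≤ ∑ x ∈ s, ∑ y ∈ t, min (X x ^ 2) (Y y ^ 2) := by
  have hnn : 0 ≤ ∑ x ∈ s, ∑ y ∈ t, min (X x ^ 2) (Y y ^ 2) :=
    Finset.sum_nonneg fun x _ => Finset.sum_nonneg fun y _ => by positivity
  rcases hA.eq_or_lt with h | hA
  · rw [← h, min_eq_left hB]; simpa using hnn
  rcases hB.eq_or_lt with h | hB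
  · rw [← h, min_eq_right hA.le]; simpa using hnn
  have a := trunc_sum s X A hA h2 h4
  have b := trunc_sum t Y B hB h2' h4'
  have pt : ∀ x ∈ s, ∀ y ∈ t, min A B * (2 / 3) *
      (min (X x ^ 2 / A) (3 / 2) * min (Y y ^ 2 / B) (3 / 2)) ≤ min (X x ^ 2) (Y y ^ 2) := by
    intro x _ y _
    have ex : X x ^ 2 = A * (X x ^ 2 / A) := by field_simp
    have ey : Y y ^ 2 = B * (Y y ^ 2 / B) := by field_simp
    have tx : 0 ≤ X x ^ 2 / A := by positivity
    have ty : 0 ≤ Y y ^ 2 / B := by positivity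
    rw [le_min_iff]
    conv => enter [1, 2]; rw [ex]
    conv => enter [2, 2]; rw [ey]
    generalize X x ^ 2 / A = q at *
    generalize Y y ^ 2 / B = r at *
    have q0 : 0 ≤ min q (3 / 2) := by positivity
    have r0 : 0 ≤ min r (3 / 2) := by positivity
    have m0 : 0 ≤ min A B := by positivity
    constructor
    · calc min A B * (2 / 3) * (min q (3 / 2) * min r (3 / 2))
          ≤ A * (2 / 3) * (q * (3 / 2)) := by
            gcongr <;> simp
        _ = A * q := by ring
    · calc min A B * (2 / 3) * (min q (3 / 2) * min r (3 / 2))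
          ≤ B * (2 / 3) * ((3 / 2) * r) := by
            gcongr <;> simp
        _ = B * r := by ring
  refine le_trans ?_ (Finset.sum_le_sum fun x hx => Finset.sum_le_sum (pt x hx))
  simp_rw [← Finset.mul_sum]
  rw [← Finset.sum_mul]
  have : (s.card : ℝ) / 2 * (t.card / 2) ≤ (∑ ω ∈ s, min (X ω ^ 2 / A) (3 / 2)) *
      ∑ ω ∈ t, min (Y ω ^ 2 / B) (3 / 2) := by
    apply mul_le_mul a b (by positivity) (le_trans (by positivity) a)
  have m0 : 0 ≤ min A B := by positivity
  calc _ = min A B * (2 / 3) * ((s.card : ℝ) / 2 * (t.card / 2)) := by ring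
    _ ≤ _ := by gcongr

/-- Rademacher version -/
lemma rad_min {ι : Type} [DecidableEq ι] (P Q : Finset ι) (d : ι → ℝ) :
    (2 ^ P.card * 2 ^ Q.card : ℝ) * min (∑ k ∈ P, d k ^ 2) (∑ k ∈ Q, d k ^ 2) / 6 ≤
    ∑ S ∈ P.powerset, ∑ T ∈ Q.powerset, min ((2 * ∑ k ∈ S, d k - ∑ k ∈ P, d k) ^ 2)
      ((2 * ∑ k ∈ T, d k - ∑ k ∈ Q, d k) ^ 2) := by
  obtain ⟨p2, p4⟩ := rad_moments P d
  obtain ⟨q2, q4⟩ := rad_moments Q d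
  have := min_sum P.powerset Q.powerset (fun S => 2 * ∑ k ∈ S, d k - ∑ k ∈ P, d k)
    (fun S => 2 * ∑ k ∈ S, d k - ∑ k ∈ Q, d k) (∑ k ∈ P, d k ^ 2) (∑ k ∈ Q, d k ^ 2)
    (Finset.sum_nonneg fun _ _ => by positivity) (Finset.sum_nonneg fun _ _ => by positivity)
    (by simpa [Finset.card_powerset] using p2) (by simpa [Finset.card_powerset] using p4)
    (by simpa [Finset.card_powerset] using q2) (by simpa [Finset.card_powerset] using q4)
  simpa [Finset.card_powerset] using this

/-- Flip the boolean coordinate over the fibres in `T`. -/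
def flipPerm {ι : Type} [DecidableEq ι] (T : Finset ι) : Equiv.Perm (ι × Bool) :=
  Function.Involutive.toPerm (fun x => (x.1, if x.1 ∈ T then !x.2 else x.2)) (by
    rintro ⟨k, b⟩
    by_cases h : k ∈ T <;> simp [h])

lemma flipPerm_apply {ι : Type} [DecidableEq ι] (T : Finset ι) (k : ι) (b : Bool) :
    flipPerm T (k, b) = (k, if k ∈ T then !b else b) := rfl

/-- Change of the linear function by swapping a pair. -/
def dpair {ℓ n : ℕ} {ι : Type} (v : Fin n → Fin ℓ → ℝ) (e : ι × Bool ↪ Fin n)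
    (u : Fin n → Fin ℓ) (k : ι) : ℝ :=
  v (e (k, false)) (u (e (k, true))) + v (e (k, true)) (u (e (k, false)))
    - v (e (k, false)) (u (e (k, false))) - v (e (k, true)) (u (e (k, true)))

lemma flip_diff {ℓ n : ℕ} {ι : Type} [Fintype ι] [DecidableEq ι] (v : Fin n → Fin ℓ → ℝ)
    (e : ι × Bool ↪ Fin n) (u : Fin n → Fin ℓ) (T : Finset ι) :
    ∑ x, v x ((u ∘ (flipPerm T).viaFintypeEmbedding e) x) =
      ∑ x, v x (u x) + ∑ k ∈ T, dpair v e u k := by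
  have h1 : ∑ x, (v x ((u ∘ (flipPerm T).viaFintypeEmbedding e) x) - v x (u x)) =
      ∑ y : ι × Bool, (v (e y) (u (e (flipPerm T y))) - v (e y) (u (e y))) := by
    symm
    refine Fintype.sum_of_injective e e.injective _ _ ?_ ?_
    · intro x hx
      simp only [Function.comp]
      rw [Equiv.Perm.viaFintypeEmbedding_apply_notMem_range _ _ hx, sub_self]
    · intro y
      simp only [Function.comp]
      rw [Equiv.Perm.viaFintypeEmbedding_apply_image]
  rw [Finset.sum_sub_distrib] at h1
  have h2 : ∑ y : ι × Bool, (v (e y) (u (e (flipPerm T y))) - v (e y) (u (e y))) =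
      ∑ k ∈ T, dpair v e u k := by
    rw [Fintype.sum_prod_type, ← Finset.sum_filter_add_sum_filter_not univ (fun k => k ∈ T)]
    rw [Finset.filter_mem_eq_inter, Finset.univ_inter]
    have hz : ∑ x with x ∉ T, ∑ y : Bool, (v (e (x, y)) (u (e (flipPerm T (x, y)))) -
        v (e (x, y)) (u (e (x, y)))) = 0 := by
      refine Finset.sum_eq_zero fun k hk => ?_
      simp only [mem_filter, mem_univ, true_and] at hk
      simp [flipPerm_apply, hk]
    rw [hz, add_zero]
    refine Finset.sum_congr rfl fun k hk => ?_
    simp [flipPerm_apply, hk, dpair]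
    ring
  linarith

lemma star1 {ℓ n : ℕ} {κ : Fin ℓ → ℕ} {ι : Type} [Fintype ι] [DecidableEq ι] (c : ℝ)
    (v : Fin n → Fin ℓ → ℝ) (e : ι × Bool ↪ Fin n) (P Q : Finset ι) (hPQ : Disjoint P Q) :
    ∑ u ∈ multislice ℓ n κ, min (∑ k ∈ P, dpair v e u k ^ 2) (∑ k ∈ Q, dpair v e u k ^ 2) ≤
      384 * ∑ u ∈ multislice ℓ n κ, dist01 (c + ∑ x, v x (u x)) ^ 2 := by
  set F : (Fin n → Fin ℓ) → ℝ := fun u => c + ∑ x, v x (u x) with hF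
  set D := ∑ u ∈ multislice ℓ n κ, dist01 (F u) ^ 2 with hD
  set π : Finset ι → Equiv.Perm (Fin n) := fun T => (flipPerm T).viaFintypeEmbedding e with hπ
  have hFπ : ∀ u S T, S ⊆ P → T ⊆ Q → F (u ∘ π (S ∪ T)) =
      F u + ∑ k ∈ S, dpair v e u k + ∑ k ∈ T, dpair v e u k := by
    intro u S T hS hT
    have hd : Disjoint S T := Finset.disjoint_of_subset_left hS (Finset.disjoint_of_subset_right hT hPQ)
    simp only [hF, hπ]
    rw [flip_diff, Finset.sum_union hd]; ring
  have pt : ∀ u, ∀ S ∈ P.powerset, ∀ T ∈ Q.powerset,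
      min ((2 * ∑ k ∈ S, dpair v e u k - ∑ k ∈ P, dpair v e u k) ^ 2)
        ((2 * ∑ k ∈ T, dpair v e u k - ∑ k ∈ Q, dpair v e u k) ^ 2) ≤
      16 * (dist01 (F (u ∘ π (S ∪ T))) ^ 2 + dist01 (F (u ∘ π (S ∪ (Q \ T)))) ^ 2
        + dist01 (F (u ∘ π ((P \ S) ∪ T))) ^ 2 + dist01 (F (u ∘ π ((P \ S) ∪ (Q \ T)))) ^ 2) := by
    intro u S hS T hT
    rw [Finset.mem_powerset] at hS hT
    rw [hFπ u S T hS hT, hFπ u S _ hS Finset.sdiff_subset, hFπ u _ T Finset.sdiff_subset hT,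
      hFπ u _ _ Finset.sdiff_subset Finset.sdiff_subset]
    have eP := Finset.sum_sdiff hS (f := fun k => dpair v e u k)
    have eQ := Finset.sum_sdiff hT (f := fun k => dpair v e u k)
    set a := ∑ k ∈ S, dpair v e u k
    set b := ∑ k ∈ T, dpair v e u k
    set a' := ∑ k ∈ P \ S, dpair v e u k
    set b' := ∑ k ∈ Q \ T, dpair v e u k
    rw [← eP, ← eQ]
    have := four_point (F u + (a + a') / 2 + (b + b') / 2) ((a - a') / 2) ((b - b') / 2)
    have e1 : F u + (a + a') / 2 + (b + b') / 2 + (a - a') / 2 + (b - b') / 2 = F u + a + b := by ring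
    have e2 : F u + (a + a') / 2 + (b + b') / 2 + (a - a') / 2 - (b - b') / 2 = F u + a + b' := by ring
    have e3 : F u + (a + a') / 2 + (b + b') / 2 - (a - a') / 2 + (b - b') / 2 = F u + a' + b := by ring
    have e4 : F u + (a + a') / 2 + (b + b') / 2 - (a - a') / 2 - (b - b') / 2 = F u + a' + b' := by ring
    rw [e1, e2, e3, e4] at this
    have e5 : (2 * a - (a' + a)) ^ 2 = 4 * ((a - a') / 2) ^ 2 := by ring
    have e6 : (2 * b - (b' + b)) ^ 2 = 4 * ((b - b') / 2) ^ 2 := by ring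
    rw [e5, e6, ← mul_min_of_nonneg _ _ (by norm_num : (0 : ℝ) ≤ 4)]
    linarith
  have hinv : ∀ T, ∑ u ∈ multislice ℓ n κ, dist01 (F (u ∘ π T)) ^ 2 = D :=
    fun T => ms_sum_comp (π T) (fun u => dist01 (F u) ^ 2)
  have up : ∑ u ∈ multislice ℓ n κ, ∑ S ∈ P.powerset, ∑ T ∈ Q.powerset,
      min ((2 * ∑ k ∈ S, dpair v e u k - ∑ k ∈ P, dpair v e u k) ^ 2)
        ((2 * ∑ k ∈ T, dpair v e u k - ∑ k ∈ Q, dpair v e u k) ^ 2) ≤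
        2 ^ P.card * 2 ^ Q.card * (64 * D) := by
    rw [Finset.sum_comm]
    have : ∀ S ∈ P.powerset, ∑ u ∈ multislice ℓ n κ, ∑ T ∈ Q.powerset,
      min ((2 * ∑ k ∈ S, dpair v e u k - ∑ k ∈ P, dpair v e u k) ^ 2)
        ((2 * ∑ k ∈ T, dpair v e u k - ∑ k ∈ Q, dpair v e u k) ^ 2) ≤ 2 ^ Q.card * (64 * D) := by
      intro S hS
      rw [Finset.sum_comm]
      have : ∀ T ∈ Q.powerset, ∑ u ∈ multislice ℓ n κ,
        min ((2 * ∑ k ∈ S, dpair v e u k - ∑ k ∈ P, dpair v e u k) ^ 2)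
        ((2 * ∑ k ∈ T, dpair v e u k - ∑ k ∈ Q, dpair v e u k) ^ 2) ≤ 64 * D := by
        intro T hT
        refine (Finset.sum_le_sum fun u _ => pt u S hS T hT).trans ?_
        rw [← Finset.mul_sum, Finset.sum_add_distrib, Finset.sum_add_distrib,
          Finset.sum_add_distrib, hinv, hinv, hinv, hinv]
        linarith
      refine (Finset.sum_le_sum this).trans ?_
      rw [Finset.sum_const, Finset.card_powerset, nsmul_eq_mul]
      push_cast; exact le_rfl
    refine (Finset.sum_le_sum this).trans ?_
    rw [Finset.sum_const, Finset.card_powerset, nsmul_eq_mul]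
    push_cast; rw [mul_assoc]
  have lo := Finset.sum_le_sum fun u (_ : u ∈ multislice ℓ n κ) => rad_min P Q (dpair v e u)
  have h := lo.trans up
  rw [← Finset.sum_div, ← Finset.mul_sum] at h
  have hp : (0 : ℝ) < 2 ^ P.card * 2 ^ Q.card := by positivity
  have h' : (2 ^ P.card * 2 ^ Q.card : ℝ) * ∑ u ∈ multislice ℓ n κ,
      min (∑ k ∈ P, dpair v e u k ^ 2) (∑ k ∈ Q, dpair v e u k ^ 2) ≤
      (2 ^ P.card * 2 ^ Q.card : ℝ) * (384 * D) := by linarith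
  exact le_of_mul_le_mul_left h' hp

/-- squared distance between coefficient vectors -/
def sdist {ℓ n : ℕ} (v : Fin n → Fin ℓ → ℝ) (j k : Fin n) : ℝ := ∑ b, (v j b - v k b) ^ 2

lemma star2 {ℓ n : ℕ} {κ : Fin ℓ → ℕ} {ρ : ℝ} (hρ : 0 < ρ) (hn : 6 ≤ ρ * n) (hn0 : 0 < n)
    (hκ : ∀ i, ρ * n ≤ (κ i : ℝ)) {ι : Type} [Fintype ι] [DecidableEq ι] (c : ℝ)
    (v : Fin n → Fin ℓ → ℝ) (z : Fin ℓ) (hz : ∀ j, v j z = 0)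
    (e : ι × Bool ↪ Fin n) (P Q : Finset ι) (hPQ : Disjoint P Q) :
    ((multislice ℓ n κ).card : ℝ) * (ρ / 2) ^ 4 *
      min (∑ k ∈ P, sdist v (e (k, false)) (e (k, true)))
        (∑ k ∈ Q, sdist v (e (k, false)) (e (k, true))) ≤
      384 * ∑ u ∈ multislice ℓ n κ, dist01 (c + ∑ x, v x (u x)) ^ 2 := by
  refine le_trans ?_ (star1 c v e P Q hPQ)
  set M := ((multislice ℓ n κ).card : ℝ) with hM
  set s : ι → Fin ℓ → ℝ := fun k b => (v (e (k, false)) b - v (e (k, true)) b) ^ 2 with hs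
  have hs0 : ∀ k b, 0 ≤ s k b := fun k b => sq_nonneg _
  set I : ι → Fin ℓ → (Fin n → Fin ℓ) → ℝ := fun k b u =>
    if u (e (k, false)) = z ∧ u (e (k, true)) = b then 1 else 0 with hI
  have hI0 : ∀ k b u, 0 ≤ I k b u := by intro k b u; simp only [hI]; split_ifs <;> norm_num
  have hI1 : ∀ k b u, I k b u ≤ 1 := by intro k b u; simp only [hI]; split_ifs <;> norm_num
  set Z : Finset ι → (Fin n → Fin ℓ) → ℝ := fun R u => ∑ k ∈ R, ∑ b, s k b * I k b u with hZ
  set S : Finset ι → ℝ := fun R => ∑ k ∈ R, sdist v (e (k, false)) (e (k, true)) with hS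
  have hSs : ∀ R, S R = ∑ k ∈ R, ∑ b, s k b := fun R => rfl
  have hZ0 : ∀ R u, 0 ≤ Z R u := fun R u => Finset.sum_nonneg fun k _ => Finset.sum_nonneg
    fun b _ => mul_nonneg (hs0 k b) (hI0 k b u)
  have hS0 : ∀ R, 0 ≤ S R := fun R => by
    rw [hSs]; exact Finset.sum_nonneg fun k _ => Finset.sum_nonneg fun b _ => hs0 k b
  have hZS : ∀ R u, Z R u ≤ S R := by
    intro R u
    rw [hSs]
    refine Finset.sum_le_sum fun k _ => Finset.sum_le_sum fun b _ => ?_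
    exact mul_le_of_le_one_right (hs0 k b) (hI1 k b u)
  have hZW : ∀ R u, Z R u ≤ ∑ k ∈ R, dpair v e u k ^ 2 := by
    intro R u
    refine Finset.sum_le_sum fun k _ => ?_
    by_cases h : u (e (k, false)) = z
    · simp only [hI, h, true_and, mul_ite, mul_one, mul_zero]
      rw [Finset.sum_ite_eq]
      simp only [mem_univ, if_true, hs, dpair, h, hz]
      apply le_of_eq; ring
    · simp only [hI, h, false_and, if_false, mul_zero, Finset.sum_const_zero]
      positivity
  have hlow : M * (ρ / 2) ^ 4 * (S P * S Q) ≤ ∑ u ∈ multislice ℓ n κ, Z P u * Z Q u := by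
    have e1 : ∑ u ∈ multislice ℓ n κ, Z P u * Z Q u = ∑ k ∈ P, ∑ k' ∈ Q, ∑ b, ∑ b',
        s k b * s k' b' * ∑ u ∈ multislice ℓ n κ, I k b u * I k' b' u := by
      simp only [hZ, Finset.sum_mul_sum]
      rw [Finset.sum_comm]
      refine Finset.sum_congr rfl fun k _ => ?_
      rw [Finset.sum_comm]
      refine Finset.sum_congr rfl fun k' _ => ?_
      rw [Finset.sum_comm]
      refine Finset.sum_congr rfl fun b _ => ?_
      rw [Finset.sum_comm]
      refine Finset.sum_congr rfl fun b' _ => ?_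
      rw [Finset.mul_sum]
      refine Finset.sum_congr rfl fun u _ => ?_
      ring
    have e2 : M * (ρ / 2) ^ 4 * (S P * S Q) = ∑ k ∈ P, ∑ k' ∈ Q, ∑ b, ∑ b',
        s k b * s k' b' * (M * (ρ / 2) ^ 4) := by
      simp only [hSs, Finset.sum_mul_sum]
      rw [mul_comm]
      simp only [Finset.sum_mul]
    rw [e1, e2]
    refine Finset.sum_le_sum fun k hk => Finset.sum_le_sum fun k' hk' =>
      Finset.sum_le_sum fun b _ => Finset.sum_le_sum fun b' _ => ?_
    refine mul_le_mul_of_nonneg_left ?_ (mul_nonneg (hs0 _ _) (hs0 _ _))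
    have hkk : k ≠ k' := fun h => Finset.disjoint_left.mp hPQ hk (h ▸ hk')
    refine ms_prob4 hρ hn hn0 hκ _ _ _ _ ?_ ?_ ?_ ?_ ?_ ?_ z b z b' <;>
      · intro h
        have := e.injective h
        simp [hkk] at this
  have hup : ∑ u ∈ multislice ℓ n κ, Z P u * Z Q u ≤ max (S P) (S Q) * ∑ u ∈ multislice ℓ n κ,
      min (∑ k ∈ P, dpair v e u k ^ 2) (∑ k ∈ Q, dpair v e u k ^ 2) := by
    rw [Finset.mul_sum]
    refine Finset.sum_le_sum fun u _ => ?_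
    have h1 : Z P u * Z Q u = max (Z P u) (Z Q u) * min (Z P u) (Z Q u) := (max_mul_min _ _).symm
    rw [h1]
    exact mul_le_mul (max_le_max (hZS P u) (hZS Q u)) (min_le_min (hZW P u) (hZW Q u))
      (le_min (hZ0 P u) (hZ0 Q u)) (le_max_of_le_left (hS0 P))
  have h := hlow.trans hup
  rw [← max_mul_min (S P) (S Q)] at h
  rcases (le_max_of_le_left (hS0 P) : 0 ≤ max (S P) (S Q)).eq_or_lt with h0 | h0
  · have hm : min (S P) (S Q) ≤ 0 := (min_le_max).trans h0.symm.le
    have hm' : min (S P) (S Q) = 0 := le_antisymm hm (le_min (hS0 P) (hS0 Q))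
    show M * (ρ / 2) ^ 4 * min (S P) (S Q) ≤ _
    rw [hm', mul_zero]
    exact Finset.sum_nonneg fun u _ => le_min (Finset.sum_nonneg fun _ _ => sq_nonneg _)
      (Finset.sum_nonneg fun _ _ => sq_nonneg _)
  · refine le_of_mul_le_mul_left ?_ h0
    show max (S P) (S Q) * (M * (ρ / 2) ^ 4 * min (S P) (S Q)) ≤ _
    linarith

lemma exists_perm_two {n : ℕ} {i j a b : Fin n} (hij : i ≠ j) (hab : a ≠ b) :
    ∃ τ : Equiv.Perm (Fin n), τ i = a ∧ τ j = b := by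
  have h : Equiv.swap i a j ≠ a := by
    intro h
    have : Equiv.swap i a j = Equiv.swap i a i := by rw [h, Equiv.swap_apply_left]
    exact hij ((Equiv.swap i a).injective this).symm
  refine ⟨(Equiv.swap i a).trans (Equiv.swap (Equiv.swap i a j) b), ?_, ?_⟩
  · rw [Equiv.trans_apply, Equiv.swap_apply_left, Equiv.swap_apply_of_ne_of_ne h.symm hab]
  · rw [Equiv.trans_apply, Equiv.swap_apply_left]

lemma avg_perm {n : ℕ} (F : Fin n → Fin n → ℝ) (hF : ∀ j, F j j = 0) (i j : Fin n) (hij : i ≠ j) :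
    (n * n - n : ℝ) * ∑ σ : Equiv.Perm (Fin n), F (σ i) (σ j) =
      (Fintype.card (Equiv.Perm (Fin n)) : ℝ) * ∑ a, ∑ b, F a b := by
  have h1 : ∀ x ∈ (univ : Finset (Fin n)).offDiag, ∑ σ : Equiv.Perm (Fin n), F (σ x.1) (σ x.2) =
      ∑ σ : Equiv.Perm (Fin n), F (σ i) (σ j) := by
    rintro ⟨a, b⟩ hx
    have hab : a ≠ b := by simpa using hx
    obtain ⟨τ, h1, h2⟩ := exists_perm_two hij hab
    simp only
    rw [← h1, ← h2]
    exact Equiv.sum_comp (Equiv.mulRight τ) (fun σ : Equiv.Perm (Fin n) => F (σ i) (σ j))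
  have h2 : ∀ σ : Equiv.Perm (Fin n), ∑ x ∈ (univ : Finset (Fin n)).offDiag, F (σ x.1) (σ x.2)
      = ∑ a, ∑ b, F a b := by
    intro σ
    have e : ∀ G : Fin n → Fin n → ℝ, (∀ j, G j j = 0) →
        ∑ x ∈ (univ : Finset (Fin n)).offDiag, G x.1 x.2 = ∑ a, ∑ b, G a b := by
      intro G hG
      rw [← Fintype.sum_prod_type']
      refine Finset.sum_subset (Finset.subset_univ _) ?_
      rintro ⟨a, b⟩ _ hx
      have : a = b := by simpa using hx
      subst this
      exact hG a
    rw [e (fun a b => F (σ a) (σ b)) (fun j => hF _)]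
    rw [Equiv.sum_comp σ (fun a => ∑ b, F a (σ b))]
    refine Finset.sum_congr rfl fun a _ => ?_
    exact Equiv.sum_comp σ (fun b => F a b)
  have h3 := Finset.sum_congr rfl h1
  rw [Finset.sum_const, Finset.offDiag_card, Finset.sum_comm, Finset.sum_congr rfl (fun σ _ => h2 σ),
    Finset.sum_const, nsmul_eq_mul, nsmul_eq_mul] at h3
  simp only [Finset.card_univ, Fintype.card_fin] at h3
  rw [Nat.cast_sub (Nat.le_mul_self n)] at h3
  push_cast at h3
  exact h3.symm

/-- The standard pairing of `Fin n`. -/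
def stdPair (n : ℕ) : Fin (n / 2) × Bool ↪ Fin n where
  toFun x := ⟨2 * x.1 + (if x.2 then 1 else 0), by
    have := x.1.2; split_ifs <;> omega⟩
  inj' := by
    rintro ⟨⟨i, hi⟩, b⟩ ⟨⟨j, hj⟩, b'⟩ h
    simp only [Fin.mk.injEq] at h
    cases b <;> cases b' <;> simp at h ⊢ <;> omega

lemma pigeon {n : ℕ} (hn : 4 ≤ n) (s : Fin n → Fin n → ℝ) (hs0 : ∀ j, s j j = 0)
    (T : Finset (Fin n)) (hT : n ≤ 2 * T.card) (K : ℝ) (hK : 0 ≤ K)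
    (H : ∀ σ : Equiv.Perm (Fin n), ∑ i : Fin (n / 2),
      (if σ (stdPair n (i, false)) ∈ T ∧ σ (stdPair n (i, true)) ∈ T then
        s (σ (stdPair n (i, false))) (σ (stdPair n (i, true))) else 0) ≤ K) :
    ∃ k ∈ T, ∑ j ∈ T, s j k ≤ 4 * K := by
  set F : Fin n → Fin n → ℝ := fun a b => if a ∈ T ∧ b ∈ T then s a b else 0 with hF
  have hF0 : ∀ j, F j j = 0 := by intro j; simp [hF, hs0]
  have h1 : ∀ i : Fin (n / 2), (n * n - n : ℝ) * ∑ σ : Equiv.Perm (Fin n),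
      F (σ (stdPair n (i, false))) (σ (stdPair n (i, true))) =
      (Fintype.card (Equiv.Perm (Fin n)) : ℝ) * ∑ a, ∑ b, F a b := by
    intro i
    exact avg_perm F hF0 _ _ (by intro h; simpa using (stdPair n).injective h)
  have h2 : ∑ σ : Equiv.Perm (Fin n), ∑ i : Fin (n / 2),
      F (σ (stdPair n (i, false))) (σ (stdPair n (i, true))) ≤
      (Fintype.card (Equiv.Perm (Fin n)) : ℝ) * K := by
    refine (Finset.sum_le_sum fun σ _ => H σ).trans ?_
    rw [Finset.sum_const, Finset.card_univ, nsmul_eq_mul]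
  rw [Finset.sum_comm] at h2
  have hn4 : (4 : ℝ) ≤ n := by exact_mod_cast hn
  have hnn : (0 : ℝ) ≤ n * n - n := by nlinarith
  have h3 := mul_le_mul_of_nonneg_left h2 hnn
  rw [Finset.mul_sum, Finset.sum_congr rfl (fun i _ => h1 i), Finset.sum_const, Finset.card_univ,
    Fintype.card_fin, nsmul_eq_mul] at h3
  have hc : (0 : ℝ) < (Fintype.card (Equiv.Perm (Fin n)) : ℝ) := by
    exact_mod_cast Fintype.card_pos
  have h4 : ((n / 2 : ℕ) : ℝ) * ∑ a, ∑ b, F a b ≤ (n * n - n) * K := by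
    refine le_of_mul_le_mul_left ?_ hc
    linarith
  have hm : (n - 1 : ℝ) ≤ 2 * ((n / 2 : ℕ) : ℝ) := by
    have : n ≤ 2 * (n / 2) + 1 := by omega
    have : (n : ℝ) ≤ 2 * ((n / 2 : ℕ) : ℝ) + 1 := by exact_mod_cast this
    linarith
  have hm0 : (0 : ℝ) < ((n / 2 : ℕ) : ℝ) := by
    have : 0 < n / 2 := by omega
    exact_mod_cast this
  have h5 : ∑ a, ∑ b, F a b ≤ 2 * n * K := by
    refine le_of_mul_le_mul_left ?_ hm0
    refine h4.trans ?_
    have : 0 ≤ n * K := by positivity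
    nlinarith
  have h6 : ∑ a, ∑ b, F a b = ∑ k ∈ T, ∑ j ∈ T, s j k := by
    rw [Finset.sum_comm]
    rw [← Finset.sum_subset (Finset.subset_univ T)]
    · refine Finset.sum_congr rfl fun k hk => ?_
      rw [← Finset.sum_subset (Finset.subset_univ T)]
      · refine Finset.sum_congr rfl fun j hj => ?_
        simp [hF, hj, hk]
      · intro j _ hj; simp [hF, hj]
    · intro k _ hk; simp [hF, hk]
  rw [h6] at h5
  have hTne : T.Nonempty := by
    rw [← Finset.card_pos]; omega
  refine Finset.exists_le_of_sum_le hTne ?_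
  rw [Finset.sum_const, nsmul_eq_mul]
  refine h5.trans ?_
  have : (n : ℝ) ≤ 2 * T.card := by exact_mod_cast hT
  nlinarith

lemma greedy_s2 {ι : Type} [Fintype ι] [DecidableEq ι] (a : ι → ℝ) (η : ℝ) (hη : 0 ≤ η)
    (ha : ∀ k, a k ≤ η) (H : ∀ P : Finset ι, min (∑ k ∈ P, a k) (∑ k ∈ Pᶜ, a k) ≤ η) :
    ∑ k, a k ≤ 3 * η := by
  have key : ∀ P : Finset ι, ∑ k ∈ P, a k ≤ 2 * η ∨
      ∃ P' : Finset ι, η < ∑ k ∈ P', a k ∧ ∑ k ∈ P', a k ≤ 2 * η := by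
    intro P
    induction P using Finset.induction_on with
    | empty => left; simpa using hη
    | insert x P hx ih =>
      rcases ih with h | h
      · by_cases h' : ∑ k ∈ P, a k ≤ η
        · left; rw [Finset.sum_insert hx]; linarith [ha x]
        · right; exact ⟨P, not_le.mp h', h⟩
      · right; exact h
  rcases key univ with h | ⟨P, h1, h2⟩
  · linarith
  · have h3 : ∑ k ∈ Pᶜ, a k ≤ η := by
      rcases min_le_iff.mp (H P) with h | h
      · linarith
      · exact h
    rw [← Finset.sum_add_sum_compl P]; linarith

lemma determ {n : ℕ} (hn : 4 ≤ n) (s : Fin n → Fin n → ℝ) (hs0 : ∀ j, s j j = 0)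
    (hs : ∀ j k, 0 ≤ s j k) (htri : ∀ i j k, s i k ≤ 2 * s i j + 2 * s j k) (η : ℝ)
    (H : ∀ (ι : Type) [Fintype ι] [DecidableEq ι] (e : ι × Bool ↪ Fin n) (P : Finset ι),
      min (∑ k ∈ P, s (e (k, false)) (e (k, true))) (∑ k ∈ Pᶜ, s (e (k, false)) (e (k, true))) ≤ η) :
    ∃ jx k, ∑ j ∈ univ.erase jx, s j k ≤ 14 * η := by
  have hη : 0 ≤ η := by
    have h := H (Fin (n / 2)) (stdPair n) ∅
    refine le_trans (le_min ?_ ?_) h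
    · simp
    · exact Finset.sum_nonneg fun _ _ => hs _ _
  by_cases hall : ∀ j k, s j k ≤ η
  · obtain ⟨k, _, hk⟩ := pigeon hn s hs0 univ (by simp; omega) (3 * η) (by positivity) (by
      intro σ
      simp only [mem_univ, and_self, if_true]
      refine greedy_s2 _ η hη (fun k => hall _ _) ?_
      intro P
      exact H _ ((stdPair n).trans σ.toEmbedding) P)
    refine ⟨⟨0, by omega⟩, k, ?_⟩
    have : ∑ j ∈ univ.erase (⟨0, by omega⟩ : Fin n), s j k ≤ ∑ j, s j k :=
      Finset.sum_le_sum_of_subset_of_nonneg (Finset.erase_subset _ _) (fun _ _ _ => hs _ _)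
    linarith
  · push Not at hall
    obtain ⟨j0, j1, h01⟩ := hall
    have hne : j0 ≠ j1 := by
      rintro rfl; rw [hs0] at h01; linarith
    set T : Finset (Fin n) := (univ.erase j0).erase j1 with hT
    have hTm : ∀ x, x ∈ T ↔ x ≠ j1 ∧ x ≠ j0 := by intro x; simp [hT]
    have hTc : T.card = n - 1 - 1 := by
      rw [hT, Finset.card_erase_of_mem (by simp [hne.symm]), Finset.card_erase_of_mem (mem_univ _)]
      simp
    obtain ⟨k, hkT, hk⟩ := pigeon hn s hs0 T (by omega) η hη (by
      intro σ
      let J := {i : Fin (n / 2) // σ (stdPair n (i, false)) ∈ T ∧ σ (stdPair n (i, true)) ∈ T}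
      let e0 : Option J × Bool → Fin n := fun x =>
        match x with
        | (none, false) => j0
        | (none, true) => j1
        | (some i, b) => σ (stdPair n (i.1, b))
      have hmem : ∀ (i : J) b, σ (stdPair n (i.1, b)) ∈ T := by
        intro i b; cases b
        · exact i.2.1
        · exact i.2.2
      have he0 : Function.Injective e0 := by
        rintro ⟨_ | i, b⟩ ⟨_ | i', b'⟩ h
        · cases b <;> cases b' <;> simp [e0, hne, hne.symm] at h ⊢
        · have := (hTm _).mp (hmem i' b')
          cases b
          · exact absurd h.symm this.2
          · exact absurd h.symm this.1
        · have := (hTm _).mp (hmem i b)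
          cases b'
          · exact absurd h this.2
          · exact absurd h this.1
        · have h' : σ (stdPair n (i.1, b)) = σ (stdPair n (i'.1, b')) := by
            cases b <;> cases b' <;> exact h
          have := (stdPair n).injective (σ.injective h')
          simp only [Prod.mk.injEq] at this
          obtain ⟨h1, h2⟩ := this
          rw [h2, Subtype.ext h1]
      have h := H (Option J) ⟨e0, he0⟩ {none}
      rw [Finset.sum_singleton] at h
      have h' : ∑ k ∈ ({none} : Finset (Option J))ᶜ, s (e0 (k, false)) (e0 (k, true)) ≤ η := by
        rcases min_le_iff.mp h with h | h
        · exact absurd h (not_le.mpr h01)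
        · exact h
      have e1 : ∑ k : Option J, s (e0 (k, false)) (e0 (k, true)) = s j0 j1 +
          ∑ k ∈ ({none} : Finset (Option J))ᶜ, s (e0 (k, false)) (e0 (k, true)) := by
        rw [← Finset.sum_add_sum_compl {none}, Finset.sum_singleton]
      rw [Fintype.sum_option] at e1
      have e2 : ∑ i : J, s (σ (stdPair n (i.1, false))) (σ (stdPair n (i.1, true))) ≤ η := by
        have : s (e0 (none, false)) (e0 (none, true)) = s j0 j1 := rfl
        rw [this] at e1
        have := add_left_cancel e1
        rw [← this] at h'
        exact h'
      rw [← Finset.sum_filter]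
      refine le_trans (le_of_eq ?_) e2
      exact Finset.sum_subtype _ (by simp) _)
    obtain ⟨k', hk'⟩ : ∃ k', k' ∈ T.erase k := by
      have : 0 < (T.erase k).card := by
        rw [Finset.card_erase_of_mem hkT]; omega
      exact Finset.card_pos.mp this
    rw [Finset.mem_erase] at hk'
    have hkT' := (hTm _).mp hkT
    have hkT'' := (hTm _).mp hk'.2
    have hpair : s j0 k ≤ η ∨ s j1 k' ≤ η := by
      let e0 : Bool × Bool → Fin n := fun x =>
        match x with
        | (false, false) => j0
        | (false, true) => k
        | (true, false) => j1
        | (true, true) => k'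
      have he0 : Function.Injective e0 := by
        rintro ⟨_ | _, _ | _⟩ ⟨_ | _, _ | _⟩ h <;>
          simp [e0, hne, hne.symm, hkT'.1, hkT'.2, hkT''.1, hkT''.2, hk'.1, hkT'.1.symm, hkT'.2.symm,
            hkT''.1.symm, hkT''.2.symm, Ne.symm hk'.1] at h ⊢
      have h := H Bool ⟨e0, he0⟩ {false}
      have hcomp : ({false} : Finset Bool)ᶜ = {true} := by decide
      rw [hcomp, Finset.sum_singleton, Finset.sum_singleton] at h
      exact min_le_iff.mp h
    have hk'k : s k' k ≤ 4 * η :=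
      (Finset.single_le_sum (f := fun j => s j k) (fun j _ => hs j k) hk'.2).trans hk
    rcases hpair with h | h
    · refine ⟨j1, k, ?_⟩
      have : univ.erase j1 = insert j0 T := by
        ext x; simp only [mem_erase, mem_univ, and_true, mem_insert, hTm]
        by_cases hx : x = j0
        · simp [hx, hne]
        · simp [hx]
      rw [this, Finset.sum_insert (by simp [hTm])]
      linarith
    · refine ⟨j0, k, ?_⟩
      have : univ.erase j0 = insert j1 T := by
        ext x; simp only [mem_erase, mem_univ, and_true, mem_insert, hTm]
        by_cases hx : x = j1
        · simp [hx, hne.symm]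
        · simp [hx]
      rw [this, Finset.sum_insert (by simp [hTm])]
      have := htri j1 k' k
      linarith

lemma ms_variance {ℓ n : ℕ} {κ : Fin ℓ → ℕ} (hn : 2 ≤ n) (b : Fin ℓ) (hκ : κ b ≤ n)
    (w : Fin n → ℝ) :
    ∑ u ∈ multislice ℓ n κ, (∑ j, w j * ((if u j = b then (1 : ℝ) else 0) - κ b / n)) ^ 2 ≤
      2 * (multislice ℓ n κ).card * ∑ j, w j ^ 2 := by
  set y : Fin n → (Fin n → Fin ℓ) → ℝ := fun j u => (if u j = b then (1 : ℝ) else 0) - κ b / n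
    with hy
  set G : Fin n → Fin n → ℝ := fun j k => ∑ u ∈ multislice ℓ n κ, y j u * y k u with hG
  set M := ((multislice ℓ n κ).card : ℝ) with hM
  have hn' : (2 : ℝ) ≤ n := by exact_mod_cast hn
  have hysum : ∀ u ∈ multislice ℓ n κ, ∑ k, y k u = 0 := by
    intro u hu
    simp only [multislice, mem_filter, mem_univ, true_and] at hu
    simp only [hy]
    rw [Finset.sum_sub_distrib, Finset.sum_const, Finset.card_univ, Fintype.card_fin, nsmul_eq_mul,
      Finset.sum_boole, hu b]
    field_simp
    ring
  have hy1 : ∀ j u, y j u * y j u ≤ 1 := by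
    intro j u
    have h0 : (0 : ℝ) ≤ κ b / n := by positivity
    have h1 : (κ b / n : ℝ) ≤ 1 := by
      rw [div_le_one (by linarith)]; exact_mod_cast hκ
    simp only [hy]
    split_ifs <;> nlinarith
  have hinv : ∀ (τ : Equiv.Perm (Fin n)) j k, G (τ j) (τ k) = G j k := by
    intro τ j k
    exact ms_sum_comp τ (fun u => y j u * y k u)
  let i0 : Fin n := ⟨0, by omega⟩
  let i1 : Fin n := ⟨1, by omega⟩
  have h01 : i0 ≠ i1 := by simp [i0, i1]
  set α := G i0 i0 with hα
  set β := G i0 i1 with hβ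
  have hdiag : ∀ j, G j j = α := by
    intro j
    have := hinv (Equiv.swap i0 j) i0 i0
    rwa [Equiv.swap_apply_left] at this
  have hoff : ∀ j k, j ≠ k → G j k = β := by
    intro j k hjk
    obtain ⟨τ, h1, h2⟩ := exists_perm_two h01 hjk
    have := hinv τ i0 i1
    rwa [h1, h2] at this
  have hGe : ∀ j k, G j k = β + (if j = k then α - β else 0) := by
    intro j k
    by_cases h : j = k
    · subst h; rw [hdiag]; simp
    · rw [hoff j k h]; simp [h]
  have hrow : ∑ k, G i0 k = 0 := by
    simp only [hG]
    rw [Finset.sum_comm]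
    refine Finset.sum_eq_zero fun u hu => ?_
    rw [← Finset.mul_sum, hysum u hu, mul_zero]
  have hrel : n * β + (α - β) = 0 := by
    rw [Finset.sum_congr rfl (fun k _ => hGe i0 k), Finset.sum_add_distrib, Finset.sum_const,
      Finset.sum_ite_eq] at hrow
    simpa using hrow
  have hα0 : 0 ≤ α := Finset.sum_nonneg fun u _ => mul_self_nonneg _
  have hα1 : α ≤ M := by
    refine (Finset.sum_le_sum fun u _ => hy1 i0 u).trans ?_
    simp [hM]
  have hβ0 : β ≤ 0 := by nlinarith
  have hαβ : α - β ≤ 2 * M := by nlinarith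
  have hexp : ∑ u ∈ multislice ℓ n κ, (∑ j, w j * y j u) ^ 2 = ∑ j, ∑ k, w j * w k * G j k := by
    simp only [hG, Finset.mul_sum]
    rw [Finset.sum_congr rfl (fun u _ => by rw [sq, Finset.sum_mul_sum])]
    rw [Finset.sum_comm]
    refine Finset.sum_congr rfl fun j _ => ?_
    rw [Finset.sum_comm]
    refine Finset.sum_congr rfl fun k _ => ?_
    refine Finset.sum_congr rfl fun u _ => ?_
    ring
  have hexp2 : ∑ j, ∑ k, w j * w k * G j k = β * (∑ j, w j) ^ 2 + (α - β) * ∑ j, w j ^ 2 := by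
    have : ∀ j, ∑ k, w j * w k * G j k = β * (w j * ∑ k, w k) + (α - β) * w j ^ 2 := by
      intro j
      rw [Finset.sum_congr rfl (fun k _ => by rw [hGe j k, mul_add, mul_ite, mul_zero]),
        Finset.sum_add_distrib, Finset.sum_ite_eq, Finset.mul_sum, Finset.mul_sum]
      simp only [mem_univ, if_true]
      congr 1
      · exact Finset.sum_congr rfl fun k _ => by ring
      · ring
    rw [Finset.sum_congr rfl (fun j _ => this j), Finset.sum_add_distrib, ← Finset.mul_sum,
      ← Finset.mul_sum, ← Finset.sum_mul]
    ring
  rw [hexp, hexp2]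
  have h1 : β * (∑ j, w j) ^ 2 ≤ 0 := mul_nonpos_of_nonpos_of_nonneg hβ0 (sq_nonneg _)
  have h2 : (α - β) * ∑ j, w j ^ 2 ≤ 2 * M * ∑ j, w j ^ 2 :=
    mul_le_mul_of_nonneg_right hαβ (Finset.sum_nonneg fun _ _ => sq_nonneg _)
  linarith

/-- Rounding to `{0,1}`. -/
def rnd (x : ℝ) : ℝ := if |x| ≤ |x - 1| then 0 else 1

lemma rnd_dist (x : ℝ) : |x - rnd x| = dist01 x := by
  unfold rnd dist01
  split_ifs with h
  · rw [min_eq_left h, sub_zero]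
  · rw [min_eq_right (not_le.mp h).le]

lemma dist01_le (x y : ℝ) : dist01 x ≤ dist01 y + |y - x| := by
  unfold dist01
  rw [← min_add_add_right]
  apply min_le_min
  · have := abs_sub_abs_le_abs_sub x y
    rw [abs_sub_comm] at this; linarith
  · have := abs_sub_abs_le_abs_sub (x - 1) (y - 1)
    have e : x - 1 - (y - 1) = -(y - x) := by ring
    rw [e, abs_neg] at this; linarith

lemma round_bound (f p : ℝ) : (f - rnd p) ^ 2 ≤ 8 * (f - p) ^ 2 + 2 * dist01 f ^ 2 := by
  have h1 := rnd_dist p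
  have h2 := dist01_le p f
  have h3 : |f - rnd p| ≤ 2 * |f - p| + dist01 f := by
    have := abs_sub_le f p (rnd p)
    linarith
  have h4 : (f - rnd p) ^ 2 ≤ (2 * |f - p| + dist01 f) ^ 2 := by
    rw [← sq_abs (f - rnd p)]; exact pow_le_pow_left₀ (abs_nonneg _) h3 2
  rw [← sq_abs (f - p)]
  nlinarith [sq_nonneg (2 * |f - p| - dist01 f)]

lemma main_sum {ℓ n : ℕ} {κ : Fin ℓ → ℕ} {ρ : ℝ} (z : Fin ℓ) (hρ : 0 < ρ) (hn : 6 ≤ ρ * n)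
    (hn4 : 4 ≤ n) (hκ : ∀ i, ρ * n ≤ (κ i : ℝ)) (hsum : ∑ i, κ i = n) (c : ℝ)
    (coef : Fin n → Fin ℓ → ℝ) (hM : 0 < (multislice ℓ n κ).card) :
    ∃ (j : Fin n) (φ : Fin ℓ → ℝ), ∑ u ∈ multislice ℓ n κ,
      (c + ∑ x, coef x (u x) - rnd (φ (u j))) ^ 2 ≤
      (8 * ℓ * 2 * 14 * 384 / (ρ / 2) ^ 4 + 2) * ∑ u ∈ multislice ℓ n κ,
        dist01 (c + ∑ x, coef x (u x)) ^ 2 := by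
  have hM' : (0 : ℝ) < ((multislice ℓ n κ).card : ℝ) := by exact_mod_cast hM
  set M := ((multislice ℓ n κ).card : ℝ) with hMdef
  set F : (Fin n → Fin ℓ) → ℝ := fun u => c + ∑ x, coef x (u x) with hF
  set D := ∑ u ∈ multislice ℓ n κ, dist01 (F u) ^ 2 with hD
  set v : Fin n → Fin ℓ → ℝ := fun j b => coef j b - coef j z with hv
  have hFv : ∀ u, F u = (c + ∑ x, coef x z) + ∑ x, v x (u x) := by
    intro u; simp only [hF, hv, Finset.sum_sub_distrib]; ring
  have hp : 0 < (ρ / 2) ^ 4 := by positivity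
  have hn0 : 0 < n := by omega
  obtain ⟨jx, k, hjk⟩ := determ hn4 (sdist v) (fun j => by simp [sdist])
    (fun j k => Finset.sum_nonneg fun _ _ => sq_nonneg _)
    (fun i j k => by
      simp only [sdist, Finset.mul_sum]
      rw [← Finset.sum_add_distrib]
      refine Finset.sum_le_sum fun b _ => ?_
      nlinarith [sq_nonneg (v i b - v j b - (v j b - v k b))])
    (384 * D / (M * (ρ / 2) ^ 4))
    (by
      intro ι _ _ e P
      rw [le_div_iff₀ (mul_pos hM' hp), mul_comm]
      have := star2 hρ hn hn0 hκ (c + ∑ x, coef x z) v z (fun j => by simp [hv]) e P Pᶜ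
        disjoint_compl_right
      simp only [← hFv] at this
      exact this)
  -- normalised coefficients
  set w : Fin n → Fin ℓ → ℝ := fun j b => if j = jx then 0 else v j b - v k b with hw
  have hwsum : ∑ j, ∑ b, w j b ^ 2 ≤ 14 * (384 * D / (M * (ρ / 2) ^ 4)) := by
    refine le_trans (le_of_eq ?_) hjk
    rw [← Finset.add_sum_erase _ _ (mem_univ jx)]
    simp only [hw, if_true]
    simp only [ne_eq, OfNat.ofNat_ne_zero, not_false_eq_true, zero_pow, Finset.sum_const_zero,
      zero_add]
    refine Finset.sum_congr rfl fun j hj => ?_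
    simp only [mem_erase] at hj
    simp [hj.1, sdist]
  let C0 : ℝ := c + ∑ x, coef x z + ∑ b, κ b * v k b + ∑ b, (κ b / n : ℝ) * ∑ j, w j b
  have hdec : ∀ u ∈ multislice ℓ n κ, F u - (C0 + (v jx (u jx) - v k (u jx))) =
      ∑ b, ∑ j, w j b * ((if u j = b then (1 : ℝ) else 0) - κ b / n) := by
    intro u hu
    simp only [multislice, mem_filter, mem_univ, true_and] at hu
    have e1 : ∑ x, v k (u x) = ∑ b, κ b * v k b := by
      have : ∀ x, v k (u x) = ∑ b, if u x = b then v k b else 0 := by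
        intro x; simp
      simp only [this]
      rw [Finset.sum_comm]
      refine Finset.sum_congr rfl fun b _ => ?_
      rw [← Finset.sum_filter, Finset.sum_const, hu b, nsmul_eq_mul]
    have e2 : ∑ x, (v x (u x) - v k (u x)) = (v jx (u jx) - v k (u jx)) + ∑ x, w x (u x) := by
      rw [← Finset.add_sum_erase _ _ (mem_univ jx),
        ← Finset.add_sum_erase _ (fun x => w x (u x)) (mem_univ jx)]
      have : ∑ x ∈ univ.erase jx, (v x (u x) - v k (u x)) = ∑ x ∈ univ.erase jx, w x (u x) := by
        refine Finset.sum_congr rfl fun j hj => ?_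
        simp only [mem_erase] at hj
        simp [hw, hj.1]
      rw [this]
      simp [hw]
    have e3 : ∑ b, ∑ j, w j b * ((if u j = b then (1 : ℝ) else 0) - κ b / n) =
        ∑ x, w x (u x) - ∑ b, (κ b / n : ℝ) * ∑ j, w j b := by
      simp only [mul_sub, Finset.sum_sub_distrib]
      congr 1
      · rw [Finset.sum_comm]
        refine Finset.sum_congr rfl fun j _ => ?_
        simp
      · refine Finset.sum_congr rfl fun b _ => ?_
        rw [← Finset.sum_mul, mul_comm]
    rw [e3, hFv]
    rw [Finset.sum_sub_distrib] at e2
    simp only [C0]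
    linarith
  have hκn : ∀ b, κ b ≤ n := by
    intro b; rw [← hsum]
    exact Finset.single_le_sum (f := κ) (fun _ _ => Nat.zero_le _) (mem_univ b)
  have hvar : ∑ u ∈ multislice ℓ n κ, (F u - (C0 + (v jx (u jx) - v k (u jx)))) ^ 2 ≤
      ℓ * (2 * M * ∑ j, ∑ b, w j b ^ 2) := by
    have h1 : ∀ u ∈ multislice ℓ n κ, (F u - (C0 + (v jx (u jx) - v k (u jx)))) ^ 2 ≤
        ℓ * ∑ b, (∑ j, w j b * ((if u j = b then (1 : ℝ) else 0) - κ b / n)) ^ 2 := by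
      intro u hu
      rw [hdec u hu]
      have := sq_sum_le_card_mul_sum_sq (s := (univ : Finset (Fin ℓ)))
        (f := fun b => ∑ j, w j b * ((if u j = b then (1 : ℝ) else 0) - κ b / n))
      simpa using this
    refine (Finset.sum_le_sum h1).trans ?_
    rw [← Finset.mul_sum, Finset.sum_comm]
    refine mul_le_mul_of_nonneg_left ?_ (by positivity)
    rw [Finset.sum_comm (f := fun j b => w j b ^ 2), Finset.mul_sum]
    exact Finset.sum_le_sum fun b _ => ms_variance (by omega) b (hκn b) (fun j => w j b)
  refine ⟨jx, fun b => C0 + (v jx b - v k b), ?_⟩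
  refine (Finset.sum_le_sum fun u _ => round_bound (F u) (C0 + (v jx (u jx) - v k (u jx)))).trans ?_
  rw [Finset.sum_add_distrib, ← Finset.mul_sum, ← Finset.mul_sum]
  have h2 : (ℓ : ℝ) * (2 * M * ∑ j, ∑ b, w j b ^ 2) ≤
      ℓ * (2 * M * (14 * (384 * D / (M * (ρ / 2) ^ 4)))) :=
    mul_le_mul_of_nonneg_left (mul_le_mul_of_nonneg_left hwsum
      (mul_nonneg zero_le_two hM'.le)) (Nat.cast_nonneg ℓ)
  have h3 : (ℓ : ℝ) * (2 * M * (14 * (384 * D / (M * (ρ / 2) ^ 4)))) =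
      ℓ * 2 * 14 * 384 / (ρ / 2) ^ 4 * D := by
    field_simp
  have h4 := hvar.trans (h2.trans h3.le)
  have h5 : (8 * ℓ * 2 * 14 * 384 / (ρ / 2) ^ 4 + 2) * D =
      8 * (ℓ * 2 * 14 * 384 / (ρ / 2) ^ 4 * D) + 2 * D := by ring
  rw [h5]
  linarith

/-- **FKN theorem for the multislice (inductive form).**  If `f` is a degree-one function on a
`ρ`-balanced multislice with `E[dist(f,{0,1})²] = ε`, then `f` is `O(ε)`-close to a Boolean
dictator. -/
theorem fkn_multislice (ℓ : ℕ) (hℓ : 2 ≤ ℓ) (ρ : ℝ) (hρ : 0 < ρ) :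
    ∃ (N : ℕ) (C : ℝ), ∀ n : ℕ, N ≤ n → ∀ κ : Fin ℓ → ℕ,
      (∀ i, 0 < κ i) → (∀ i, ρ * n ≤ (κ i : ℝ)) → (∑ i, κ i = n) →
      ∀ f : (Fin n → Fin ℓ) → ℝ, degreeOne ℓ n κ f →
      ∀ ε : ℝ, msExp ℓ n κ (fun u => dist01 (f u) ^ 2) = ε →
      ∃ g : (Fin n → Fin ℓ) → ℝ, booleanOn ℓ n κ g ∧ dictator ℓ n κ g ∧
        msExp ℓ n κ (fun u => (f u - g u) ^ 2) ≤ C * ε := by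
  obtain ⟨N, hN⟩ := exists_nat_ge (6 / ρ)
  refine ⟨max N 4, 8 * ℓ * 2 * 14 * 384 / (ρ / 2) ^ 4 + 2, ?_⟩
  intro n hn κ _ hκ hsum f hf ε hε
  have hn4 : 4 ≤ n := (le_max_right _ _).trans hn
  have hnN : (N : ℝ) ≤ n := by exact_mod_cast (le_max_left _ _).trans hn
  have hn6 : 6 ≤ ρ * n := by
    have h := hN.trans hnN
    rw [div_le_iff₀ hρ] at h; linarith
  rcases Nat.eq_zero_or_pos (multislice ℓ n κ).card with h0 | hM
  · refine ⟨fun _ => 0, fun u _ => Or.inl rfl, ⟨⟨0, by omega⟩, fun _ _ _ _ _ => rfl⟩, ?_⟩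
    rw [← hε]
    simp [msExp, h0]
  obtain ⟨c, coef, hc⟩ := hf
  have hc' : ∀ u ∈ multislice ℓ n κ, f u = c + ∑ x, coef x (u x) := by
    intro u hu
    rw [hc u hu]
    simp [xvar]
  obtain ⟨j, φ, hj⟩ := main_sum ⟨0, by omega⟩ hρ hn6 hn4 hκ hsum c coef hM
  refine ⟨fun u => rnd (φ (u j)), ?_, ⟨j, ?_⟩, ?_⟩
  · intro u _
    simp only [rnd]
    split_ifs
    · exact Or.inl rfl
    · exact Or.inr rfl
  · intro u _ v _ huv
    simp only [huv]
  · rw [← hε]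
    unfold msExp
    rw [← mul_div_assoc]
    refine div_le_div_of_nonneg_right ?_ (by positivity)
    have e1 : ∑ u ∈ multislice ℓ n κ, (f u - rnd (φ (u j))) ^ 2 =
        ∑ u ∈ multislice ℓ n κ, (c + ∑ x, coef x (u x) - rnd (φ (u j))) ^ 2 :=
      Finset.sum_congr rfl fun u hu => by rw [hc' u hu]
    have e2 : ∑ u ∈ multislice ℓ n κ, dist01 (f u) ^ 2 =
        ∑ u ∈ multislice ℓ n κ, dist01 (c + ∑ x, coef x (u x)) ^ 2 :=
      Finset.sum_congr rfl fun u hu => by rw [hc' u hu]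
    rw [e1, e2]
    exact hj
end
end
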